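/- Let l = l(k) be a sequence of positive integers with l → ∞ and l = o(k^{1/2}). Then, as k → ∞, C(k,l) ~ k^{k-2}·k^{3l/2}·(e/(12l))^{l/2}·(3/√π)·l^{1/2}. -/

import Mathlib

/-!
Exploring a graph vertex by vertex turns the generating function `∑ l, C(k, l) w ^ l` of connected
graphs into a polynomial in `1 + w`: it equals `(((1 + w) ^ k - 1) / w) ^ (k - 1)` times the
probability that, among `k - 1` balls thrown into `k` bins with weights `(1 + w) ^ j`, `j < k`, at
most `i` fall into the bins `0, …, i`, for every `i`. When `k ^ (-3/2) ≪ w ≪ k ^ (-5/4)`, the bins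
at the heavy end and those at the light end impose nearly independent constraints. Each says that a
random walk with small drift survives; with `δ = w k / 2` this has probability about `2 δ` at the
heavy end and `δ` at the light end, so that the above probability is asymptotic to `2 δ ^ 2`.

At the saddle point `w = √(12 l / k ^ 3)` this determines, up to a factor tending to `1`, the total
mass of the Boltzmann distribution `C(k, i) w ^ i` of the excess `i`. Ratios of these masses at
nearby `w` show that the moment generating function of `(i - l) / √l` tends to `exp (u ^ 2)`. Hence
its characteristic function tends to `exp (-x ^ 2)`; it is dominated by a Gaussian because the
exploration polynomial has nonnegative coefficients. Fourier inversion then gives the probability of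
the value `i = l`, and with it `C(k, l)`.
-/

open Filter Topology Real

/-- `connGraphCount k l` is the number of connected labeled graphs on `k` vertices
with `k - 1 + l` edges (i.e. complexity `l`). -/
noncomputable def connGraphCount (k l : ℕ) : ℕ :=
  Set.ncard {G : SimpleGraph (Fin k) | G.Connected ∧ G.edgeSet.ncard = k - 1 + l}

namespace ConnGraphAsymptotics

/-! ### Exploring a random graph vertex by vertex -/

section Exploration

variable {R : Type*} [CommSemiring R] {V W : Type*}

/-- The generating polynomial of a graph exploration with `n` unexplored vertices, `u` of which are
not yet discovered. Exploring one of the `n + 1 - u` discovered vertices reveals the set of its `c`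
undiscovered neighbours, while its `n - u` potential edges to the other discovered vertices are
unconstrained and contribute a factor `q = 1 + w` each, where `w` marks the edges. -/
def explorationPoly (q : R) : ℕ → ℕ → R
  | 0, u => if u = 0 then 1 else 0
  | n + 1, u => if u ≤ n then
      ∑ c ∈ Finset.range (u + 1), (u.choose c : R) * q ^ (n - u) * explorationPoly q n (u - c)
    else 0

/-- Every vertex of `G` is joined by a path to some vertex of `A`. -/
def ReachableFrom (G : SimpleGraph V) (A : Finset V) : Prop :=
  ∀ v, ∃ a ∈ A, G.Reachable a v

/-- The generating function, by number of edges, of the graphs on `V` all of whose vertices are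
reachable from `A`. -/
noncomputable def reachableSum (w : R) (A : Finset V) : R :=
  ∑ᶠ (G : SimpleGraph V) (_ : ReachableFrom G A), w ^ G.edgeSet.ncard

/-- The graph obtained from `G` by adding the vertex `none`, with set of neighbours `N`. -/
def addVertex (G : SimpleGraph V) (N : Finset V) : SimpleGraph (Option V) where
  Adj
    | none, none => False
    | none, some y => y ∈ N
    | some x, none => x ∈ N
    | some x, some y => G.Adj x y
  symm := ⟨by rintro (_ | x) (_ | y) h <;> simp_all [G.adj_comm]⟩
  loopless := ⟨by rintro (_ | x) h <;> simp_all⟩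

open Classical in
/-- A graph on `Option V` amounts to its restriction to `V` and the neighbours of `none`. -/
noncomputable def addVertexEquiv (V : Type*) [Fintype V] :
    SimpleGraph V × Finset V ≃ SimpleGraph (Option V) where
  toFun p := addVertex p.1 p.2
  invFun G := (G.comap some, Finset.univ.filter fun x => G.Adj none (some x))
  left_inv := by
    rintro ⟨G, N⟩
    ext x y
    · rfl
    · exact Finset.mem_filter.trans (and_iff_right (Finset.mem_univ _))
  right_inv G := by
    ext (_ | x) (_ | y) <;> simp [addVertex, G.adj_comm]

lemma edgeSet_addVertex (G : SimpleGraph V) (N : Finset V) :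
    (addVertex G N).edgeSet =
      Sym2.map some '' G.edgeSet ∪ (fun x => s(none, some x)) '' (N : Set V) := by
  ext e
  induction e using Sym2.ind with | _ x y
  constructor
  · intro h
    rcases x with _ | x <;> rcases y with _ | y
    · exact h.elim
    · exact .inr ⟨y, h, rfl⟩
    · exact .inr ⟨x, h, Sym2.eq_swap⟩
    · exact .inl ⟨s(x, y), h, rfl⟩
  · rintro (⟨e, he, hxy⟩ | ⟨z, hz, hxy⟩) <;> rw [← hxy]
    · induction e using Sym2.ind with | _ a b
      exact he
    · exact hz

lemma ncard_edgeSet_addVertex [Finite V] (G : SimpleGraph V) (N : Finset V) :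
    (addVertex G N).edgeSet.ncard = G.edgeSet.ncard + N.card := by
  rw [edgeSet_addVertex, Set.ncard_union_eq,
    Set.ncard_image_of_injective _ (Sym2.map.injective (Option.some_injective V)),
    Set.ncard_image_of_injective, Set.ncard_coe_finset]
  · intro x y hxy
    simpa using hxy
  · rw [Set.disjoint_left]
    rintro _ ⟨e, -, rfl⟩ ⟨z, -, hz⟩
    have : none ∈ Sym2.map some e := by simp [← hz]
    simp at this

lemma ReachableFrom.of_addVertex [DecidableEq V] {G : SimpleGraph V} {A N : Finset V}
    (h : ReachableFrom (addVertex G N) (Finset.insertNone A)) : ReachableFrom G (A ∪ N) := by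
  intro v
  obtain ⟨a, ha, hav⟩ := h (some v)
  have key : ∀ y, (addVertex G N).Reachable a y →
      ∀ v ∈ y, ∃ b ∈ A ∪ N, G.Reachable b v := by
    intro y hy
    rw [SimpleGraph.reachable_iff_reflTransGen] at hy
    induction hy with
    | refl =>
      rintro v rfl
      exact ⟨v, Finset.mem_union_left _ (by simpa using ha), .refl _⟩
    | @tail x _ _ hxv ih =>
      rintro v rfl
      cases x with
      | none => exact ⟨v, Finset.mem_union_right _ hxv, .refl _⟩
      | some x =>
        obtain ⟨b, hb, hbx⟩ := ih x rfl
        exact ⟨b, hb, hbx.trans (SimpleGraph.Adj.reachable hxv)⟩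
  exact key _ hav v rfl

lemma ReachableFrom.addVertex [DecidableEq V] {G : SimpleGraph V} {A N : Finset V}
    (h : ReachableFrom G (A ∪ N)) : ReachableFrom (addVertex G N) (Finset.insertNone A) := by
  have hmap {x y : V} (hxy : G.Reachable x y) :
      (ConnGraphAsymptotics.addVertex G N).Reachable (some x) (some y) :=
    hxy.map ⟨some, fun hab => hab⟩
  rintro (_ | v)
  · exact ⟨none, by simp, .refl _⟩
  · obtain ⟨a, ha, hav⟩ := h v
    rcases Finset.mem_union.1 ha with haA | haN
    · exact ⟨some a, by simpa using haA, hmap hav⟩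
    · exact ⟨none, by simp, .trans (SimpleGraph.Adj.reachable (v := some a) haN) (hmap hav)⟩

lemma reachableSum_map_equiv (w : R) (e : V ≃ W) (A : Finset V) :
    reachableSum w (A.map e.toEmbedding) = reachableSum w A := by
  unfold reachableSum
  rw [← finsum_comp_equiv e.simpleGraph]
  refine finsum_congr fun G => ?_
  let φ : G ≃g e.simpleGraph G := ⟨e, by simp [Equiv.simpleGraph]⟩
  have hiff : ReachableFrom (e.simpleGraph G) (A.map e.toEmbedding) ↔ ReachableFrom G A := by
    simp only [ReachableFrom, Finset.mem_map, Equiv.coe_toEmbedding, exists_exists_and_eq_and]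
    rw [← e.forall_congr_right]
    exact forall_congr' fun v => exists_congr fun a => and_congr_right fun _ => φ.reachable_iff
  rw [hiff, ← Set.ncard_congr' φ.mapEdgeSet]

lemma reachableSum_insertNone [Fintype V] [DecidableEq V] (w : R) (A : Finset V) :
    reachableSum w (Finset.insertNone A) =
      ∑ N : Finset V, w ^ N.card * reachableSum w (A ∪ N) := by
  classical
  have hiff (G : SimpleGraph V) (N : Finset V) :
      ReachableFrom (addVertex G N) (Finset.insertNone A) ↔ ReachableFrom G (A ∪ N) :=
    ⟨.of_addVertex, .addVertex⟩
  simp only [reachableSum, ← finsum_comp_equiv (addVertexEquiv V), finsum_eq_if,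
    finsum_eq_sum_of_fintype, Fintype.sum_prod_type_right, Finset.mul_sum]
  refine Finset.sum_congr rfl fun N _ => Finset.sum_congr rfl fun G _ => ?_
  simp only [addVertexEquiv, Equiv.coe_fn_mk, hiff, ncard_edgeSet_addVertex, pow_add, mul_ite,
    mul_zero, mul_comm]

lemma sum_card_inter_mul_card_sdiff [Fintype V] [DecidableEq V] (A : Finset V) (f g : ℕ → R) :
    ∑ N : Finset V, f (N ∩ A).card * g (N \ A).card =
      (∑ i ∈ Finset.range (A.card + 1), A.card.choose i • f i) *
        ∑ i ∈ Finset.range (Aᶜ.card + 1), Aᶜ.card.choose i • g i := by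
  rw [← Finset.sum_powerset_apply_card, ← Finset.sum_powerset_apply_card, Finset.sum_mul_sum,
    ← Finset.sum_product']
  refine Finset.sum_bij' (fun N _ => (N ∩ A, N \ A)) (fun p _ => p.1 ∪ p.2) ?_ ?_ ?_ ?_ ?_
  · intro N _
    simp [Finset.subset_iff]
  · simp
  · intro N _
    exact (Finset.union_comm _ _).trans (Finset.sdiff_union_inter N A)
  · rintro ⟨B, C⟩ h
    simp only [Finset.mem_product, Finset.mem_powerset, Finset.subset_compl_iff_disjoint_right] at h
    have hB := Finset.inter_eq_left.2 h.1
    have hBA := Finset.sdiff_eq_empty_iff_subset.2 h.1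
    simp only [Finset.union_inter_distrib_right, Finset.union_sdiff_distrib, hB, hBA,
      Finset.disjoint_iff_inter_eq_empty.1 h.2, Finset.sdiff_eq_self_of_disjoint h.2,
      Finset.union_empty, Finset.empty_union]
  · simp

lemma exists_equiv_map_eq_insertNone {V : Type*} {A : Finset V} (hA : A.Nonempty) :
    ∃ (v : V) (e : V ≃ Option {x // x ≠ v}) (B : Finset {x // x ≠ v}),
      A.map e.toEmbedding = Finset.insertNone B := by
  classical
  obtain ⟨v, hv⟩ := hA
  let e := (Equiv.optionSubtypeNe v).symm
  refine ⟨v, e, Finset.eraseNone (A.map e.toEmbedding), ?_⟩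
  rw [Finset.insertNone_eraseNone, Finset.insert_eq_of_mem]
  exact Finset.mem_map.2 ⟨v, hv, by simp [e]⟩

lemma explorationPoly_step [Fintype V] [DecidableEq V] (w : R) (A : Finset V) :
    ∑ N : Finset V, w ^ N.card * (w ^ (A ∪ N)ᶜ.card *
        explorationPoly (1 + w) (Fintype.card V) (A ∪ N)ᶜ.card) =
      w ^ Aᶜ.card * explorationPoly (1 + w) (Fintype.card V + 1) Aᶜ.card := by
  set n := Fintype.card V
  have hterm (N : Finset V) : w ^ N.card * (w ^ (A ∪ N)ᶜ.card *
      explorationPoly (1 + w) n (A ∪ N)ᶜ.card) = w ^ (N ∩ A).card *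
        (w ^ Aᶜ.card * explorationPoly (1 + w) n (Aᶜ.card - (N \ A).card)) := by
    have hsub : N \ A ⊆ Aᶜ := by simp [Finset.subset_iff]
    have hcompl : (A ∪ N)ᶜ.card = Aᶜ.card - (N \ A).card := by
      rw [← Finset.card_sdiff_of_subset hsub]
      congr 1
      ext x
      simp only [Finset.mem_compl, Finset.mem_union, Finset.mem_sdiff]
      tauto
    have hN := Finset.card_inter_add_card_sdiff N A
    have hle := Finset.card_le_card hsub
    rw [hcompl, ← mul_assoc, ← mul_assoc, ← pow_add, ← pow_add]
    congr 2
    omega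
  have hbinom : ∑ i ∈ Finset.range (A.card + 1), A.card.choose i • w ^ i =
      (1 + w) ^ (n - Aᶜ.card) := by
    have : n - Aᶜ.card = A.card := by have := A.card_add_card_compl; omega
    rw [this, add_comm 1 w, add_pow]
    exact Finset.sum_congr rfl fun i _ => by simp [mul_comm]
  simp_rw [hterm]
  rw [sum_card_inter_mul_card_sdiff A (w ^ ·)
      fun i => w ^ Aᶜ.card * explorationPoly (1 + w) n (Aᶜ.card - i),
    hbinom, explorationPoly, if_pos (Finset.card_le_univ _), Finset.mul_sum, Finset.mul_sum]
  exact Finset.sum_congr rfl fun i _ => by rw [nsmul_eq_mul]; ring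

theorem reachableSum_eq_explorationPoly [Fintype V] [DecidableEq V] (w : R) (A : Finset V) :
    reachableSum w A =
      w ^ Aᶜ.card * explorationPoly (1 + w) (Fintype.card V) Aᶜ.card := by
  obtain ⟨n, hn⟩ : ∃ n, Fintype.card V = n := ⟨_, rfl⟩
  induction n generalizing V with
  | zero =>
    have : IsEmpty V := Fintype.card_eq_zero_iff.1 hn
    have hreach (G : SimpleGraph V) : ReachableFrom G A := fun v => isEmptyElim v
    have hedge (G : SimpleGraph V) : G.edgeSet = ∅ := Set.eq_empty_of_isEmpty _
    classical
    simp [reachableSum, finsum_eq_if, finsum_eq_sum_of_fintype, hreach, hedge,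
      Finset.eq_empty_of_isEmpty Aᶜ, explorationPoly]
  | succ n ih =>
    rcases A.eq_empty_or_nonempty with rfl | hA
    · have : Nonempty V := Fintype.card_pos_iff.1 (by omega)
      simp [reachableSum, explorationPoly, ReachableFrom, hn]
    · obtain ⟨v, e, B, hB⟩ := exists_equiv_map_eq_insertNone hA
      have hcard : Fintype.card V = Fintype.card {x // x ≠ v} + 1 := by
        rw [Fintype.card_congr e, Fintype.card_option]
      have hcompl : Aᶜ.card = Bᶜ.card := by
        have := congrArg Finset.card hB
        rw [Finset.card_map, Finset.card_insertNone] at this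
        rw [Finset.card_compl, Finset.card_compl, hcard]
        omega
      rw [← reachableSum_map_equiv w e, hB, reachableSum_insertNone, hcompl, hcard,
        ← explorationPoly_step]
      exact Finset.sum_congr rfl fun N _ => by rw [ih _ (by omega)]

end Exploration

lemma connected_iff_reachableFrom {k : ℕ} (G : SimpleGraph (Fin (k + 1))) :
    G.Connected ↔ ReachableFrom G {0} := by
  simp only [SimpleGraph.connected_iff_exists_forall_reachable, ReachableFrom,
    Finset.mem_singleton, exists_eq_left]
  exact ⟨fun ⟨v, hv⟩ x => (hv 0).symm.trans (hv x), fun h => ⟨0, h⟩⟩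

lemma connGraphCount_eq_sum {R : Type*} [CommSemiring R] (k l : ℕ) [DecidablePred
    fun G : SimpleGraph (Fin k) => G.Connected ∧ G.edgeSet.ncard = k - 1 + l] :
    (connGraphCount k l : R) = ∑ G : SimpleGraph (Fin k),
      if G.Connected ∧ G.edgeSet.ncard = k - 1 + l then 1 else 0 := by
  rw [Finset.sum_boole, connGraphCount, ← Set.ncard_coe_finset]
  simp

theorem sum_connGraphCount_mul_pow {K : Type*} [Field K] {w : K} (hw : w ≠ 0) {k M : ℕ} (hk : 1 ≤ k)
    (hM : k.choose 2 < M) :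
    ∑ l ∈ Finset.range M, (connGraphCount k l : K) * w ^ l = explorationPoly (1 + w) k (k - 1) := by
  classical
  obtain ⟨n, rfl⟩ := Nat.exists_eq_add_of_le' hk
  have hlower {G : SimpleGraph (Fin (n + 1))} (hG : G.Connected) : n ≤ G.edgeSet.ncard := by
    have := hG.card_vert_le_card_edgeSet_add_one
    rw [Nat.card_eq_fintype_card, Fintype.card_fin, Nat.card_coe_set_eq] at this
    omega
  have hupper (G : SimpleGraph (Fin (n + 1))) : G.edgeSet.ncard < M := by
    have := G.card_edgeFinset_le_card_choose_two
    rw [Fintype.card_fin, ← Set.ncard_coe_finset, SimpleGraph.coe_edgeFinset] at this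
    omega
  have hterm (G : SimpleGraph (Fin (n + 1))) :
      ∑ l ∈ Finset.range M, (if G.Connected ∧ G.edgeSet.ncard = n + l then w ^ (n + l) else 0) =
        if G.Connected then w ^ G.edgeSet.ncard else 0 := by
    by_cases hG : G.Connected
    · have h1 := hlower hG
      have h2 := hupper G
      rw [Finset.sum_eq_single_of_mem (G.edgeSet.ncard - n) (Finset.mem_range.2 (by omega)),
        Nat.add_sub_cancel' h1, if_pos ⟨hG, rfl⟩, if_pos hG]
      exact fun l _ hl => if_neg fun h => hl (by omega)
    · simp [hG]
  apply mul_left_cancel₀ (pow_ne_zero n hw)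
  calc w ^ n * ∑ l ∈ Finset.range M, (connGraphCount (n + 1) l : K) * w ^ l
      = ∑ G : SimpleGraph (Fin (n + 1)), if G.Connected then w ^ G.edgeSet.ncard else 0 := by
        simp only [connGraphCount_eq_sum, ← hterm, Finset.mul_sum, Finset.sum_mul]
        rw [Finset.sum_comm]
        simp [pow_add]
    _ = reachableSum w {(0 : Fin (n + 1))} := by
        simp only [reachableSum, finsum_eq_sum_of_fintype, finsum_eq_if,
          connected_iff_reachableFrom]
    _ = w ^ n * explorationPoly (1 + w) (n + 1) (n + 1 - 1) := by
        simp [reachableSum_eq_explorationPoly, Finset.card_compl]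

/-! ### Balls in weighted bins staying below or above the diagonal -/

section Bins

open PowerSeries

/-- The exponential series `exp (a X)`. -/
noncomputable def expSeries (a : ℝ) : ℝ⟦X⟧ := rescale a (exp ℝ)

lemma coeff_expSeries (a : ℝ) (n : ℕ) : coeff n (expSeries a) = a ^ n / n.factorial := by
  simp [expSeries, coeff_exp, div_eq_mul_inv]

lemma expSeries_zero : expSeries 0 = 1 := by
  simp [expSeries]

lemma expSeries_mul_expSeries (a b : ℝ) : expSeries a * expSeries b = expSeries (a + b) :=
  exp_mul_exp_eq_exp_add a b

lemma coeff_expSeries_mul_X {a : ℝ} (ha : a ≠ 0) (n : ℕ) :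
    coeff n (expSeries a * X) = n / a * (a ^ n / n.factorial) := by
  cases n with
  | zero => simp
  | succ n =>
    rw [coeff_succ_mul_X, coeff_expSeries, Nat.factorial_succ, pow_succ]
    push_cast
    field_simp

lemma derivative_expSeries (a : ℝ) :
    derivative ℝ (expSeries a) = C a * expSeries a := by
  ext n
  rw [coeff_derivative, coeff_C_mul, coeff_expSeries, coeff_expSeries, Nat.factorial_succ, pow_succ]
  push_cast
  field_simp

lemma coeff_expSeries_mul_le {a : ℝ} (ha : 0 ≤ a) {F G : ℝ⟦X⟧} {n : ℕ}
    (h : ∀ m ≤ n, coeff m F ≤ coeff m G) :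
    coeff n (expSeries a * F) ≤ coeff n (expSeries a * G) := by
  rw [coeff_mul, coeff_mul]
  refine Finset.sum_le_sum fun p hp => mul_le_mul_of_nonneg_left (h _ ?_) ?_
  · rw [Finset.HasAntidiagonal.mem_antidiagonal] at hp
    omega
  · rw [coeff_expSeries]
    positivity

lemma coeff_expSeries_mul_nonneg {a : ℝ} (ha : 0 ≤ a) {F : ℝ⟦X⟧} (h : ∀ m, 0 ≤ coeff m F) (n : ℕ) :
    0 ≤ coeff n (expSeries a * F) := by
  simpa using coeff_expSeries_mul_le (F := 0) ha (n := n) fun m _ => by simpa using h m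

/-- The total weight of the first `j` bins when the `i`-th bin has weight `u i`. -/
noncomputable def totalWeight (u : ℕ → ℝ) (j : ℕ) : ℝ := ∑ i ∈ Finset.range j, u i

/-- The exponential generating function, by number of balls, of the weighted ways to throw labeled
balls into `j` bins such that, for every `i < j`, at most `i` balls land in the bins `0, …, i`. -/
noncomputable def belowSeries (u : ℕ → ℝ) : ℕ → ℝ⟦X⟧
  | 0 => 1
  | j + 1 => mk fun x => if x ≤ j then coeff x (expSeries (u j) * belowSeries u j) else 0

/-- The exponential generating function, by number of balls, of the weighted ways to throw labeled
balls into `j` bins such that, for every `i < j`, more than `i` balls land in the bins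
`0, …, i`. -/
noncomputable def aboveSeries (u : ℕ → ℝ) : ℕ → ℝ⟦X⟧
  | 0 => 1
  | j + 1 => mk fun x => if j < x then coeff x (expSeries (u j) * aboveSeries u j) else 0

/-- The probability that `x` balls thrown independently into `j` bins, with probabilities
proportional to `u`, satisfy the constraint of `belowSeries`. -/
noncomputable def belowProb (u : ℕ → ℝ) (j x : ℕ) : ℝ :=
  coeff x (belowSeries u j) * x.factorial / totalWeight u j ^ x

/-- The probability that `x` balls thrown independently into `j` bins, with probabilities
proportional to `u`, satisfy the constraint of `aboveSeries`. -/
noncomputable def aboveProb (u : ℕ → ℝ) (j x : ℕ) : ℝ :=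
  coeff x (aboveSeries u j) * x.factorial / totalWeight u j ^ x

variable {u : ℕ → ℝ}

@[simp] lemma totalWeight_zero (u : ℕ → ℝ) : totalWeight u 0 = 0 := Finset.sum_range_zero _

lemma totalWeight_succ (u : ℕ → ℝ) (j : ℕ) : totalWeight u (j + 1) = totalWeight u j + u j :=
  Finset.sum_range_succ _ _

lemma totalWeight_nonneg (hu : ∀ j, 0 ≤ u j) (j : ℕ) : 0 ≤ totalWeight u j :=
  Finset.sum_nonneg fun i _ => hu i

lemma totalWeight_pos (hu : ∀ j, 0 < u j) {j : ℕ} (hj : 0 < j) : 0 < totalWeight u j :=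
  Finset.sum_pos (fun i _ => hu i) ⟨0, by simpa using hj⟩

lemma le_totalWeight (hu : ∀ j, 1 ≤ u j) (j : ℕ) : (j : ℝ) ≤ totalWeight u j := by
  simpa [totalWeight] using Finset.card_nsmul_le_sum (Finset.range j) u 1 fun i _ => hu i

lemma totalWeight_le_mul (hm : Monotone u) (j : ℕ) : totalWeight u j ≤ j * u j := by
  simpa [totalWeight] using Finset.sum_le_card_nsmul (Finset.range j) u (u j) fun i hi =>
    hm (Finset.mem_range.1 hi).le

lemma coeff_belowSeries_succ (u : ℕ → ℝ) (j x : ℕ) : coeff x (belowSeries u (j + 1)) =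
    if x ≤ j then coeff x (expSeries (u j) * belowSeries u j) else 0 := by
  rw [belowSeries, coeff_mk]

lemma coeff_aboveSeries_succ (u : ℕ → ℝ) (j x : ℕ) : coeff x (aboveSeries u (j + 1)) =
    if j < x then coeff x (expSeries (u j) * aboveSeries u j) else 0 := by
  rw [aboveSeries, coeff_mk]

lemma coeff_belowSeries_nonneg (hu : ∀ j, 0 ≤ u j) (j x : ℕ) : 0 ≤ coeff x (belowSeries u j) := by
  induction j generalizing x with
  | zero => rw [belowSeries, coeff_one]; split_ifs <;> norm_num
  | succ j ih =>
    rw [coeff_belowSeries_succ]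
    split_ifs
    exacts [coeff_expSeries_mul_nonneg (hu j) ih x, le_rfl]

lemma coeff_aboveSeries_nonneg (hu : ∀ j, 0 ≤ u j) (j x : ℕ) : 0 ≤ coeff x (aboveSeries u j) := by
  induction j generalizing x with
  | zero => rw [aboveSeries, coeff_one]; split_ifs <;> norm_num
  | succ j ih =>
    rw [coeff_aboveSeries_succ]
    split_ifs
    exacts [coeff_expSeries_mul_nonneg (hu j) ih x, le_rfl]

lemma coeff_belowSeries_eq_zero {j x : ℕ} (hj : 0 < j) (h : j ≤ x) :
    coeff x (belowSeries u j) = 0 := by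
  cases j with
  | zero => omega
  | succ j => rw [coeff_belowSeries_succ, if_neg (by omega)]

lemma coeff_aboveSeries_eq_zero {j x : ℕ} (h : x < j) : coeff x (aboveSeries u j) = 0 := by
  cases j with
  | zero => omega
  | succ j => rw [coeff_aboveSeries_succ, if_neg (by omega)]

lemma coeff_aboveSeries_le (hu : ∀ j, 0 ≤ u j) (j x : ℕ) :
    coeff x (aboveSeries u j) ≤ totalWeight u j ^ x / x.factorial := by
  rw [← coeff_expSeries]
  induction j generalizing x with
  | zero => rw [aboveSeries, totalWeight_zero, expSeries_zero]
  | succ j ih =>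
    rw [coeff_aboveSeries_succ, totalWeight_succ, add_comm, ← expSeries_mul_expSeries]
    split_ifs
    · exact coeff_expSeries_mul_le (hu j) fun y _ => ih y
    · refine coeff_expSeries_mul_nonneg (hu j) (fun y => ?_) x
      have := totalWeight_nonneg hu j
      rw [coeff_expSeries]
      positivity

lemma totalWeight_mul_coeff_aboveSeries_le (hu : ∀ j, 0 ≤ u j) (j x : ℕ) :
    totalWeight u j * coeff x (aboveSeries u j) ≤ (x + 1) * coeff (x + 1) (aboveSeries u j) := by
  rw [mul_comm ((x : ℝ) + 1), ← coeff_derivative, ← coeff_C_mul]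
  induction j generalizing x with
  | zero => simp [aboveSeries]
  | succ j ih =>
    rw [totalWeight_succ, coeff_C_mul, coeff_derivative, coeff_aboveSeries_succ,
      coeff_aboveSeries_succ]
    by_cases h : j < x
    · have hleibniz : derivative ℝ (expSeries (u j) * aboveSeries u j) =
          expSeries (u j) * derivative ℝ (aboveSeries u j) +
            C (u j) * (expSeries (u j) * aboveSeries u j) := by
        rw [Derivation.leibniz, derivative_expSeries, smul_eq_mul, smul_eq_mul]
        ring
      rw [if_pos h, if_pos (by omega), ← coeff_derivative, hleibniz, map_add, add_mul, coeff_C_mul,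
        ← coeff_C_mul x _ (totalWeight u j), mul_left_comm]
      gcongr
      exact coeff_expSeries_mul_le (hu j) fun y _ => ih y
    · rw [if_neg h, mul_zero]
      split_ifs
      · exact mul_nonneg (coeff_expSeries_mul_nonneg (hu j) (coeff_aboveSeries_nonneg hu j) _)
          (by positivity)
      · simp

lemma aboveSeries_const_mul (u : ℕ → ℝ) (c : ℝ) (j : ℕ) :
    aboveSeries (fun i => c * u i) j = rescale c (aboveSeries u j) := by
  induction j with
  | zero => simp [aboveSeries]
  | succ j ih =>
    ext x
    have hexp : expSeries (c * u j) = rescale c (expSeries (u j)) := by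
      rw [expSeries, expSeries, rescale_rescale, mul_comm]
    rw [coeff_aboveSeries_succ, ih, hexp, ← map_mul, coeff_rescale, coeff_rescale,
      coeff_aboveSeries_succ]
    split_ifs <;> simp

lemma explorationPoly_mul_pow (q : ℝ) (n x : ℕ) :
    explorationPoly q n x * q ^ (n * x) =
      q ^ n.choose 2 * x.factorial * coeff x (belowSeries (q ^ ·) n) := by
  induction n generalizing x with
  | zero => rw [explorationPoly, belowSeries, coeff_one]; split_ifs with h <;> simp [h]
  | succ n ih =>
    rw [explorationPoly, coeff_belowSeries_succ]
    split_ifs with h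
    · rw [coeff_mul, Finset.Nat.sum_antidiagonal_eq_sum_range_succ
        (fun c y => coeff c (expSeries (q ^ n)) * coeff y (belowSeries (q ^ ·) n)),
        Finset.mul_sum, Finset.sum_mul]
      refine Finset.sum_congr rfl fun c hc => ?_
      have hcx : c ≤ x := by simpa [Nat.lt_succ_iff] using hc
      have hchoose : (x.factorial : ℝ) = x.choose c * c.factorial * (x - c).factorial := by
        exact_mod_cast (Nat.choose_mul_factorial_mul_factorial hcx).symm
      have hpow : q ^ (n - x) * q ^ ((n + 1) * x) = q ^ n * (q ^ n) ^ c * q ^ (n * (x - c)) := by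
        rw [← pow_mul, ← pow_add, ← pow_add, ← pow_add]
        obtain ⟨d, rfl⟩ := Nat.exists_eq_add_of_le hcx
        obtain ⟨e, rfl⟩ := Nat.exists_eq_add_of_le h
        simp only [Nat.add_sub_cancel_left]
        ring_nf
      calc (x.choose c : ℝ) * q ^ (n - x) * explorationPoly q n (x - c) * q ^ ((n + 1) * x)
          = x.choose c * (q ^ (n - x) * q ^ ((n + 1) * x)) * explorationPoly q n (x - c) := by
            ring
        _ = x.choose c * (q ^ n * (q ^ n) ^ c) *
              (explorationPoly q n (x - c) * q ^ (n * (x - c))) := by rw [hpow]; ring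
        _ = _ := by
          rw [ih, hchoose, coeff_expSeries, Nat.choose_succ_succ' n 1, Nat.choose_one_right,
            pow_add]
          field_simp
    · simp

/-- Cutting at the `h`-th bin from the end: read backwards, the last `h` bins stay above the
diagonal. -/
lemma coeff_belowSeries_eq_coeff_mul (u : ℕ → ℝ) {k h : ℕ} (hk : h < k) :
    coeff (k - 1) (belowSeries u k) =
      coeff (k - 1) (aboveSeries (fun j => u (k - 1 - j)) h * belowSeries u (k - h)) := by
  induction h with
  | zero => simp [aboveSeries]
  | succ h ih =>
    rw [ih (by omega)]
    obtain ⟨j, hj⟩ : ∃ j, k - h = j + 1 := ⟨k - h - 1, by omega⟩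
    have hj' : k - (h + 1) = j := by omega
    have hj'' : k - 1 - h = j := by omega
    rw [hj, hj']
    set S := aboveSeries fun j => u (k - 1 - j)
    calc coeff (k - 1) (S h * belowSeries u (j + 1))
        = coeff (k - 1) (S h * (expSeries (u j) * belowSeries u j)) := by
          rw [coeff_mul, coeff_mul]
          refine Finset.sum_congr rfl fun p hp => ?_
          rw [Finset.HasAntidiagonal.mem_antidiagonal] at hp
          by_cases h1 : p.2 ≤ j
          · rw [coeff_belowSeries_succ, if_pos h1]
          · rw [show coeff p.1 (S h) = 0 from coeff_aboveSeries_eq_zero (by omega), zero_mul,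
              zero_mul]
      _ = coeff (k - 1) ((expSeries (u j) * S h) * belowSeries u j) := by ring_nf
      _ = coeff (k - 1) (S (h + 1) * belowSeries u j) := by
          rw [coeff_mul, coeff_mul]
          refine Finset.sum_congr rfl fun p hp => ?_
          rw [Finset.HasAntidiagonal.mem_antidiagonal] at hp
          by_cases h1 : h < p.1
          · rw [show coeff p.1 (S (h + 1)) = _ from coeff_aboveSeries_succ _ _ _, if_pos h1, hj'']
          · rw [coeff_belowSeries_eq_zero (by omega) (by omega), mul_zero, mul_zero]

lemma belowProb_nonneg (hu : ∀ j, 0 ≤ u j) (j x : ℕ) : 0 ≤ belowProb u j x := by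
  have := coeff_belowSeries_nonneg hu j x
  have := totalWeight_nonneg hu j
  unfold belowProb
  positivity

lemma aboveProb_nonneg (hu : ∀ j, 0 ≤ u j) (j x : ℕ) : 0 ≤ aboveProb u j x := by
  have := coeff_aboveSeries_nonneg hu j x
  have := totalWeight_nonneg hu j
  unfold aboveProb
  positivity

lemma aboveProb_le_one (hu : ∀ j, 0 ≤ u j) (j x : ℕ) : aboveProb u j x ≤ 1 := by
  have hW := totalWeight_nonneg hu j
  refine div_le_one_of_le₀ ?_ (by positivity)
  exact (le_div_iff₀ (by positivity)).1 (coeff_aboveSeries_le hu j x)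

lemma aboveProb_mono (hu : ∀ j, 0 ≤ u j) {j : ℕ} (hW : 0 < totalWeight u j) :
    Monotone (aboveProb u j) := by
  refine monotone_nat_of_le_succ fun x => ?_
  have hstep := totalWeight_mul_coeff_aboveSeries_le hu j x
  have hpos : 0 ≤ (x.factorial : ℝ) * totalWeight u j ^ x := by positivity
  unfold aboveProb
  rw [Nat.factorial_succ, pow_succ, div_le_div_iff₀ (by positivity) (by positivity)]
  push_cast
  nlinarith [mul_le_mul_of_nonneg_left hstep hpos]

/-- For unit weights this is an equality, the ballot theorem. -/
lemma coeff_belowSeries_le (hu : ∀ j, 1 ≤ u j) {j x : ℕ} (hx : x ≤ j) :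
    coeff x (belowSeries u j) ≤ coeff x (expSeries (totalWeight u j) * (1 - X)) := by
  induction j generalizing x with
  | zero => simp [belowSeries, expSeries_zero, Nat.le_zero.1 hx]
  | succ j ih =>
    rw [coeff_belowSeries_succ]
    split_ifs with h
    · rw [totalWeight_succ, add_comm, ← expSeries_mul_expSeries, mul_assoc]
      exact coeff_expSeries_mul_le (zero_le_one.trans (hu j)) fun y hy => ih (hy.trans h)
    · obtain rfl : x = j + 1 := by omega
      have hW := le_totalWeight hu (j + 1)
      have hW0 : 0 < totalWeight u (j + 1) := lt_of_lt_of_le (by positivity) hW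
      rw [mul_sub, mul_one, map_sub, coeff_expSeries_mul_X hW0.ne', coeff_expSeries, sub_nonneg]
      exact mul_le_of_le_one_left (by positivity) ((div_le_one hW0).2 hW)

lemma belowProb_le (hu : ∀ j, 1 ≤ u j) {j : ℕ} (hj : 0 < j) (x : ℕ) :
    belowProb u j x ≤ max 0 (1 - x / totalWeight u j) := by
  have hW : 0 < totalWeight u j := totalWeight_pos (fun j => zero_lt_one.trans_le (hu j)) hj
  by_cases h : x ≤ j
  · refine le_max_of_le_right ?_
    have hle := coeff_belowSeries_le hu h
    rw [mul_sub, mul_one, map_sub, coeff_expSeries_mul_X hW.ne', coeff_expSeries] at hle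
    rw [belowProb, div_le_iff₀ (by positivity)]
    refine (mul_le_mul_of_nonneg_right hle (by positivity)).trans_eq ?_
    field_simp
  · refine le_max_of_le_left ?_
    rw [belowProb, coeff_belowSeries_eq_zero hj (by omega)]
    simp

/-- The bound is negative beyond the diagonal, and its slope `totalWeight u j / j` increases with
`j`, so it is preserved when a bin is added. -/
lemma le_coeff_belowSeries (hu : ∀ j, 0 < u j) (hm : Monotone u) {j : ℕ} (hj : 0 < j) (x : ℕ) :
    coeff x (expSeries (totalWeight u j) * (1 - C (totalWeight u j / j) * X)) ≤
      coeff x (belowSeries u j) := by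
  have hcoeff (W a : ℝ) (hW : 0 < W) (x : ℕ) : coeff x (expSeries W * (1 - C a * X)) =
      (1 - a * (x / W)) * (W ^ x / x.factorial) := by
    rw [mul_sub, mul_one, map_sub, mul_left_comm, coeff_C_mul, coeff_expSeries_mul_X hW.ne',
      coeff_expSeries]
    ring
  induction j, hj using Nat.le_induction generalizing x with
  | base =>
    simp only [Nat.succ_eq_add_one, zero_add]
    rw [hcoeff _ _ (totalWeight_pos hu one_pos), coeff_belowSeries_succ]
    rcases x with _ | x
    · simp [belowSeries, coeff_expSeries]
    · have := totalWeight_pos hu one_pos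
      rw [if_neg (by omega)]
      refine mul_nonpos_of_nonpos_of_nonneg ?_ (by positivity)
      field_simp
      push_cast
      simp
  | succ j hj ih =>
    have hj0 : (0 : ℝ) < j := by exact_mod_cast hj
    have hW := totalWeight_pos hu (Nat.succ_pos j)
    rw [coeff_belowSeries_succ]
    split_ifs with h
    · have hslope : totalWeight u j / j ≤ totalWeight u (j + 1) / (j + 1 : ℕ) := by
        rw [totalWeight_succ, div_le_div_iff₀ hj0 (by positivity)]
        push_cast
        nlinarith [totalWeight_le_mul hm j]
      refine le_trans ?_ (coeff_expSeries_mul_le (hu j).le fun y _ => ih y)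
      rw [← mul_assoc, expSeries_mul_expSeries, add_comm (u j), ← totalWeight_succ, hcoeff _ _ hW,
        hcoeff _ _ hW]
      gcongr
    · rw [hcoeff _ _ hW]
      refine mul_nonpos_of_nonpos_of_nonneg ?_ (by positivity)
      rw [sub_nonpos, div_mul_div_cancel₀' hW.ne', one_le_div (by positivity)]
      exact_mod_cast not_le.1 h

lemma coeff_expSeries_mul_sub (a D v : ℝ) {W : ℝ} (hW : W ≠ 0) (x : ℕ) :
    coeff x (expSeries W * (1 - C a * X) - C D * expSeries (W + v)) =
      (1 - x * a / W - D * (1 + v / W) ^ x) * (W ^ x / x.factorial) := by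
  have hpow : (W + v) ^ x = W ^ x * (1 + v / W) ^ x := by
    rw [← mul_pow]
    congr 1
    field_simp
  rw [mul_sub, mul_one, map_sub, map_sub, mul_left_comm, coeff_C_mul, coeff_C_mul,
    coeff_expSeries_mul_X hW, coeff_expSeries, coeff_expSeries, hpow]
  ring

/-- After the `m`-th bin the slope of the lower bound is constant. The price is a correction term
that only has to dominate beyond the diagonal. -/
lemma le_coeff_belowSeries_of_le (hu : ∀ j, 0 < u j) (hm : Monotone u) {m H : ℕ} (hm0 : 0 < m)
    {v D : ℝ} (hv : 0 ≤ v) (hD : 0 ≤ D)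
    (hcond : ∀ j, m ≤ j → j ≤ H → 1 - j * (totalWeight u m / m) / totalWeight u j ≤
      D * (1 + v / totalWeight u j) ^ j) {j : ℕ} (hmj : m ≤ j) (hjH : j ≤ H) (x : ℕ) :
    coeff x (expSeries (totalWeight u j) * (1 - C (totalWeight u m / m) * X) -
      C D * expSeries (totalWeight u j + v)) ≤ coeff x (belowSeries u j) := by
  induction j, hmj using Nat.le_induction generalizing x with
  | base =>
    have hW := totalWeight_pos hu hm0
    refine le_trans ?_ (le_coeff_belowSeries hu hm hm0 x)
    rw [map_sub, sub_le_self_iff, coeff_C_mul, coeff_expSeries]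
    positivity
  | succ j hmj ih =>
    rw [coeff_belowSeries_succ]
    split_ifs with h
    · refine le_of_eq_of_le ?_ (coeff_expSeries_mul_le (hu j).le fun y _ => ih (by omega) y)
      have hexp (v : ℝ) : expSeries (totalWeight u (j + 1) + v) =
          expSeries (u j) * expSeries (totalWeight u j + v) := by
        rw [expSeries_mul_expSeries, totalWeight_succ]
        ring_nf
      have hexp0 := hexp 0
      rw [add_zero, add_zero] at hexp0
      rw [hexp, hexp0]
      ring_nf
    · have hW := totalWeight_pos hu (Nat.succ_pos j)
      set W := totalWeight u (j + 1)
      set a := totalWeight u m / m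
      have ha : 0 ≤ a := div_nonneg (totalWeight_nonneg (fun j => (hu j).le) m) m.cast_nonneg
      have hjx : j + 1 ≤ x := by omega
      have hdom : 1 - x * a / W ≤ D * (1 + v / W) ^ x :=
        calc 1 - x * a / W ≤ 1 - (j + 1 : ℕ) * a / W := by gcongr
          _ ≤ D * (1 + v / W) ^ (j + 1) := hcond (j + 1) (by omega) hjH
          _ ≤ D * (1 + v / W) ^ x := by
            gcongr
            exact le_add_of_nonneg_right (by positivity)
      rw [coeff_expSeries_mul_sub a D v hW.ne']
      exact mul_nonpos_of_nonpos_of_nonneg (sub_nonpos.2 hdom) (by positivity)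

lemma le_belowProb (hu : ∀ j, 0 < u j) (hm : Monotone u) {m H : ℕ} (hm0 : 0 < m) (hmH : m ≤ H)
    {v D : ℝ} (hv : 0 ≤ v) (hD : 0 ≤ D)
    (hcond : ∀ j, m ≤ j → j ≤ H → 1 - j * (totalWeight u m / m) / totalWeight u j ≤
      D * (1 + v / totalWeight u j) ^ j) (x : ℕ) :
    1 - x * (totalWeight u m / m) / totalWeight u H - D * (1 + v / totalWeight u H) ^ x ≤
      belowProb u H x := by
  have hW : 0 < totalWeight u H := totalWeight_pos hu (hm0.trans_le hmH)
  have hle := le_coeff_belowSeries_of_le hu hm hm0 hv hD hcond hmH le_rfl x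
  rw [coeff_expSeries_mul_sub _ D v hW.ne'] at hle
  rw [belowProb, le_div_iff₀ (by positivity)]
  refine le_of_eq_of_le ?_ (mul_le_mul_of_nonneg_right hle (by positivity))
  field_simp

end Bins

/-! ### Survival of a random walk with Poisson steps -/

section Survival

open PowerSeries

/-- The expectation of `t ^ (N - j + 1)` over the event that the numbers of balls in the bins
`0, …, j - 1` satisfy the constraint of `aboveSeries`, when the `i`-th bin receives a Poisson number
of balls of mean `u i` and `N` is the total number of balls. At `t = 1` it is the probability that
the random walk with steps `Poisson (u i) - 1` started at `1` survives for `j` steps. -/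
noncomputable def survivalMoment (u : ℕ → ℝ) (j : ℕ) (t : ℝ) : ℝ :=
  exp (-totalWeight u j) * t * (∑' x, coeff x (aboveSeries u j) * t ^ x) / t ^ j

/-- The probability that the walk of `survivalMoment` first fails the constraint at step `j`. -/
noncomputable def extinctionProb (u : ℕ → ℝ) (j : ℕ) : ℝ :=
  exp (-totalWeight u (j + 1)) * coeff j (expSeries (u j) * aboveSeries u j)

/-- The expectation of `t ^ (N - 1)` for a Poisson variable `N` of mean `a`. -/
noncomputable def tiltFactor (a t : ℝ) : ℝ := exp (a * (t - 1)) / t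

variable {u : ℕ → ℝ}

lemma summable_coeff_aboveSeries_mul_pow (hu : ∀ j, 0 ≤ u j) (j : ℕ) {t : ℝ} (ht : 0 ≤ t) :
    Summable fun x => coeff x (aboveSeries u j) * t ^ x := by
  refine (Real.summable_pow_div_factorial (totalWeight u j * t)).of_nonneg_of_le
    (fun x => mul_nonneg (coeff_aboveSeries_nonneg hu j x) (by positivity)) fun x => ?_
  rw [mul_pow, mul_div_right_comm]
  exact mul_le_mul_of_nonneg_right (coeff_aboveSeries_le hu j x) (by positivity)

lemma tsum_coeff_aboveSeries_succ (hu : ∀ j, 0 ≤ u j) (j : ℕ) {t : ℝ} (ht : 0 ≤ t) :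
    ∑' x, coeff x (aboveSeries u (j + 1)) * t ^ x =
      exp (u j * t) * (∑' x, coeff x (aboveSeries u j) * t ^ x) -
        coeff j (expSeries (u j) * aboveSeries u j) * t ^ j := by
  have hexp : Summable fun x : ℕ => ‖(u j * t) ^ x / (x.factorial : ℝ)‖ :=
    (Real.summable_pow_div_factorial _).norm
  have habove := (summable_coeff_aboveSeries_mul_pow hu j ht).norm
  have hprod := tsum_mul_tsum_eq_tsum_sum_antidiagonal_of_summable_norm hexp habove
  have hsum := (summable_norm_sum_mul_antidiagonal_of_summable_norm hexp habove).of_norm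
  have hcoeff (x : ℕ) : ∑ p ∈ Finset.HasAntidiagonal.antidiagonal x,
      (u j * t) ^ p.1 / (p.1.factorial : ℝ) * (coeff p.2 (aboveSeries u j) * t ^ p.2) =
      coeff x (expSeries (u j) * aboveSeries u j) * t ^ x := by
    rw [coeff_mul, Finset.sum_mul]
    refine Finset.sum_congr rfl fun p hp => ?_
    rw [Finset.HasAntidiagonal.mem_antidiagonal] at hp
    rw [← hp, mul_pow, pow_add, coeff_expSeries]
    ring
  simp_rw [hcoeff] at hprod hsum
  rw [Real.exp_eq_exp_ℝ, NormedSpace.exp_eq_tsum_div, hprod, hsum.tsum_eq_add_tsum_ite j,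
    add_sub_cancel_left]
  refine tsum_congr fun x => ?_
  rw [coeff_aboveSeries_succ]
  rcases lt_trichotomy x j with h | rfl | h
  · have hzero : coeff x (expSeries (u j) * aboveSeries u j) = 0 := by
      rw [coeff_mul]
      refine Finset.sum_eq_zero fun p hp => ?_
      rw [Finset.HasAntidiagonal.mem_antidiagonal] at hp
      rw [coeff_aboveSeries_eq_zero (by omega), mul_zero]
    simp [hzero]
  · simp
  · rw [if_pos h, if_neg h.ne']

@[simp] lemma survivalMoment_zero (u : ℕ → ℝ) (t : ℝ) : survivalMoment u 0 t = t := by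
  have hsum : ∑' x, coeff x (aboveSeries u 0) * t ^ x = 1 := by
    rw [tsum_eq_single 0 fun x hx => by simp [aboveSeries, coeff_one, hx]]
    simp [aboveSeries]
  simp [survivalMoment, hsum]

lemma survivalMoment_one (u : ℕ → ℝ) (j : ℕ) :
    survivalMoment u j 1 = exp (-totalWeight u j) * ∑' x, coeff x (aboveSeries u j) := by
  simp [survivalMoment]

lemma extinctionProb_nonneg (hu : ∀ j, 0 ≤ u j) (j : ℕ) : 0 ≤ extinctionProb u j :=
  mul_nonneg (exp_pos _).le (coeff_expSeries_mul_nonneg (hu j) (coeff_aboveSeries_nonneg hu j) _)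

lemma survivalMoment_nonneg (hu : ∀ j, 0 ≤ u j) (j : ℕ) {t : ℝ} (ht : 0 ≤ t) :
    0 ≤ survivalMoment u j t := by
  have : 0 ≤ ∑' x, coeff x (aboveSeries u j) * t ^ x :=
    tsum_nonneg fun x => mul_nonneg (coeff_aboveSeries_nonneg hu j x) (by positivity)
  unfold survivalMoment
  positivity

lemma survivalMoment_succ (hu : ∀ j, 0 ≤ u j) (j : ℕ) {t : ℝ} (ht : 0 < t) :
    survivalMoment u (j + 1) t =
      tiltFactor (u j) t * survivalMoment u j t - extinctionProb u j := by
  have htilt : exp (u j * (t - 1)) = exp (-u j) * exp (u j * t) := by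
    rw [← exp_add]
    ring_nf
  have hweight : exp (-totalWeight u (j + 1)) = exp (-totalWeight u j) * exp (-u j) := by
    rw [← exp_add, totalWeight_succ, neg_add]
  unfold survivalMoment extinctionProb tiltFactor
  rw [tsum_coeff_aboveSeries_succ hu j ht.le, htilt, hweight]
  field_simp
  ring

lemma survivalMoment_succ_one (hu : ∀ j, 0 ≤ u j) (j : ℕ) :
    survivalMoment u (j + 1) 1 = survivalMoment u j 1 - extinctionProb u j := by
  simp [survivalMoment_succ hu j one_pos, tiltFactor]

lemma survivalMoment_sub_succ (hu : ∀ j, 0 ≤ u j) (j : ℕ) {t : ℝ} (ht : 0 < t) :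
    survivalMoment u (j + 1) 1 - survivalMoment u (j + 1) t =
      survivalMoment u j 1 - survivalMoment u j t +
        (1 - tiltFactor (u j) t) * survivalMoment u j t := by
  rw [survivalMoment_succ_one hu, survivalMoment_succ hu j ht]
  ring

lemma survivalMoment_mono (hu : ∀ j, 0 ≤ u j) (j : ℕ) {t t' : ℝ} (ht : 0 < t) (htt' : t ≤ t') :
    survivalMoment u j t ≤ survivalMoment u j t' := by
  have hterm {t : ℝ} (ht : 0 < t) (x : ℕ) : coeff x (aboveSeries u j) * t ^ x / t ^ j =
      coeff x (aboveSeries u j) * t ^ (x - j) := by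
    rcases lt_or_ge x j with h | h
    · simp [coeff_aboveSeries_eq_zero h]
    · rw [mul_div_assoc, pow_sub₀ _ ht.ne' h, div_eq_mul_inv]
  have hsum {t : ℝ} (ht : 0 < t) : Summable fun x => coeff x (aboveSeries u j) * t ^ (x - j) :=
    ((summable_coeff_aboveSeries_mul_pow hu j ht.le).div_const (t ^ j)).congr (hterm ht)
  have hmoment {t : ℝ} (ht : 0 < t) : survivalMoment u j t =
      exp (-totalWeight u j) * t * ∑' x, coeff x (aboveSeries u j) * t ^ (x - j) := by
    rw [survivalMoment, mul_div_assoc, ← tsum_div_const, tsum_congr (hterm ht)]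
  have hcoeff := coeff_aboveSeries_nonneg hu j
  have ht' : 0 < t' := ht.trans_le htt'
  rw [hmoment ht, hmoment ht']
  refine mul_le_mul (by gcongr) ?_ (tsum_nonneg fun x => mul_nonneg (hcoeff x) (by positivity))
    (by positivity)
  refine (hsum ht).tsum_le_tsum (fun x => ?_) (hsum ht')
  exact mul_le_mul_of_nonneg_left (pow_le_pow_left₀ ht.le htt' _) (hcoeff x)

lemma survivalMoment_one_le_one (hu : ∀ j, 0 ≤ u j) (j : ℕ) : survivalMoment u j 1 ≤ 1 := by
  induction j with
  | zero => simp
  | succ j ih =>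
    rw [survivalMoment_succ_one hu]
    linarith [extinctionProb_nonneg hu j]

lemma tiltFactor_le_exp_neg {a β : ℝ} (hβ : 0 ≤ β) (hβ2 : β ≤ 1 / 2) (ha : 1 + β ≤ a) :
    tiltFactor a (1 - β / 2) ≤ exp (-(β ^ 2 / 4)) := by
  have hfactor : exp (-(β / 2 + β ^ 2 / 4)) ≤ 1 - β / 2 := by
    have hquad := quadratic_le_exp_of_nonneg (show 0 ≤ β / 2 + β ^ 2 / 4 by positivity)
    have hpoly : 1 ≤ (1 - β / 2) *
        (1 + (β / 2 + β ^ 2 / 4) + (β / 2 + β ^ 2 / 4) ^ 2 / 2) := by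
      nlinarith [pow_nonneg hβ 3, pow_nonneg hβ 4, pow_nonneg hβ 2]
    rw [exp_neg, inv_le_iff_one_le_mul₀ (exp_pos _)]
    exact hpoly.trans (mul_le_mul_of_nonneg_left hquad (by linarith))
  rw [tiltFactor, div_le_iff₀ (by linarith)]
  calc exp (a * ((1 - β / 2) - 1)) ≤ exp (-(β ^ 2 / 4)) * exp (-(β / 2 + β ^ 2 / 4)) := by
        rw [← exp_add, exp_le_exp]
        nlinarith
    _ ≤ exp (-(β ^ 2 / 4)) * (1 - β / 2) := by gcongr

lemma one_sub_le_exp_neg {t : ℝ} (h0 : 0 ≤ t) (h1 : t < 1) : 1 - t ≤ exp (-(t + t ^ 2 / 2)) := by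
  have hlog := Real.hasSum_pow_div_log_of_abs_lt_one (x := t) (by rwa [abs_of_nonneg h0])
  have hpartial := sum_le_hasSum (Finset.range 2) (fun i _ => by positivity) hlog
  rw [Finset.sum_range_succ, Finset.sum_range_one] at hpartial
  norm_num at hpartial
  rw [← Real.log_le_iff_le_exp (by linarith)]
  linarith

lemma exp_neg_le_one_sub {t : ℝ} (h0 : 0 ≤ t) (h1 : t ≤ 1 / 2) :
    exp (-(t + t ^ 2 / 2 + 2 * t ^ 3)) ≤ 1 - t := by
  have hlog := Real.abs_log_sub_add_sum_range_le (x := t) (by rw [abs_of_nonneg h0]; linarith) 2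
  rw [Finset.sum_range_succ, Finset.sum_range_one, abs_of_nonneg h0] at hlog
  have hlower := (abs_le.1 hlog).1
  norm_num at hlower
  have hrem : t ^ 3 / (1 - t) ≤ 2 * t ^ 3 := by
    rw [div_le_iff₀ (by linarith)]
    nlinarith [pow_nonneg h0 3]
  rw [← Real.le_log_iff_exp_le (by linarith)]
  linarith

lemma one_le_tiltFactor {a s : ℝ} (hs0 : 0 ≤ s) (hs1 : s < 1) (ha : a ≤ 1 + s / 2) :
    1 ≤ tiltFactor a (1 - s) := by
  rw [tiltFactor, le_div_iff₀ (by linarith), one_mul]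
  refine (one_sub_le_exp_neg hs0 hs1).trans (exp_le_exp.2 ?_)
  nlinarith

lemma tiltFactor_le_one {a s : ℝ} (hs0 : 0 ≤ s) (hs1 : s ≤ 1 / 2) (ha : 1 + s / 2 + 2 * s ^ 2 ≤ a) :
    tiltFactor a (1 - s) ≤ 1 := by
  rw [tiltFactor, div_le_one (by linarith)]
  refine (exp_le_exp.2 ?_).trans (exp_neg_le_one_sub hs0 hs1)
  nlinarith

lemma survivalMoment_le_exp_pow_mul (hu : ∀ j, 0 ≤ u j) {β : ℝ} (hβ : 0 ≤ β) (hβ2 : β ≤ 1 / 2)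
    {h : ℕ} (hl : ∀ j < h, 1 + β ≤ u j) :
    survivalMoment u h (1 - β / 2) ≤ exp (-(β ^ 2 / 4)) ^ h * survivalMoment u h 1 := by
  induction h with
  | zero => simpa using div_nonneg hβ zero_le_two
  | succ j ih =>
    have hpow : exp (-(β ^ 2 / 4)) ^ (j + 1) ≤ 1 :=
      pow_le_one₀ (exp_pos _).le (exp_le_one_iff.2 (by nlinarith))
    have hstep : tiltFactor (u j) (1 - β / 2) * survivalMoment u j (1 - β / 2) ≤
        exp (-(β ^ 2 / 4)) * (exp (-(β ^ 2 / 4)) ^ j * survivalMoment u j 1) :=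
      mul_le_mul (tiltFactor_le_exp_neg hβ hβ2 (hl j (by omega))) (ih fun i hi => hl i (by omega))
        (survivalMoment_nonneg hu j (by linarith)) (exp_pos _).le
    rw [survivalMoment_succ_one hu, survivalMoment_succ hu j (by linarith)]
    rw [← mul_assoc, ← pow_succ'] at hstep
    nlinarith [mul_le_of_le_one_left (extinctionProb_nonneg hu j) hpow]

lemma survivalMoment_sub_le (hu : ∀ j, 0 ≤ u j) {s : ℝ} (hs0 : 0 ≤ s) (hs1 : s < 1) {h : ℕ}
    (hs : ∀ j < h, u j ≤ 1 + s / 2) : survivalMoment u h 1 - survivalMoment u h (1 - s) ≤ s := by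
  induction h with
  | zero => simp
  | succ j ih =>
    rw [survivalMoment_sub_succ hu j (by linarith)]
    nlinarith [ih fun i hi => hs i (by omega), one_le_tiltFactor hs0 hs1 (hs j (by omega)),
      survivalMoment_nonneg hu j (show 0 ≤ 1 - s by linarith)]

lemma survivalMoment_sub_le_survivalMoment_sub (hu : ∀ j, 0 ≤ u j) {t : ℝ} (ht : 0 < t) {m h : ℕ}
    (hmh : m ≤ h) (htilt : ∀ j, m ≤ j → j < h → tiltFactor (u j) t ≤ 1) :
    survivalMoment u m 1 - survivalMoment u m t ≤ survivalMoment u h 1 - survivalMoment u h t := by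
  induction h, hmh using Nat.le_induction with
  | base => rfl
  | succ j hmj ih =>
    rw [survivalMoment_sub_succ hu j ht]
    nlinarith [ih fun i hmi hi => htilt i hmi (by omega), htilt j hmj (by omega),
      survivalMoment_nonneg hu j ht.le]

lemma survivalMoment_one_mul_le (hu : ∀ j, 0 ≤ u j) {α β : ℝ} (hβ : 0 ≤ β) (hβ2 : β ≤ 1 / 2)
    (hαβ : β ≤ α) {h : ℕ} (hl : ∀ j < h, 1 + β ≤ u j) (hα : ∀ j < h, u j ≤ 1 + α) :
    survivalMoment u h 1 * (1 - exp (-(β ^ 2 / 4)) ^ h) ≤ 2 * α := by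
  by_cases h2 : 2 * α < 1
  · have hsub := survivalMoment_sub_le hu (s := 2 * α) (by linarith) h2
      fun j hj => (hα j hj).trans_eq (by ring)
    have hmono := survivalMoment_mono hu h (t := 1 - 2 * α) (t' := 1 - β / 2) (by linarith)
      (by linarith)
    linarith [survivalMoment_le_exp_pow_mul hu hβ hβ2 hl]
  · nlinarith [survivalMoment_one_le_one hu h, survivalMoment_nonneg hu h zero_le_one,
      pow_pos (exp_pos (-(β ^ 2 / 4))) h]

lemma le_survivalMoment_one (hu : ∀ j, 0 ≤ u j) {α β : ℝ} (hβ : 0 ≤ β) (hβ2 : β ≤ 1 / 2)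
    (hα0 : 0 ≤ α) (hα : α ≤ 1 / 8) {m h : ℕ} (hmh : m ≤ h) (hl : ∀ j < h, 1 + β ≤ u j)
    (hlm : ∀ j < m, 1 + α ≤ u j) :
    (1 - exp (-(β ^ 2 / 4)) ^ m) * (2 * α - 16 * α ^ 2) ≤ survivalMoment u h 1 := by
  set s := 2 * α - 16 * α ^ 2
  have hs0 : 0 ≤ s := by nlinarith
  have hsα : 1 + s / 2 + 2 * s ^ 2 ≤ 1 + α := by nlinarith
  have hexp : exp (-(β ^ 2 / 4)) ≤ 1 := exp_le_one_iff.2 (by nlinarith)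
  have hstart : s ≤ survivalMoment u m 1 - survivalMoment u m (1 - s) := by
    simpa using survivalMoment_sub_le_survivalMoment_sub hu (t := 1 - s) (by nlinarith)
      m.zero_le fun j _ hj => tiltFactor_le_one hs0 (by nlinarith) (hsα.trans (hlm j hj))
  have hrest := survivalMoment_sub_le_survivalMoment_sub hu (t := 1 - β / 2) (by linarith) hmh
    fun j _ hj => (tiltFactor_le_exp_neg hβ hβ2 (hl j hj)).trans hexp
  have hdecay := survivalMoment_le_exp_pow_mul hu hβ hβ2 fun j (hj : j < m) => hl j (by omega)
  calc (1 - exp (-(β ^ 2 / 4)) ^ m) * s ≤ (1 - exp (-(β ^ 2 / 4)) ^ m) * survivalMoment u m 1 := by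
        refine mul_le_mul_of_nonneg_left ?_ (sub_nonneg.2 (pow_le_one₀ (exp_pos _).le hexp))
        linarith [survivalMoment_nonneg hu m (show 0 ≤ 1 - s by nlinarith)]
    _ ≤ survivalMoment u h 1 := by
        linarith [survivalMoment_nonneg hu h (show 0 ≤ 1 - β / 2 by linarith)]

end Survival

/-! ### Poisson and binomial averages -/

section Averages

open PowerSeries

/-- The probability that a Poisson variable of mean `θ` equals `x`. -/
noncomputable def poissonProb (θ : ℝ) (x : ℕ) : ℝ := exp (-θ) * (θ ^ x / x.factorial)

/-- The probability that a binomial variable with parameters `n` and `p` equals `x`. -/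
def binomialProb (n : ℕ) (p : ℝ) (x : ℕ) : ℝ := n.choose x * p ^ x * (1 - p) ^ (n - x)

lemma poissonProb_nonneg {θ : ℝ} (hθ : 0 ≤ θ) (x : ℕ) : 0 ≤ poissonProb θ x := by
  unfold poissonProb
  positivity

lemma hasSum_poissonProb (θ : ℝ) : HasSum (poissonProb θ) 1 := by
  have h := (NormedSpace.expSeries_div_hasSum_exp (𝔸 := ℝ) θ).mul_left (exp (-θ))
  rwa [← Real.exp_eq_exp_ℝ, ← exp_add, neg_add_cancel, exp_zero] at h

lemma add_one_mul_poissonProb_succ (θ : ℝ) (x : ℕ) :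
    (x + 1) * poissonProb θ (x + 1) = θ * poissonProb θ x := by
  unfold poissonProb
  rw [Nat.factorial_succ, pow_succ]
  push_cast
  field_simp

lemma hasSum_mul_poissonProb {θ s : ℝ} {f : ℕ → ℝ}
    (h : HasSum (fun x => f (x + 1) * poissonProb θ x) s) :
    HasSum (fun x => x * f x * poissonProb θ x) (θ * s) := by
  rw [← hasSum_nat_add_iff' 1]
  rw [Finset.sum_range_one, Nat.cast_zero, zero_mul, zero_mul, sub_zero]
  refine (h.mul_left θ).congr_fun fun x => ?_
  push_cast
  linear_combination f (x + 1) * add_one_mul_poissonProb_succ θ x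

lemma hasSum_poissonProb_mul_sq (θ : ℝ) :
    HasSum (fun x => poissonProb θ x * ((x : ℝ) - θ) ^ 2) θ := by
  have hmean : HasSum (fun x : ℕ => x * 1 * poissonProb θ x) (θ * 1) :=
    hasSum_mul_poissonProb (f := fun _ => 1) (by simpa using hasSum_poissonProb θ)
  have hsq : HasSum (fun x : ℕ => x * (x : ℝ) * poissonProb θ x) (θ * (θ * 1 + 1)) := by
    refine hasSum_mul_poissonProb (f := fun x => x)
      ((hmean.add (hasSum_poissonProb θ)).congr_fun fun x => ?_)
    push_cast
    ring
  have hsum := (hsq.sub (hmean.mul_left (2 * θ))).add ((hasSum_poissonProb θ).mul_left (θ ^ 2))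
  rw [show θ * (θ * 1 + 1) - 2 * θ * (θ * 1) + θ ^ 2 * 1 = θ by ring] at hsum
  exact hsum.congr_fun fun x => by ring

lemma sum_binomialProb (n : ℕ) (p : ℝ) : ∑ x ∈ Finset.range (n + 1), binomialProb n p x = 1 := by
  have h := (add_pow p (1 - p) n).symm
  rw [add_sub_cancel, one_pow] at h
  refine Eq.trans (Finset.sum_congr rfl fun x _ => ?_) h
  rw [binomialProb]
  ring

lemma sum_binomialProb_mul_sq (n : ℕ) (p : ℝ) :
    ∑ x ∈ Finset.range (n + 1), binomialProb n p x * ((x : ℝ) - n * p) ^ 2 = n * p * (1 - p) := by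
  have h := congrArg (Polynomial.eval p) (bernsteinPolynomial.variance ℝ n)
  simp only [Polynomial.eval_finsetSum, bernsteinPolynomial, Polynomial.eval_mul,
    Polynomial.eval_pow, Polynomial.eval_sub, Polynomial.eval_X, Polynomial.eval_one,
    Polynomial.eval_natCast, nsmul_eq_mul] at h
  rw [← h]
  refine Finset.sum_congr rfl fun x _ => ?_
  rw [binomialProb]
  ring

variable {u : ℕ → ℝ}

lemma totalWeight_const_mul (u : ℕ → ℝ) (c : ℝ) (j : ℕ) :
    totalWeight (fun i => c * u i) j = c * totalWeight u j :=
  (Finset.mul_sum ..).symm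

/-- Conditionally on their sum, independent Poisson variables are multinomial. -/
lemma survivalMoment_one_eq_tsum {h : ℕ} (hW : totalWeight u h ≠ 0) (θ : ℝ) :
    survivalMoment (fun j => θ / totalWeight u h * u j) h 1 =
      ∑' x, poissonProb θ x * aboveProb u h x := by
  rw [survivalMoment_one, totalWeight_const_mul, div_mul_cancel₀ _ hW, ← tsum_mul_left]
  refine tsum_congr fun x => ?_
  rw [aboveSeries_const_mul, coeff_rescale, poissonProb, aboveProb, div_pow]
  field_simp

lemma summable_poissonProb_mul_aboveProb (hu : ∀ j, 0 ≤ u j) (h : ℕ) {θ : ℝ} (hθ : 0 ≤ θ) :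
    Summable fun x => poissonProb θ x * aboveProb u h x :=
  (hasSum_poissonProb θ).summable.of_nonneg_of_le
    (fun x => mul_nonneg (poissonProb_nonneg hθ x) (aboveProb_nonneg hu h x))
    fun x => mul_le_of_le_one_right (poissonProb_nonneg hθ x) (aboveProb_le_one hu h x)

/-- A Tauberian estimate: `aboveProb` is monotone, and by Chebyshev's inequality most Poisson
variables of mean `θ` are at least `x`. -/
lemma aboveProb_mul_le (hu : ∀ j, 0 ≤ u j) {h : ℕ} (hW : 0 < totalWeight u h) {θ r : ℝ}
    (hθ : 0 ≤ θ) (hr : 0 < r) {x : ℕ} (hx : x + r ≤ θ) :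
    aboveProb u h x * (1 - θ / r ^ 2) ≤
      survivalMoment (fun j => θ / totalWeight u h * u j) h 1 := by
  rw [survivalMoment_one_eq_tsum hW.ne']
  have hsum : HasSum
      (fun y => poissonProb θ y * (aboveProb u h x * (1 - ((y : ℝ) - θ) ^ 2 / r ^ 2)))
      (aboveProb u h x * (1 - θ / r ^ 2)) :=
    (((hasSum_poissonProb θ).sub ((hasSum_poissonProb_mul_sq θ).div_const (r ^ 2))).mul_left
      (aboveProb u h x)).congr_fun fun y => by ring
  refine hasSum_le (fun y => mul_le_mul_of_nonneg_left ?_ (poissonProb_nonneg hθ y)) hsum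
    (summable_poissonProb_mul_aboveProb hu h hθ).hasSum
  rcases le_or_gt x y with hxy | hyx
  · refine (mul_le_of_le_one_right (aboveProb_nonneg hu h x) ?_).trans (aboveProb_mono hu hW hxy)
    rw [sub_le_self_iff]
    positivity
  · refine (mul_nonpos_of_nonneg_of_nonpos (aboveProb_nonneg hu h x) ?_).trans
      (aboveProb_nonneg hu h y)
    have hyx' : (y : ℝ) ≤ x := by exact_mod_cast hyx.le
    rw [sub_nonpos, one_le_div (by positivity)]
    nlinarith

lemma survivalMoment_one_le_aboveProb_add (hu : ∀ j, 0 ≤ u j) {h : ℕ} (hW : 0 < totalWeight u h)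
    {θ κ : ℝ} (hθ : 0 ≤ θ) (hκ : 0 ≤ κ) {x : ℕ}
    (hx : ∀ y, x < y → aboveProb u h y ≤ κ * ((y : ℝ) - θ) ^ 2) :
    survivalMoment (fun j => θ / totalWeight u h * u j) h 1 ≤ aboveProb u h x + κ * θ := by
  rw [survivalMoment_one_eq_tsum hW.ne']
  have hsum : HasSum (fun y => poissonProb θ y * (aboveProb u h x + κ * ((y : ℝ) - θ) ^ 2))
      (aboveProb u h x + κ * θ) := by
    have hsum := ((hasSum_poissonProb θ).mul_left (aboveProb u h x)).add
      ((hasSum_poissonProb_mul_sq θ).mul_left κ)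
    rw [mul_one] at hsum
    exact hsum.congr_fun fun y => by ring
  refine hasSum_le (fun y => mul_le_mul_of_nonneg_left ?_ (poissonProb_nonneg hθ y))
    (summable_poissonProb_mul_aboveProb hu h hθ).hasSum hsum
  rcases le_or_gt y x with hyx | hxy
  · exact (aboveProb_mono hu hW hyx).trans (le_add_of_nonneg_right (by positivity))
  · exact (hx y hxy).trans (le_add_of_nonneg_left (aboveProb_nonneg hu h x))

lemma totalWeight_rev_add_totalWeight (u : ℕ → ℝ) {k h : ℕ} (hk : h ≤ k) :
    totalWeight (fun j => u (k - 1 - j)) h + totalWeight u (k - h) = totalWeight u k := by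
  induction h with
  | zero => simp
  | succ h ih =>
    rw [← ih (by omega), totalWeight_succ, show k - h = k - (h + 1) + 1 by omega,
      totalWeight_succ, show k - 1 - h = k - (h + 1) by omega]
    ring

lemma belowProb_eq_sum_binomialProb (hu : ∀ j, 0 < u j) {k h : ℕ} (h0 : 0 < h) (hk : h < k) :
    belowProb u k (k - 1) = ∑ x ∈ Finset.range (k - 1 + 1),
      binomialProb (k - 1) (totalWeight (fun j => u (k - 1 - j)) h / totalWeight u k) x *
        (aboveProb (fun j => u (k - 1 - j)) h x * belowProb u (k - h) (k - 1 - x)) := by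
  have hsplit := totalWeight_rev_add_totalWeight u hk.le
  have hL : 0 < totalWeight (fun j => u (k - 1 - j)) h := totalWeight_pos (fun j => hu _) h0
  have hR : 0 < totalWeight u (k - h) := totalWeight_pos hu (by omega)
  have hG : 0 < totalWeight u k := totalWeight_pos hu (by omega)
  rw [belowProb, coeff_belowSeries_eq_coeff_mul u hk, coeff_mul,
    Finset.Nat.sum_antidiagonal_eq_sum_range_succ (fun x y =>
      coeff x (aboveSeries (fun j => u (k - 1 - j)) h) * coeff y (belowSeries u (k - h))),
    Finset.sum_mul, Finset.sum_div]
  refine Finset.sum_congr rfl fun x hx => ?_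
  have hx' : x ≤ k - 1 := by simpa [Nat.lt_succ_iff] using hx
  have hcompl : 1 - totalWeight (fun j => u (k - 1 - j)) h / totalWeight u k =
      totalWeight u (k - h) / totalWeight u k := by
    rw [← hsplit] at hG ⊢
    field_simp
    ring
  have hpow : totalWeight u k ^ (k - 1) =
      totalWeight u k ^ x * totalWeight u k ^ (k - 1 - x) := by
    rw [← pow_add, Nat.add_sub_cancel' hx']
  have hchoose : ((k - 1).factorial : ℝ) =
      (k - 1).choose x * x.factorial * (k - 1 - x).factorial := by
    exact_mod_cast (Nat.choose_mul_factorial_mul_factorial hx').symm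
  rw [binomialProb, hcompl, aboveProb, belowProb, div_pow, div_pow, hpow, hchoose]
  field_simp

lemma explorationPoly_mul_pow_choose {q : ℝ} (hq : 0 < q) (k : ℕ) :
    explorationPoly q k (k - 1) * q ^ k.choose 2 =
      totalWeight (q ^ ·) k ^ (k - 1) * belowProb (q ^ ·) k (k - 1) := by
  have h := explorationPoly_mul_pow q k (k - 1)
  have hchoose : k * (k - 1) = k.choose 2 + k.choose 2 := by
    have := Nat.choose_two_right k
    have := (Nat.even_mul_pred_self k).two_dvd
    omega
  rw [hchoose, pow_add] at h
  have hW : totalWeight (q ^ ·) k ^ (k - 1) ≠ 0 := by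
    rcases k with _ | k
    · simp
    · exact pow_ne_zero _ (totalWeight_pos (fun j => pow_pos hq j) k.succ_pos).ne'
  rw [belowProb, mul_div_cancel₀ _ hW]
  refine mul_right_cancel₀ (pow_pos hq (k.choose 2)).ne' ?_
  linear_combination h

end Averages

/-! ### Geometric weights in the scaling regime -/

lemma totalWeight_mul_le {u : ℕ → ℝ} (hu : Monotone u) {j H : ℕ} (hjH : j ≤ H) :
    totalWeight u j * H ≤ totalWeight u H * j := by
  induction H, hjH using Nat.le_induction with
  | base => rfl
  | succ H hH ih =>
    have hmono : totalWeight u j ≤ j * u H :=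
      (totalWeight_le_mul hu j).trans (mul_le_mul_of_nonneg_left (hu hH) j.cast_nonneg)
    rw [totalWeight_succ]
    push_cast
    linarith

lemma exp_sub_sq_div_two_le {a : ℝ} (ha : 0 ≤ a) : exp (a - a ^ 2 / 2) ≤ 1 + a := by
  rw [← le_log_iff_exp_le (by linarith)]
  refine le_trans ?_ (le_log_one_add_of_nonneg ha)
  rw [le_div_iff₀ (by linarith)]
  nlinarith [pow_nonneg ha 3]

lemma exp_le_one_add_div_totalWeight_pow {u : ℕ → ℝ} (hu : ∀ j, 1 ≤ u j) (hm : Monotone u)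
    {m j H : ℕ} (hm0 : 0 < m) (hmj : m ≤ j) (hjH : j ≤ H) {v : ℝ} (hv : 0 ≤ v) :
    exp (v * (H / totalWeight u H) - v ^ 2 / (2 * m)) ≤ (1 + v / totalWeight u j) ^ j := by
  have hpos : ∀ i, 0 < u i := fun i => one_pos.trans_le (hu i)
  have hm0' : (0 : ℝ) < m := by exact_mod_cast hm0
  have hmj' : (m : ℝ) ≤ j := by exact_mod_cast hmj
  have hj0 : (0 : ℝ) < j := hm0'.trans_le hmj'
  have hWj := le_totalWeight hu j
  have hW : 0 < totalWeight u j := totalWeight_pos hpos (by omega)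
  have hWH : 0 < totalWeight u H := totalWeight_pos hpos (by omega)
  have ha : 0 ≤ v / totalWeight u j := by positivity
  refine le_trans ?_ (pow_le_pow_left₀ (exp_pos _).le (exp_sub_sq_div_two_le ha) j)
  rw [← exp_nat_mul]
  have hlin : v * (H / totalWeight u H) ≤ j * (v / totalWeight u j) := by
    have : (H : ℝ) / totalWeight u H ≤ j / totalWeight u j := by
      rw [div_le_div_iff₀ hWH hW]
      linarith [totalWeight_mul_le hm hjH]
    calc v * (H / totalWeight u H) ≤ v * (j / totalWeight u j) := by gcongr
      _ = j * (v / totalWeight u j) := by ring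
  have hquad : j * ((v / totalWeight u j) ^ 2 / 2) ≤ v ^ 2 / (2 * m) :=
    calc j * ((v / totalWeight u j) ^ 2 / 2) ≤ j * ((v / j) ^ 2 / 2) := by gcongr
      _ = v ^ 2 / (2 * j) := by field_simp
      _ ≤ v ^ 2 / (2 * m) := by gcongr
  exact exp_le_exp.2 (by linarith)

section GeometricWeights

variable {w s : ℝ}

lemma le_totalWeight_pow (hw : 0 ≤ w) (j : ℕ) :
    j + w * (j * (j - 1)) / 2 ≤ totalWeight ((1 + w) ^ ·) j := by
  induction j with
  | zero => simp
  | succ j ih =>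
    rw [totalWeight_succ]
    have := one_add_mul_le_pow (by linarith : -2 ≤ w) j
    push_cast
    nlinarith

lemma one_add_pow_le (hw : 0 ≤ w) {j : ℕ} (hj : j * w ≤ 1) :
    (1 + w) ^ j ≤ 1 + j * w + (j * w) ^ 2 := by
  have hexp : (1 + w) ^ j ≤ exp (j * w) := by
    rw [exp_nat_mul]
    exact pow_le_pow_left₀ (by linarith) (by linarith [add_one_le_exp w]) j
  have hquad := abs_exp_sub_one_sub_id_le (x := j * w) (by rwa [abs_of_nonneg (by positivity)])
  linarith [(abs_le.1 hquad).2]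

lemma totalWeight_pow_le (hw : 0 ≤ w) {j : ℕ} (hs : j * w ≤ s) (hs1 : s ≤ 1) :
    totalWeight ((1 + w) ^ ·) j ≤ j * (1 + s / 2 + s ^ 2) := by
  have hcubic : totalWeight ((1 + w) ^ ·) j ≤ j * (1 + (j * w) / 2 + (j * w) ^ 2) := by
    replace hs1 := hs.trans hs1
    clear hs
    induction j with
    | zero => simp
    | succ j ih =>
      push_cast at hs1 ⊢
      have hj : j * w ≤ 1 := by linarith
      have hpow := one_add_pow_le hw hj
      have := ih hj
      rw [totalWeight_succ]
      have hj0 : (0 : ℝ) ≤ j := j.cast_nonneg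
      nlinarith [mul_nonneg (sq_nonneg w) hj0, mul_nonneg (sq_nonneg w) (mul_nonneg hj0 hj0)]
  refine hcubic.trans ?_
  gcongr

end GeometricWeights

lemma exp_neg_pow_le {m : ℕ} {c : ℝ} (hm : 0 < (m : ℝ)) (hc : 0 < c) :
    exp (-c) ^ m ≤ 1 / (m * c) := by
  rw [← exp_nat_mul, mul_neg, exp_neg, ← one_div]
  exact one_div_le_one_div_of_le (by positivity) (by linarith [add_one_le_exp ((m : ℝ) * c)])

/-- The regime `k^{-1/2} ≪ w k ≪ 1` up to the tolerance `ε`. The average of the weights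
`(1 + w) ^ j`, `j < k`, is about `1 + δ`, and numbers of balls fluctuate on the scale `t`. -/
structure ScalingRegime (k : ℕ) (w ε δ t : ℝ) : Prop where
  w_pos : 0 < w
  ε_pos : 0 < ε
  ε_le : ε ≤ 1 / 100
  δ_eq : δ = w * k / 2
  t_eq : t = √k
  δ_le_sq : δ ≤ ε ^ 2
  one_le : 1 ≤ ε ^ 4 * δ * t

/-- The weights `(1 + w) ^ j`, `j < k`, in reverse order: the bins met first by the exploration
are the heaviest ones. -/
def revWeight (k : ℕ) (w : ℝ) (j : ℕ) : ℝ := (1 + w) ^ (k - 1 - j)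

/-- The total weight of the `k / 3` heaviest bins. -/
noncomputable def earlyWeight (k : ℕ) (w : ℝ) : ℝ := totalWeight (revWeight k w) (k / 3)

/-- The total weight of the bins other than the `k / 3` heaviest ones. -/
noncomputable def lateWeight (k : ℕ) (w : ℝ) : ℝ := totalWeight ((1 + w) ^ ·) (k - k / 3)

/-- The number of balls per unit weight when `k - 1` balls are thrown into `k` bins. -/
noncomputable def load (k : ℕ) (w : ℝ) : ℝ := (k - 1) / totalWeight ((1 + w) ^ ·) k

/-- The expected number of balls in the `k / 3` heaviest bins. -/
noncomputable def earlyMean (k : ℕ) (w : ℝ) : ℝ := load k w * earlyWeight k w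

/-- The conditional probability, given `x` balls in the early bins, that the exploration survives
them. -/
noncomputable def earlyProb (k : ℕ) (w : ℝ) (x : ℕ) : ℝ := aboveProb (revWeight k w) (k / 3) x

/-- The conditional probability, given `x` balls in the early bins, that the exploration survives
the remaining bins. -/
noncomputable def lateProb (k : ℕ) (w : ℝ) (x : ℕ) : ℝ :=
  belowProb ((1 + w) ^ ·) (k - k / 3) (k - 1 - x)

/-- The probability that `x` of the `k - 1` balls fall into the early bins. -/
noncomputable def earlyCountProb (k : ℕ) (w : ℝ) (x : ℕ) : ℝ :=
  binomialProb (k - 1) (earlyWeight k w / totalWeight ((1 + w) ^ ·) k) x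

/-- A number of bins that is small compared with `k` but large compared with `δ⁻²`. -/
noncomputable def burnIn (k : ℕ) (ε : ℝ) : ℕ := ⌊ε * k⌋₊

lemma earlyWeight_add_lateWeight (k : ℕ) (w : ℝ) :
    earlyWeight k w + lateWeight k w = totalWeight ((1 + w) ^ ·) k :=
  totalWeight_rev_add_totalWeight _ (Nat.div_le_self k 3)

namespace ScalingRegime

variable {k : ℕ} {w ε δ t : ℝ}

lemma δ_pos (P : ScalingRegime k w ε δ t) : 0 < δ := by
  have hδ : 0 ≤ δ := by
    have := P.w_pos
    rw [P.δ_eq]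
    positivity
  refine hδ.lt_of_ne fun h => ?_
  have := P.one_le
  rw [← h] at this
  norm_num at this

lemma t_pos (P : ScalingRegime k w ε δ t) : 0 < t := by
  refine (P.t_eq ▸ Real.sqrt_nonneg _ : 0 ≤ t).lt_of_ne fun h => ?_
  have := P.one_le
  rw [← h] at this
  norm_num at this

lemma t_sq (P : ScalingRegime k w ε δ t) : t ^ 2 = k := by
  rw [P.t_eq]
  exact Real.sq_sqrt k.cast_nonneg

lemma one_div_t_le (P : ScalingRegime k w ε δ t) : 1 / t ≤ ε ^ 4 * δ := by
  rw [div_le_iff₀ P.t_pos]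
  exact P.one_le

lemma ε_sq_le (P : ScalingRegime k w ε δ t) : ε ^ 2 ≤ ε / 100 := by nlinarith [P.ε_pos, P.ε_le]

lemma ε_pow_four_le (P : ScalingRegime k w ε δ t) : ε ^ 4 ≤ ε / 1000000 := by
  rw [show ε ^ 4 = ε ^ 2 * ε ^ 2 by ring]
  nlinarith [P.ε_sq_le, P.ε_pos, P.ε_le, sq_nonneg ε]

lemma δ_le (P : ScalingRegime k w ε δ t) : δ ≤ ε / 100 := P.δ_le_sq.trans P.ε_sq_le

lemma δ_le_const (P : ScalingRegime k w ε δ t) : δ ≤ 1 / 10000 := by linarith [P.δ_le, P.ε_le]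

lemma le_t (P : ScalingRegime k w ε δ t) : 1000000 ≤ t := by
  have := P.ε_pos
  have hδ := P.δ_pos
  have hsmall : ε ^ 4 * δ ≤ 1 / 1000000 := by
    nlinarith [P.ε_pow_four_le, P.ε_le, P.δ_le_const, pow_nonneg P.ε_pos.le 4]
  nlinarith [P.one_le, P.t_pos]

lemma le_k (P : ScalingRegime k w ε δ t) : (1000000 : ℝ) ≤ k := by
  rw [← P.t_sq]
  nlinarith [P.le_t]

lemma le_k_nat (P : ScalingRegime k w ε δ t) : 1000000 ≤ k := by exact_mod_cast P.le_k

lemma k_pos (P : ScalingRegime k w ε δ t) : (0 : ℝ) < k := by linarith [P.le_k]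

lemma one_div_k_le_sq (P : ScalingRegime k w ε δ t) : 1 / (k : ℝ) ≤ (ε ^ 4 * δ) ^ 2 := by
  have := P.t_pos
  rw [← P.t_sq, ← one_div_pow]
  exact pow_le_pow_left₀ (by positivity) P.one_div_t_le 2

lemma one_le_mul_k (P : ScalingRegime k w ε δ t) : 1 ≤ ε * δ / 1000000 * k := by
  rw [← div_le_iff₀ P.k_pos]
  have := P.ε_pos
  have := P.δ_pos
  have hle : ε ^ 4 * δ ≤ 1 := by
    nlinarith [P.ε_pow_four_le, P.ε_le, P.δ_le_const, pow_nonneg P.ε_pos.le 4]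
  have hmul : ε ^ 4 * δ ≤ ε / 1000000 * δ := by
    gcongr
    exact P.ε_pow_four_le
  nlinarith [P.one_div_k_le_sq, show 0 ≤ ε ^ 4 * δ by positivity]

lemma w_mul_k (P : ScalingRegime k w ε δ t) : w * k = 2 * δ := by
  rw [P.δ_eq]
  ring

lemma natCast_mul_w_le (P : ScalingRegime k w ε δ t) {j : ℕ} (hj : j ≤ k) : j * w ≤ 2 * δ := by
  have hj' : (j : ℝ) ≤ k := by exact_mod_cast hj
  nlinarith [P.w_mul_k, P.w_pos]

lemma le_third (P : ScalingRegime k w ε δ t) : (k : ℝ) / 4 ≤ (k / 3 : ℕ) := by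
  have h : (k : ℝ) < 3 * (k / 3 : ℕ) + 3 := by exact_mod_cast (by omega : k < 3 * (k / 3) + 3)
  linarith [P.le_k]

lemma spread_le_mul (P : ScalingRegime k w ε δ t) : t / ε ≤ ε * δ / 10000 * k := by
  have := P.ε_pos
  have := P.δ_pos
  have hcube : t / ε ≤ ε ^ 3 * δ * k := by
    rw [← P.t_sq, div_le_iff₀ P.ε_pos]
    nlinarith [P.one_le, P.t_pos]
  refine hcube.trans ?_
  rw [show ε * δ / 10000 * k = ε / 10000 * δ * k by ring]
  gcongr
  nlinarith [P.ε_sq_le, P.ε_le]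

lemma spread_le (P : ScalingRegime k w ε δ t) : t / ε ≤ k / 100000000 := by
  have := P.ε_pos
  have := P.δ_pos
  have hle : ε * δ / 10000 * k ≤ 1 * (1 / 10000) / 10000 * k := by
    gcongr
    · linarith [P.ε_le]
    · exact P.δ_le_const
  linarith [P.spread_le_mul]

lemma exp_neg_pow_le_div (P : ScalingRegime k w ε δ t) {m : ℕ} (hm : ε * k / 2 ≤ m) :
    exp (-((δ / 4) ^ 2 / 4)) ^ m ≤ ε / 100 := by
  have := P.ε_pos
  have := P.k_pos
  have := P.δ_pos
  refine (exp_neg_pow_le (lt_of_lt_of_le (by positivity) hm) (by positivity)).trans ?_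
  rw [div_le_iff₀ (lt_of_lt_of_le (by positivity)
    (mul_le_mul_of_nonneg_right hm (by positivity : (0 : ℝ) ≤ (δ / 4) ^ 2 / 4)))]
  have hδk : 1 ≤ ε ^ 8 * (δ ^ 2 * k) := by
    have h := P.one_div_k_le_sq
    rw [div_le_iff₀ P.k_pos] at h
    nlinarith
  have hε8 : ε ^ 8 ≤ ε ^ 2 / 12800 := by
    have hprod : ε ^ 4 * (ε ^ 2 * ε ^ 2) ≤ (1 / 100 / 1000000) * (ε ^ 2 * 1) := by
      gcongr <;> nlinarith [P.ε_pow_four_le, P.ε_le, P.ε_sq_le]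
    nlinarith [sq_nonneg ε]
  calc 1 ≤ ε ^ 8 * (δ ^ 2 * k) := hδk
    _ ≤ ε ^ 2 / 12800 * (δ ^ 2 * k) := by gcongr
    _ = ε / 100 * ((ε * k / 2) * ((δ / 4) ^ 2 / 4)) := by ring
    _ ≤ ε / 100 * (m * ((δ / 4) ^ 2 / 4)) := by gcongr

lemma le_totalWeight (P : ScalingRegime k w ε δ t) :
    k + δ * (k - 1) ≤ totalWeight ((1 + w) ^ ·) k := by
  have := le_totalWeight_pow P.w_pos.le k
  rw [P.δ_eq]
  nlinarith

lemma totalWeight_le (P : ScalingRegime k w ε δ t) {j : ℕ} (hj : j ≤ k) :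
    totalWeight ((1 + w) ^ ·) j ≤ j * (1 + δ + 4 * δ ^ 2) := by
  refine (totalWeight_pow_le P.w_pos.le (P.natCast_mul_w_le hj)
    (by linarith [P.δ_le_const])).trans (le_of_eq ?_)
  ring

lemma totalWeight_pos (P : ScalingRegime k w ε δ t) : 0 < totalWeight ((1 + w) ^ ·) k := by
  nlinarith [P.le_totalWeight, P.le_k, P.δ_pos]

lemma load_le (P : ScalingRegime k w ε δ t) : load k w ≤ 1 - (1 - ε) * δ := by
  have hδ := P.δ_pos
  rw [load, div_le_iff₀ P.totalWeight_pos]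
  have hle : (1 - ε) * totalWeight ((1 + w) ^ ·) k ≤ k := by
    have hfactor : (1 - ε) * (1 + δ + 4 * δ ^ 2) ≤ 1 := by
      nlinarith [P.δ_le, P.ε_pos, P.ε_le, P.δ_le_const]
    have := mul_le_mul_of_nonneg_left (P.totalWeight_le le_rfl)
      (by linarith [P.ε_le] : 0 ≤ 1 - ε)
    nlinarith [P.k_pos]
  nlinarith [mul_le_mul_of_nonneg_left hle hδ.le, P.le_totalWeight, P.δ_le_const]

lemma le_load (P : ScalingRegime k w ε δ t) : 1 - (1 + ε) * δ ≤ load k w := by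
  have hδ := P.δ_pos
  have hε := P.ε_pos
  have hk := P.k_pos
  rw [load, le_div_iff₀ P.totalWeight_pos]
  have hle : (1 + ε) * δ * k ≤ (1 + ε) * δ * totalWeight ((1 + w) ^ ·) k :=
    mul_le_mul_of_nonneg_left (by nlinarith [P.le_totalWeight, P.le_k]) (by positivity)
  have hδδ : δ * (δ * k) ≤ ε / 100 * (δ * k) := mul_le_mul_of_nonneg_right P.δ_le (by positivity)
  nlinarith [mul_pos hε (mul_pos hδ hk), P.one_le_mul_k, P.totalWeight_le le_rfl]

lemma load_le_one (P : ScalingRegime k w ε δ t) : load k w ≤ 1 := by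
  nlinarith [P.load_le, P.δ_pos, P.ε_le]

lemma le_load_const (P : ScalingRegime k w ε δ t) : 99 / 100 ≤ load k w := by
  nlinarith [P.le_load, P.δ_pos, P.ε_le, P.δ_le_const]

lemma one_le_revWeight (P : ScalingRegime k w ε δ t) (j : ℕ) : 1 ≤ revWeight k w j :=
  one_le_pow₀ (by linarith [P.w_pos])

lemma revWeight_nonneg (P : ScalingRegime k w ε δ t) (j : ℕ) : 0 ≤ revWeight k w j :=
  zero_le_one.trans (P.one_le_revWeight j)

lemma revWeight_le (P : ScalingRegime k w ε δ t) (j : ℕ) :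
    revWeight k w j ≤ 1 + 2 * δ + 4 * δ ^ 2 := by
  have hδ : k * w = 2 * δ := by linarith [P.w_mul_k]
  calc revWeight k w j ≤ (1 + w) ^ k :=
        pow_le_pow_right₀ (by linarith [P.w_pos]) (by omega)
    _ ≤ 1 + k * w + (k * w) ^ 2 :=
        one_add_pow_le P.w_pos.le (by linarith [P.δ_le_const])
    _ = 1 + 2 * δ + 4 * δ ^ 2 := by
        rw [hδ]
        ring

lemma le_revWeight (P : ScalingRegime k w ε δ t) {m j : ℕ} (hj : j < m) (hm : m ≤ k) :
    1 + (k - m) * w ≤ revWeight k w j := by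
  have hpow : (1 + w) ^ (k - m) ≤ revWeight k w j :=
    pow_le_pow_right₀ (by linarith [P.w_pos]) (by omega)
  have hbern := one_add_mul_le_pow (by linarith [P.w_pos] : -2 ≤ w) (k - m)
  rw [Nat.cast_sub hm] at hbern
  exact hbern.trans hpow

lemma le_revWeight_of_lt_third (P : ScalingRegime k w ε δ t) {j : ℕ} (hj : j < k / 3) :
    1 + 13 / 10 * δ ≤ revWeight k w j := by
  have hthird : ((k / 3 : ℕ) : ℝ) ≤ k / 3 := Nat.cast_div_le
  nlinarith [P.le_revWeight hj (Nat.div_le_self k 3), P.w_mul_k, P.w_pos, P.δ_pos]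

lemma le_earlyWeight (P : ScalingRegime k w ε δ t) : (k : ℝ) / 4 ≤ earlyWeight k w :=
  P.le_third.trans (ConnGraphAsymptotics.le_totalWeight P.one_le_revWeight _)

lemma earlyWeight_le (P : ScalingRegime k w ε δ t) : earlyWeight k w ≤ k * (34 / 100) := by
  have hk := P.k_pos
  have hsum : earlyWeight k w ≤ ∑ i ∈ Finset.range (k / 3), (1 + 2 * δ + 4 * δ ^ 2) := by
    rw [earlyWeight, totalWeight]
    exact Finset.sum_le_sum fun i _ => P.revWeight_le i
  rw [Finset.sum_const, Finset.card_range, nsmul_eq_mul] at hsum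
  have hle : ((k / 3 : ℕ) : ℝ) * (1 + 2 * δ + 4 * δ ^ 2) ≤ (k / 3 : ℝ) * (101 / 100) := by
    have hδ : 1 + 2 * δ + 4 * δ ^ 2 ≤ 101 / 100 := by nlinarith [P.δ_le_const, P.δ_pos]
    exact mul_le_mul Nat.cast_div_le hδ (by nlinarith [P.δ_pos]) (by positivity)
  linarith

lemma earlyWeight_pos (P : ScalingRegime k w ε δ t) : 0 < earlyWeight k w := by
  linarith [P.le_earlyWeight, P.k_pos]

lemma le_lateWeight (P : ScalingRegime k w ε δ t) : (k : ℝ) / 2 ≤ lateWeight k w := by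
  nlinarith [earlyWeight_add_lateWeight k w, P.le_totalWeight, P.earlyWeight_le, P.le_k, P.δ_pos]

lemma lateWeight_pos (P : ScalingRegime k w ε δ t) : 0 < lateWeight k w := by
  linarith [P.le_lateWeight, P.k_pos]

lemma earlyMean_le (P : ScalingRegime k w ε δ t) : earlyMean k w ≤ k * (34 / 100) := by
  unfold earlyMean
  nlinarith [P.load_le_one, P.earlyWeight_le, P.earlyWeight_pos]

lemma le_earlyMean (P : ScalingRegime k w ε δ t) : (k : ℝ) / 5 ≤ earlyMean k w := by
  unfold earlyMean
  nlinarith [P.le_load_const, P.le_earlyWeight, P.earlyWeight_pos]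

lemma earlyMean_add_div (P : ScalingRegime k w ε δ t) (σ : ℝ) :
    (earlyMean k w + σ) / totalWeight (revWeight k w) (k / 3) =
      load k w + σ / earlyWeight k w := by
  have := P.earlyWeight_pos
  change (earlyMean k w + σ) / earlyWeight k w = _
  unfold earlyMean
  field_simp

lemma spread_div_earlyWeight_le (P : ScalingRegime k w ε δ t) :
    2 * (t / ε) / earlyWeight k w ≤ ε * δ := by
  have := P.ε_pos
  have := P.δ_pos
  rw [div_le_iff₀ P.earlyWeight_pos]
  have hle : ε * δ * (k / 4) ≤ ε * δ * earlyWeight k w := by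
    gcongr
    exact P.le_earlyWeight
  linarith [P.spread_le_mul, mul_pos (mul_pos P.ε_pos P.δ_pos) P.k_pos]

end ScalingRegime

/-! ### The early bins -/

namespace ScalingRegime

variable {k : ℕ} {w ε δ t : ℝ}

lemma earlyProb_nonneg (P : ScalingRegime k w ε δ t) (x : ℕ) : 0 ≤ earlyProb k w x :=
  aboveProb_nonneg P.revWeight_nonneg _ _

lemma mul_revWeight_le (P : ScalingRegime k w ε δ t) {s : ℝ} (hs : 0 ≤ s) (j : ℕ) :
    (load k w + s) * revWeight k w j ≤ 1 + (1 + 2 * ε) * δ + s * (101 / 100) := by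
  have hδ := P.δ_pos
  have hload : 0 ≤ 1 - (1 - ε) * δ := by linarith [P.load_le, P.le_load_const]
  have hprod : load k w * revWeight k w j ≤ (1 - (1 - ε) * δ) * (1 + 2 * δ + 4 * δ ^ 2) :=
    mul_le_mul P.load_le (P.revWeight_le j) (P.revWeight_nonneg j) hload
  have hs' : s * revWeight k w j ≤ s * (101 / 100) :=
    mul_le_mul_of_nonneg_left (by nlinarith [P.revWeight_le j, P.δ_le_const]) hs
  have hexpand : (1 - (1 - ε) * δ) * (1 + 2 * δ + 4 * δ ^ 2) ≤ 1 + (1 + 2 * ε) * δ := by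
    have hδδ : δ * δ ≤ ε / 100 * δ := mul_le_mul_of_nonneg_right P.δ_le hδ.le
    have hnn : 0 ≤ (1 - ε) * δ := mul_nonneg (by linarith [P.ε_le]) hδ.le
    nlinarith [mul_pos P.ε_pos hδ, mul_nonneg hnn hδ.le, mul_nonneg hnn (sq_nonneg δ)]
  linarith

lemma le_mul_revWeight (P : ScalingRegime k w ε δ t) {c : ℝ} (hc : 1 - 102 / 100 * δ ≤ c) {j : ℕ}
    (hj : j < k / 3) : 1 + δ / 4 ≤ c * revWeight k w j := by
  have hδ := P.δ_pos
  have hδ' := P.δ_le_const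
  have hprod : (1 - 102 / 100 * δ) * (1 + 13 / 10 * δ) ≤ c * revWeight k w j :=
    mul_le_mul hc (P.le_revWeight_of_lt_third hj) (by positivity) (by linarith)
  nlinarith

lemma survivalMoment_one_mul_le (P : ScalingRegime k w ε δ t) {c α : ℝ}
    (hc : 1 - 102 / 100 * δ ≤ c) (hα : ∀ j < k / 3, c * revWeight k w j ≤ 1 + α) :
    survivalMoment (fun j => c * revWeight k w j) (k / 3) 1 * (1 - ε / 100) ≤ 2 * α := by
  have hδ := P.δ_pos
  have hδ' := P.δ_le_const
  have hnn : ∀ j, 0 ≤ c * revWeight k w j := fun j =>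
    mul_nonneg (by linarith) (P.revWeight_nonneg j)
  have hlow : ∀ j < k / 3, 1 + δ / 4 ≤ c * revWeight k w j := fun j => P.le_mul_revWeight hc
  have h0 : 0 < k / 3 := by
    have := P.le_k_nat
    omega
  have hα' : δ / 4 ≤ α := by linarith [hlow 0 h0, hα 0 h0]
  refine le_trans (mul_le_mul_of_nonneg_left ?_ (survivalMoment_nonneg hnn _ zero_le_one))
    (ConnGraphAsymptotics.survivalMoment_one_mul_le hnn (by linarith) (by linarith) hα' hlow hα)
  have := P.exp_neg_pow_le_div (m := k / 3) (by nlinarith [P.le_third, P.ε_le, P.k_pos])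
  linarith

/-- Throwing `σ` more balls on average costs little, and makes it likely that at least `x` balls
are thrown. -/
lemma earlyProb_mul_mul_le (P : ScalingRegime k w ε δ t) {σ r : ℝ} (hσ : 0 ≤ σ) (hr : 0 < r)
    {x : ℕ} (hx : x + r ≤ earlyMean k w + σ) :
    earlyProb k w x * (1 - (earlyMean k w + σ) / r ^ 2) * (1 - ε / 100) ≤
      2 * ((1 + 2 * ε) * δ + σ / earlyWeight k w * (101 / 100)) := by
  have hL := P.earlyWeight_pos
  have hσL : 0 ≤ σ / earlyWeight k w := by positivity
  have htaub := aboveProb_mul_le P.revWeight_nonneg (h := k / 3) hL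
    (by linarith [P.le_earlyMean, P.k_pos]) hr hx
  rw [P.earlyMean_add_div] at htaub
  refine (mul_le_mul_of_nonneg_right htaub (by linarith [P.ε_le])).trans ?_
  refine P.survivalMoment_one_mul_le ?_ fun j _ => ?_
  · nlinarith [P.le_load, P.δ_pos, P.ε_le]
  · linarith [P.mul_revWeight_le hσL j]

lemma earlyProb_le (P : ScalingRegime k w ε δ t) {x : ℕ} (hx : x ≤ earlyMean k w + t / ε) :
    earlyProb k w x ≤ 2 * δ * (1 + 6 * ε) := by
  have hε := P.ε_pos
  have hε1 := P.ε_le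
  have ht := P.t_pos
  have hεδ := mul_pos hε P.δ_pos
  have hE := P.earlyProb_nonneg x
  have hmain := P.earlyProb_mul_mul_le (σ := 2 * (t / ε)) (r := t / ε) (by positivity)
    (by positivity) (x := x) (by linarith)
  have hcheb : (earlyMean k w + 2 * (t / ε)) / (t / ε) ^ 2 ≤ ε / 100 := by
    rw [div_le_iff₀ (by positivity), div_pow, P.t_sq,
      show ε / 100 * (k / ε ^ 2) = k / (100 * ε) by field_simp, le_div_iff₀ (by positivity)]
    nlinarith [P.spread_le, P.earlyMean_le, P.le_earlyMean, P.k_pos]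
  have hfactor : earlyProb k w x * (1 - ε / 50) ≤ earlyProb k w x *
      (1 - (earlyMean k w + 2 * (t / ε)) / (t / ε) ^ 2) * (1 - ε / 100) := by
    rw [mul_assoc]
    refine mul_le_mul_of_nonneg_left ?_ hE
    nlinarith
  have hle : earlyProb k w x * (1 - ε / 50) ≤ 2 * ((1 + 4 * ε) * δ) := by
    linarith [P.spread_div_earlyWeight_le]
  refine le_of_mul_le_mul_right (hle.trans ?_) (by linarith : 0 < 1 - ε / 50)
  nlinarith

lemma earlyProb_le_add (P : ScalingRegime k w ε δ t) (x : ℕ) :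
    earlyProb k w x ≤ 17 * δ + 64 * (max 0 (x - earlyMean k w)) / k := by
  have hε := P.ε_pos
  have hδ := P.δ_pos
  have ht := P.t_pos
  have hk := P.k_pos
  set y := max 0 ((x : ℝ) - earlyMean k w)
  have : 0 ≤ y := le_max_left _ _
  have hyx : (x : ℝ) - earlyMean k w ≤ y := le_max_right _ _
  rcases le_or_gt (k : ℝ) (64 * y) with hbig | hsmall
  · have : 1 ≤ 64 * y / k := (one_le_div hk).2 hbig
    linarith [aboveProb_le_one P.revWeight_nonneg (k / 3) x, show earlyProb k w x =
      aboveProb (revWeight k w) (k / 3) x from rfl]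
  have htk : t ≤ ε * δ / 10000 * k := by
    have : t ≤ t / ε := by
      rw [le_div_iff₀ hε]
      nlinarith [P.ε_le]
    linarith [P.spread_le_mul]
  have hσL : (y + 2 * t) / earlyWeight k w ≤ 4 * (y / k) + δ / 100 := by
    rw [div_le_iff₀ P.earlyWeight_pos]
    calc y + 2 * t ≤ y + δ * k / 400 := by nlinarith [P.ε_le, mul_pos hδ hk]
      _ = (4 * (y / k) + δ / 100) * (k / 4) := by
          field_simp
          ring
      _ ≤ (4 * (y / k) + δ / 100) * earlyWeight k w := by
          gcongr
          exact P.le_earlyWeight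
  have hmain := P.earlyProb_mul_mul_le (σ := y + 2 * t) (r := 2 * t) (by positivity)
    (by positivity) (x := x) (by linarith)
  have hcheb : (earlyMean k w + (y + 2 * t)) / (2 * t) ^ 2 ≤ 1 / 4 := by
    rw [div_le_iff₀ (by positivity), mul_pow, P.t_sq]
    have : ε * δ / 10000 * k ≤ 1 / 100 * k :=
      mul_le_mul_of_nonneg_right (by nlinarith [P.δ_le_const, P.ε_le]) hk.le
    linarith [P.earlyMean_le]
  have hfactor : earlyProb k w x * (74 / 100) ≤ earlyProb k w x *
      (1 - (earlyMean k w + (y + 2 * t)) / (2 * t) ^ 2) * (1 - ε / 100) := by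
    rw [mul_assoc]
    refine mul_le_mul_of_nonneg_left ?_ (P.earlyProb_nonneg x)
    nlinarith [P.ε_le]
  rw [mul_div_assoc]
  nlinarith [P.ε_le, show 0 ≤ y / k by positivity]

lemma two_le_mul_k (P : ScalingRegime k w ε δ t) : 2 ≤ ε * k := by
  nlinarith [P.one_le_mul_k, P.δ_le_const, P.δ_pos, mul_pos P.ε_pos P.k_pos]

lemma burnIn_le (P : ScalingRegime k w ε δ t) : burnIn k ε ≤ ε * k :=
  Nat.floor_le (mul_nonneg P.ε_pos.le P.k_pos.le)

lemma le_burnIn (P : ScalingRegime k w ε δ t) : ε * k / 2 ≤ burnIn k ε := by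
  have := Nat.lt_floor_add_one (ε * k)
  unfold burnIn
  linarith [P.two_le_mul_k]

lemma burnIn_pos (P : ScalingRegime k w ε δ t) : 0 < burnIn k ε := by
  have : (0 : ℝ) < burnIn k ε := by linarith [P.le_burnIn, P.two_le_mul_k]
  exact_mod_cast this

lemma burnIn_le_third (P : ScalingRegime k w ε δ t) : burnIn k ε ≤ k / 3 := by
  have : (burnIn k ε : ℝ) ≤ (k / 3 : ℕ) := by
    nlinarith [P.burnIn_le, P.le_third, P.ε_le, P.k_pos]
  exact_mod_cast this

lemma le_mul_revWeight_of_lt_burnIn (P : ScalingRegime k w ε δ t) {c : ℝ}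
    (hc : 1 - (1 + 2 * ε) * δ ≤ c) {j : ℕ} (hj : j < burnIn k ε) :
    1 + δ * (1 - 5 * ε) ≤ c * revWeight k w j := by
  have hε := P.ε_pos
  have hδ := P.δ_pos
  have hε1 := P.ε_le
  have hδ' := P.δ_le_const
  have hrev : 1 + 2 * (1 - ε) * δ ≤ revWeight k w j := by
    have := P.le_revWeight hj (P.burnIn_le_third.trans (Nat.div_le_self k 3))
    nlinarith [P.burnIn_le, P.w_mul_k, P.w_pos]
  have hprod : (1 - (1 + 2 * ε) * δ) * (1 + 2 * (1 - ε) * δ) ≤ c * revWeight k w j :=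
    mul_le_mul hc hrev (by nlinarith) (le_trans (by nlinarith) hc)
  have hcross : (1 + 2 * ε) * (2 * (1 - ε)) * (δ * δ) ≤ 3 * (ε / 100 * δ) :=
    mul_le_mul (by nlinarith) (mul_le_mul_of_nonneg_right P.δ_le hδ.le) (by positivity)
      (by norm_num)
  nlinarith [mul_pos hε hδ]

lemma le_survivalMoment_one (P : ScalingRegime k w ε δ t) {c : ℝ}
    (hc : 1 - (1 + 2 * ε) * δ ≤ c) :
    2 * δ * (1 - 6 * ε) ≤ survivalMoment (fun j => c * revWeight k w j) (k / 3) 1 := by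
  have hε := P.ε_pos
  have hδ := P.δ_pos
  have hε1 := P.ε_le
  have hδ' := P.δ_le_const
  have hc' : 1 - 102 / 100 * δ ≤ c := by nlinarith
  have hstart := ConnGraphAsymptotics.le_survivalMoment_one
    (fun j => mul_nonneg (by linarith : 0 ≤ c) (P.revWeight_nonneg j))
    (by linarith : 0 ≤ δ / 4) (by linarith) (by nlinarith : 0 ≤ δ * (1 - 5 * ε)) (by nlinarith)
    P.burnIn_le_third (fun j => P.le_mul_revWeight hc')
    (fun j => P.le_mul_revWeight_of_lt_burnIn hc)
  refine le_trans ?_ hstart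
  have hsq : (δ * (1 - 5 * ε)) ^ 2 ≤ ε / 100 * δ :=
    calc (δ * (1 - 5 * ε)) ^ 2 ≤ δ ^ 2 := pow_le_pow_left₀ (by nlinarith) (by nlinarith) 2
      _ = δ * δ := sq δ
      _ ≤ ε / 100 * δ := mul_le_mul_of_nonneg_right P.δ_le hδ.le
  have hprod : (1 - ε / 100) * (2 * δ * (1 - 5.9 * ε)) ≤
      (1 - exp (-((δ / 4) ^ 2 / 4)) ^ burnIn k ε) *
        (2 * (δ * (1 - 5 * ε)) - 16 * (δ * (1 - 5 * ε)) ^ 2) :=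
    mul_le_mul (by linarith [P.exp_neg_pow_le_div P.le_burnIn]) (by nlinarith) (by nlinarith)
      (by linarith [P.exp_neg_pow_le_div P.le_burnIn])
  nlinarith [mul_pos hε hδ, mul_pos hε (mul_pos hε hδ)]

lemma earlyProb_le_mul_sq (P : ScalingRegime k w ε δ t) {r : ℝ} (hr : 0 < r) {y : ℕ}
    (hy : earlyMean k w - r ≤ y) :
    earlyProb k w y ≤
      (17 * δ / r ^ 2 + 64 / (k * r)) * ((y : ℝ) - (earlyMean k w + -(2 * r))) ^ 2 := by
  have hk := P.k_pos
  have hδ := P.δ_pos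
  refine (P.earlyProb_le_add y).trans ?_
  set D := (y : ℝ) - (earlyMean k w + -(2 * r))
  have hDr : r ≤ D := by linarith
  have hmax : max 0 ((y : ℝ) - earlyMean k w) ≤ D := max_le (by linarith) (by linarith)
  have hconst : 17 * δ ≤ 17 * δ / r ^ 2 * D ^ 2 := by
    rw [div_mul_eq_mul_div, le_div_iff₀ (by positivity)]
    gcongr
  have hlin : 64 * max 0 ((y : ℝ) - earlyMean k w) / k ≤ 64 / (k * r) * D ^ 2 := by
    rw [div_mul_eq_mul_div, div_le_div_iff₀ hk (by positivity)]
    have : max 0 ((y : ℝ) - earlyMean k w) * r ≤ D * D := by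
      gcongr
      linarith
    nlinarith
  linarith

lemma spread_error_le (P : ScalingRegime k w ε δ t) :
    (17 * δ / (t / ε) ^ 2 + 64 / (k * (t / ε))) * k ≤ ε * δ := by
  have hε := P.ε_pos
  have hδ := P.δ_pos
  have ht := P.t_pos
  have hk := P.k_pos
  have hsq : 17 * δ / (t / ε) ^ 2 * k = 17 * δ * ε ^ 2 := by
    rw [div_pow, P.t_sq]
    field_simp
  have hlin : 64 / (k * (t / ε)) * k ≤ 64 * ε * (1 / 1000000 * δ) :=
    calc 64 / (k * (t / ε)) * k = 64 * ε * (1 / t) := by field_simp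
      _ ≤ 64 * ε * (ε ^ 4 * δ) := by
          gcongr
          exact P.one_div_t_le
      _ ≤ 64 * ε * (1 / 1000000 * δ) := by
          gcongr
          linarith [P.ε_pow_four_le, P.ε_le]
  have hsq' : 17 * δ * ε ^ 2 ≤ 17 * δ * (ε / 100) := by
    gcongr
    exact P.ε_sq_le
  rw [add_mul, hsq]
  nlinarith [mul_pos hε hδ]

lemma le_earlyProb (P : ScalingRegime k w ε δ t) {x : ℕ} (hx : earlyMean k w - t / ε ≤ x) :
    2 * δ * (1 - 8 * ε) ≤ earlyProb k w x := by
  have hε := P.ε_pos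
  have hδ := P.δ_pos
  have ht := P.t_pos
  have hk := P.k_pos
  have hr : 0 < t / ε := by positivity
  have hspread := P.spread_le
  have hθ : 0 ≤ earlyMean k w + -(2 * (t / ε)) := by linarith [P.le_earlyMean]
  set κ := 17 * δ / (t / ε) ^ 2 + 64 / (k * (t / ε))
  have htaub := survivalMoment_one_le_aboveProb_add P.revWeight_nonneg (h := k / 3)
    P.earlyWeight_pos hθ (by positivity : 0 ≤ κ) (x := x) fun y hy => by
      have hy' : (x : ℝ) < y := by exact_mod_cast hy
      exact P.earlyProb_le_mul_sq hr (by linarith)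
  rw [P.earlyMean_add_div] at htaub
  have hsurv := P.le_survivalMoment_one
    (c := load k w + -(2 * (t / ε)) / earlyWeight k w) (by
      rw [neg_div]
      linarith [P.le_load, P.spread_div_earlyWeight_le])
  have herror : κ * (earlyMean k w + -(2 * (t / ε))) ≤ ε * δ :=
    (mul_le_mul_of_nonneg_left (by linarith [P.earlyMean_le]) (by positivity)).trans
      P.spread_error_le
  change _ ≤ earlyProb k w x + _ at htaub
  nlinarith [mul_pos hε hδ]

end ScalingRegime

/-! ### The late bins -/

namespace ScalingRegime

variable {k : ℕ} {w ε δ t : ℝ}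

lemma lateProb_nonneg (P : ScalingRegime k w ε δ t) (x : ℕ) : 0 ≤ lateProb k w x :=
  belowProb_nonneg (fun _ => pow_nonneg (by linarith [P.w_pos]) _) _ _

lemma one_sub_div_lateWeight (P : ScalingRegime k w ε δ t) {x : ℕ} (hx : x ≤ k - 1) :
    1 - ((k - 1 - x : ℕ) : ℝ) / lateWeight k w =
      1 - load k w + (x - earlyMean k w) / lateWeight k w := by
  have hR := P.lateWeight_pos
  have hload : load k w * (earlyWeight k w + lateWeight k w) = k - 1 := by
    rw [earlyWeight_add_lateWeight, load, div_mul_cancel₀ _ P.totalWeight_pos.ne']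
  have hk : 1 ≤ k := le_trans (by norm_num) P.le_k_nat
  rw [Nat.cast_sub hx, Nat.cast_sub hk, earlyMean]
  field_simp
  push_cast
  linarith

lemma lateProb_le (P : ScalingRegime k w ε δ t) {x : ℕ} (hx : x ≤ k - 1) :
    lateProb k w x ≤ (1 + ε) * δ + 2 * |x - earlyMean k w| / k := by
  have hk := P.k_pos
  have hδ := P.δ_pos
  have hε := P.ε_pos
  have hdev : (x - earlyMean k w) / lateWeight k w ≤ 2 * |x - earlyMean k w| / k :=
    calc (x - earlyMean k w) / lateWeight k w ≤ |x - earlyMean k w| / lateWeight k w :=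
          div_le_div_of_nonneg_right (le_abs_self _) P.lateWeight_pos.le
      _ ≤ |x - earlyMean k w| / (k / 2) := by
          gcongr
          exact P.le_lateWeight
      _ = 2 * |x - earlyMean k w| / k := by field_simp
  refine (belowProb_le (u := ((1 + w) ^ ·)) (fun j => one_le_pow₀ (by linarith [P.w_pos]))
    (by have := P.le_k_nat; omega) _).trans (max_le (by positivity) ?_)
  change 1 - ((k - 1 - x : ℕ) : ℝ) / lateWeight k w ≤ _
  rw [P.one_sub_div_lateWeight hx]
  linarith [P.le_load]

lemma totalWeight_burnIn_div_le (P : ScalingRegime k w ε δ t) :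
    totalWeight ((1 + w) ^ ·) (burnIn k ε) / burnIn k ε ≤ 1 + 2 * ε * δ := by
  have hm : (0 : ℝ) < burnIn k ε := by exact_mod_cast P.burnIn_pos
  have hεδ := mul_pos P.ε_pos P.δ_pos
  have hεδ' : ε * δ ≤ 1 / 100 := by nlinarith [P.ε_le, P.δ_le_const, P.ε_pos]
  rw [div_le_iff₀ hm, mul_comm]
  refine (totalWeight_pow_le P.w_pos.le (s := 2 * ε * δ) ?_ (by linarith)).trans ?_
  · calc burnIn k ε * w ≤ ε * k * w := mul_le_mul_of_nonneg_right P.burnIn_le P.w_pos.le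
      _ = 2 * ε * δ := by rw [mul_assoc, mul_comm (k : ℝ), P.w_mul_k]; ring
  · exact mul_le_mul_of_nonneg_left (by nlinarith) hm.le

lemma div_lateWeight_le (P : ScalingRegime k w ε δ t) {x : ℕ} (hx : x ≤ k - 1)
    (hx' : earlyMean k w - t / ε ≤ x) :
    ((k - 1 - x : ℕ) : ℝ) / lateWeight k w ≤ 1 - (1 - 2 * ε) * δ := by
  have hεδ := mul_pos P.ε_pos P.δ_pos
  have hdev : -(ε * δ) ≤ (x - earlyMean k w) / lateWeight k w := by
    rw [le_div_iff₀ P.lateWeight_pos]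
    nlinarith [P.spread_le_mul, mul_pos hεδ P.k_pos,
      mul_le_mul_of_nonneg_left P.le_lateWeight hεδ.le]
  linarith [P.one_sub_div_lateWeight hx, P.load_le]

lemma le_div_lateWeight (P : ScalingRegime k w ε δ t) :
    1 - 68 / 100 * δ ≤ ((k - k / 3 : ℕ) : ℝ) / lateWeight k w := by
  have hδ := P.δ_pos
  have hδ' := P.δ_le_const
  have hH : ((k - k / 3 : ℕ) : ℝ) ≤ k * (67 / 100) := by
    have : 3 * ((k - k / 3 : ℕ) : ℝ) ≤ 2 * k + 3 := by
      exact_mod_cast (by omega : 3 * (k - k / 3) ≤ 2 * k + 3)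
    linarith [P.le_k]
  have hR : lateWeight k w ≤
      (k - k / 3 : ℕ) * (1 + (134 / 100 * δ) / 2 + (134 / 100 * δ) ^ 2) :=
    totalWeight_pow_le P.w_pos.le (by nlinarith [P.w_pos, P.w_mul_k]) (by linarith)
  have hprod : (1 - 68 / 100 * δ) * (1 + (134 / 100 * δ) / 2 + (134 / 100 * δ) ^ 2) ≤ 1 := by
    nlinarith
  rw [le_div_iff₀ P.lateWeight_pos]
  calc (1 - 68 / 100 * δ) * lateWeight k w
      ≤ (1 - 68 / 100 * δ) *
          ((k - k / 3 : ℕ) * (1 + (134 / 100 * δ) / 2 + (134 / 100 * δ) ^ 2)) :=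
        mul_le_mul_of_nonneg_left hR (by linarith)
    _ = (k - k / 3 : ℕ) *
          ((1 - 68 / 100 * δ) * (1 + (134 / 100 * δ) / 2 + (134 / 100 * δ) ^ 2)) := by ring
    _ ≤ (k - k / 3 : ℕ) := mul_le_of_le_one_right (Nat.cast_nonneg _) hprod

lemma one_sub_mul_div_totalWeight_le (P : ScalingRegime k w ε δ t) {c : ℝ} (hc : 1 ≤ c) {j : ℕ}
    (hj0 : 0 < j) (hjk : j ≤ k) : 1 - j * c / totalWeight ((1 + w) ^ ·) j ≤ 2 * δ := by
  have hδ := P.δ_pos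
  have hδ' := P.δ_le_const
  have hj : (0 : ℝ) < j := by exact_mod_cast hj0
  have hW : 0 < totalWeight ((1 + w) ^ ·) j :=
    ConnGraphAsymptotics.totalWeight_pos (fun _ => pow_pos (by linarith [P.w_pos]) _) hj0
  rw [sub_le_comm, le_div_iff₀ hW]
  have hprod : (1 - 2 * δ) * (1 + δ + 4 * δ ^ 2) ≤ 1 := by nlinarith
  calc (1 - 2 * δ) * totalWeight ((1 + w) ^ ·) j
      ≤ (1 - 2 * δ) * (j * (1 + δ + 4 * δ ^ 2)) :=
        mul_le_mul_of_nonneg_left (P.totalWeight_le hjk) (by linarith)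
    _ = j * ((1 - 2 * δ) * (1 + δ + 4 * δ ^ 2)) := by ring
    _ ≤ j * c := mul_le_mul_of_nonneg_left (hprod.trans hc) hj.le

lemma two_mul_exp_mul_pow_le (P : ScalingRegime k w ε δ t) {H R v : ℝ} {z : ℕ} (hR : 0 < R)
    (hH : 1 - 68 / 100 * δ ≤ H / R) (hz : z / R ≤ 1 - (1 - 2 * ε) * δ)
    (hv : v = δ * burnIn k ε / 10) :
    2 * δ * exp (-(v * (H / R)) + v ^ 2 / (2 * burnIn k ε)) * (1 + v / R) ^ z ≤ ε * δ := by
  have hδ := P.δ_pos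
  have hε := P.ε_pos
  have hm : (0 : ℝ) < burnIn k ε := by exact_mod_cast P.burnIn_pos
  have hv0 : 0 ≤ v := by
    rw [hv]
    positivity
  have hpow : (1 + v / R) ^ z ≤ exp (z * (v / R)) := by
    rw [exp_nat_mul]
    exact pow_le_pow_left₀ (by positivity) (by linarith [add_one_le_exp (v / R)]) z
  have hexponent : -(v * (H / R)) + v ^ 2 / (2 * burnIn k ε) + z * (v / R) ≤
      burnIn k ε * -((δ / 4) ^ 2 / 4) := by
    have hsq : v ^ 2 / (2 * burnIn k ε) = v * (δ / 20) := by
      rw [hv]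
      field_simp
      ring
    have hgap : v * (δ * (3 / 10)) ≤ v * (H / R - z / R) :=
      mul_le_mul_of_nonneg_left (by nlinarith [P.ε_le]) hv0
    have hvδ : v * δ = δ ^ 2 * burnIn k ε / 10 := by
      rw [hv]
      ring
    rw [hsq, show (z : ℝ) * (v / R) = v * (z / R) by ring]
    nlinarith [mul_pos (mul_pos hδ hδ) hm]
  have hsmall := P.exp_neg_pow_le_div P.le_burnIn
  rw [← exp_nat_mul] at hsmall
  calc 2 * δ * exp (-(v * (H / R)) + v ^ 2 / (2 * burnIn k ε)) * (1 + v / R) ^ z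
      ≤ 2 * δ * exp (-(v * (H / R)) + v ^ 2 / (2 * burnIn k ε)) * exp (z * (v / R)) := by gcongr
    _ = 2 * δ * exp (-(v * (H / R)) + v ^ 2 / (2 * burnIn k ε) + z * (v / R)) := by
        rw [mul_assoc, ← exp_add]
    _ ≤ 2 * δ * (ε / 100) := by
        gcongr
        exact (exp_le_exp.2 hexponent).trans hsmall
    _ ≤ ε * δ := by nlinarith [mul_pos hε hδ]

lemma le_lateProb (P : ScalingRegime k w ε δ t) {x : ℕ} (hx : x ≤ k - 1)
    (hx' : earlyMean k w - t / ε ≤ x) : δ * (1 - 6 * ε) ≤ lateProb k w x := by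
  have hε := P.ε_pos
  have hδ := P.δ_pos
  have hR := P.lateWeight_pos
  have hm0 := P.burnIn_pos
  have hmle := P.burnIn_le_third
  have hm : (0 : ℝ) < burnIn k ε := by exact_mod_cast hm0
  have hu1 : ∀ j, 1 ≤ (1 + w) ^ j := fun j => one_le_pow₀ (by linarith [P.w_pos])
  have hmono : Monotone fun j => (1 + w) ^ j := pow_right_mono₀ (by linarith [P.w_pos])
  set c := totalWeight ((1 + w) ^ ·) (burnIn k ε) / burnIn k ε
  have hc : 1 ≤ c := (one_le_div hm).2 (ConnGraphAsymptotics.le_totalWeight hu1 _)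
  obtain ⟨v, hv⟩ : ∃ v, v = δ * burnIn k ε / 10 := ⟨_, rfl⟩
  have hv0 : 0 ≤ v := by
    rw [hv]
    positivity
  set a := v * ((k - k / 3 : ℕ) / lateWeight k w)
  have hcond : ∀ j, burnIn k ε ≤ j → j ≤ k - k / 3 → 1 - j * c / totalWeight ((1 + w) ^ ·) j ≤
      2 * δ * exp (-a + v ^ 2 / (2 * burnIn k ε)) * (1 + v / totalWeight ((1 + w) ^ ·) j) ^ j := by
    intro j hmj hjH
    refine (P.one_sub_mul_div_totalWeight_le hc (by omega) (by omega)).trans ?_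
    have hexp := exp_le_one_add_div_totalWeight_pow hu1 hmono hm0 hmj hjH hv0
    calc 2 * δ = 2 * δ * exp (-a + v ^ 2 / (2 * burnIn k ε)) *
          exp (a - v ^ 2 / (2 * burnIn k ε)) := by
          rw [mul_assoc, ← exp_add, neg_add_eq_sub, sub_add_sub_cancel, sub_self, exp_zero, mul_one]
      _ ≤ _ := mul_le_mul_of_nonneg_left hexp (by positivity)
  have hlower := le_belowProb (fun j => one_pos.trans_le (hu1 j)) hmono hm0 (by omega) hv0
    (by positivity) hcond (k - 1 - x)
  change 1 - ((k - 1 - x : ℕ) : ℝ) * c / lateWeight k w - _ * (1 + v / lateWeight k w) ^ _ ≤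
    lateProb k w x at hlower
  have hz := P.div_lateWeight_le hx hx'
  have hmean : ((k - 1 - x : ℕ) : ℝ) * c / lateWeight k w ≤ 1 - (1 - 4 * ε) * δ := by
    rw [mul_div_right_comm]
    have hprod := mul_le_mul hz P.totalWeight_burnIn_div_le (by positivity)
      (le_trans (by positivity) hz)
    nlinarith [mul_nonneg (mul_nonneg (by linarith [P.ε_le] : 0 ≤ 1 - 2 * ε) hδ.le)
      (mul_pos hε hδ).le]
  have htail := P.two_mul_exp_mul_pow_le hR P.le_div_lateWeight hz hv
  linarith [mul_pos hε hδ]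

end ScalingRegime

/-! ### Averaging over the number of early balls -/

namespace ScalingRegime

variable {k : ℕ} {w ε δ t : ℝ}

lemma belowProb_eq_sum_earlyCountProb (P : ScalingRegime k w ε δ t) :
    belowProb ((1 + w) ^ ·) k (k - 1) =
      ∑ x ∈ Finset.range (k - 1 + 1), earlyCountProb k w x * (earlyProb k w x * lateProb k w x) :=
  belowProb_eq_sum_binomialProb (fun _ => pow_pos (by linarith [P.w_pos]) _)
    (by have := P.le_k_nat; omega) (by have := P.le_k_nat; omega)

lemma earlyWeight_div_mem_Icc (P : ScalingRegime k w ε δ t) :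
    earlyWeight k w / totalWeight ((1 + w) ^ ·) k ∈ Set.Icc 0 1 := by
  refine ⟨div_nonneg P.earlyWeight_pos.le P.totalWeight_pos.le, ?_⟩
  rw [div_le_one P.totalWeight_pos, ← earlyWeight_add_lateWeight]
  linarith [P.lateWeight_pos]

lemma earlyCountProb_nonneg (P : ScalingRegime k w ε δ t) (x : ℕ) : 0 ≤ earlyCountProb k w x := by
  obtain ⟨h0, h1⟩ := P.earlyWeight_div_mem_Icc
  have : 0 ≤ 1 - earlyWeight k w / totalWeight ((1 + w) ^ ·) k := sub_nonneg.2 h1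
  unfold earlyCountProb binomialProb
  positivity

lemma sum_earlyCountProb_mul_sq_le (P : ScalingRegime k w ε δ t) :
    ∑ x ∈ Finset.range (k - 1 + 1), earlyCountProb k w x * ((x : ℝ) - earlyMean k w) ^ 2 ≤
      k * (34 / 100) := by
  obtain ⟨h0, -⟩ := P.earlyWeight_div_mem_Icc
  have hk : 1 ≤ k := le_trans (by norm_num) P.le_k_nat
  have hmean : earlyMean k w =
      (k - 1 : ℕ) * (earlyWeight k w / totalWeight ((1 + w) ^ ·) k) := by
    rw [earlyMean, load, Nat.cast_sub hk]
    push_cast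
    ring
  have hle := P.earlyMean_le
  rw [hmean] at hle ⊢
  refine (sum_binomialProb_mul_sq _ _).trans_le ((mul_le_of_le_one_right ?_ ?_).trans hle)
  · positivity
  · linarith

lemma sum_earlyCountProb_mul_le (P : ScalingRegime k w ε δ t) {f : ℕ → ℝ} {a b : ℝ} (hb : 0 ≤ b)
    (hf : ∀ x ≤ k - 1, f x ≤ a + b * (((x : ℝ) - earlyMean k w) ^ 2 / k)) :
    ∑ x ∈ Finset.range (k - 1 + 1), earlyCountProb k w x * f x ≤ a + b * (34 / 100) := by
  have hk := P.k_pos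
  calc ∑ x ∈ Finset.range (k - 1 + 1), earlyCountProb k w x * f x
      ≤ ∑ x ∈ Finset.range (k - 1 + 1), (earlyCountProb k w x * a +
          b / k * (earlyCountProb k w x * ((x : ℝ) - earlyMean k w) ^ 2)) := by
        refine Finset.sum_le_sum fun x hx => ?_
        have hx' := mul_le_mul_of_nonneg_left (hf x (by have := Finset.mem_range.1 hx; omega))
          (P.earlyCountProb_nonneg x)
        exact hx'.trans_eq (by ring)
    _ = a + b / k *
          ∑ x ∈ Finset.range (k - 1 + 1), earlyCountProb k w x * ((x : ℝ) - earlyMean k w) ^ 2 := by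
        rw [Finset.sum_add_distrib, ← Finset.sum_mul, ← Finset.mul_sum]
        simp only [earlyCountProb, sum_binomialProb, one_mul]
    _ ≤ a + b / k * (k * (34 / 100)) := by
        gcongr
        exact P.sum_earlyCountProb_mul_sq_le
    _ = a + b * (34 / 100) := by field_simp

lemma one_le_ε_sq_mul (P : ScalingRegime k w ε δ t) {y : ℝ} (hy : t / ε ≤ |y|) :
    1 ≤ ε ^ 2 * (y ^ 2 / k) := by
  have hε := P.ε_pos
  have ht := P.t_pos
  have hsq : (t / ε) ^ 2 ≤ |y| ^ 2 := by gcongr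
  rw [sq_abs, div_pow, P.t_sq, div_le_iff₀ (by positivity)] at hsq
  rw [← mul_div_assoc, le_div_iff₀ P.k_pos]
  linarith

lemma le_belowProb (P : ScalingRegime k w ε δ t) :
    2 * δ ^ 2 * (1 - 15 * ε) ≤ belowProb ((1 + w) ^ ·) k (k - 1) := by
  have hε := P.ε_pos
  have hε' := P.ε_le
  have hδ := P.δ_pos
  have hk := P.k_pos
  have h1 : 0 ≤ δ * (1 - 6 * ε) := mul_nonneg hδ.le (by linarith)
  have h2 : 0 ≤ 2 * δ * (1 - 8 * ε) := mul_nonneg (by linarith) (by linarith)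
  obtain ⟨B, hB⟩ : ∃ B, B = 2 * δ * (1 - 8 * ε) * (δ * (1 - 6 * ε)) := ⟨_, rfl⟩
  have hB0 : 0 ≤ B := hB ▸ mul_nonneg h2 h1
  have hpt : ∀ x ≤ k - 1, -(earlyProb k w x * lateProb k w x) ≤
      -B + B * ε ^ 2 * (((x : ℝ) - earlyMean k w) ^ 2 / k) := by
    intro x hx
    rcases le_total |(x : ℝ) - earlyMean k w| (t / ε) with hnear | hfar
    · have hx' : earlyMean k w - t / ε ≤ x := by linarith [(abs_le.1 hnear).1]
      have hprod := mul_le_mul (P.le_earlyProb hx') (P.le_lateProb hx hx') h1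
        (P.earlyProb_nonneg x)
      have : 0 ≤ B * ε ^ 2 * (((x : ℝ) - earlyMean k w) ^ 2 / k) := by positivity
      linarith
    · have hdev := mul_le_mul_of_nonneg_left (P.one_le_ε_sq_mul hfar) hB0
      linarith [mul_nonneg (P.earlyProb_nonneg x) (P.lateProb_nonneg x)]
  have hsum := P.sum_earlyCountProb_mul_le (by positivity) hpt
  simp only [mul_neg, Finset.sum_neg_distrib, ← P.belowProb_eq_sum_earlyCountProb] at hsum
  have hBle : B ≤ 2 * δ ^ 2 := by
    rw [hB]
    nlinarith [mul_pos hε (mul_pos hδ hδ), mul_pos hε (mul_pos hε (mul_pos hδ hδ))]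
  have hleB : 2 * δ ^ 2 * (1 - 14 * ε) ≤ B := by
    rw [hB]
    nlinarith [mul_pos hε (mul_pos hε (mul_pos hδ hδ))]
  nlinarith [mul_le_mul_of_nonneg_left P.ε_sq_le hB0]

lemma two_mul_div_k_le (P : ScalingRegime k w ε δ t) (y : ℝ) :
    2 * y / k ≤ 1 / t + 1 / t * (y ^ 2 / k) := by
  have ht := P.t_pos
  have hgap : 1 / t + 1 / t * (y ^ 2 / k) - 2 * y / k = (t - y) ^ 2 / (t * k) := by
    rw [← P.t_sq]
    field_simp
    ring
  linarith [div_nonneg (sq_nonneg (t - y)) (mul_pos ht P.k_pos).le]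

lemma div_le_of_spread_le (P : ScalingRegime k w ε δ t) {y : ℝ} (hy : t / ε ≤ y) :
    y / k ≤ ε / 1000000 * δ * (y ^ 2 / k) := by
  have hε := P.ε_pos
  have hδ := P.δ_pos
  have ht := P.t_pos
  have hk := P.k_pos
  have hy0 : 0 < y := (div_pos ht hε).trans_le hy
  have hyt : 1 ≤ ε * y / t := by
    rw [div_le_iff₀ hε] at hy
    rw [le_div_iff₀ ht]
    linarith
  calc y / k ≤ y / k * (ε * y / t) := le_mul_of_one_le_right (by positivity) hyt
    _ = ε * (1 / t) * (y ^ 2 / k) := by ring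
    _ ≤ 1 * (ε / 1000000 * δ) * (y ^ 2 / k) := by
        gcongr
        · linarith [P.ε_le]
        · exact P.one_div_t_le.trans (mul_le_mul_of_nonneg_right P.ε_pow_four_le hδ.le)
    _ = ε / 1000000 * δ * (y ^ 2 / k) := by ring

lemma mul_le_of_spread_le (P : ScalingRegime k w ε δ t) {y : ℝ} (hy : t / ε ≤ y) :
    (17 * δ + 64 * y / k) * ((1 + ε) * δ + 2 * y / k) ≤ ε * δ ^ 2 / 5 * (y ^ 2 / k) := by
  have hε := P.ε_pos
  have hε' := P.ε_le
  have hδ := P.δ_pos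
  have hk := P.k_pos
  have ht := P.t_pos
  have hy0 : 0 < y := (div_pos ht hε).trans_le hy
  obtain ⟨Y, hY⟩ : ∃ Y, Y = y ^ 2 / k := ⟨_, rfl⟩
  obtain ⟨s, hs⟩ : ∃ s, s = y / k := ⟨_, rfl⟩
  have hY0 : 0 < Y := hY ▸ by positivity
  have hs0 : 0 < s := hs ▸ by positivity
  have hone : 1 ≤ ε / 100 * Y := by
    have := P.one_le_ε_sq_mul (hy.trans (le_abs_self y))
    rw [← hY] at this
    exact this.trans (mul_le_mul_of_nonneg_right P.ε_sq_le hY0.le)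
  have hlin : s ≤ ε / 1000000 * δ * Y := by
    rw [hs, hY]
    exact P.div_le_of_spread_le hy
  have hsq : s ^ 2 ≤ ε / 1000000 * δ ^ 2 * Y := by
    have hε8 : (ε ^ 4 * δ) ^ 2 ≤ ε / 1000000 * δ ^ 2 := by
      rw [mul_pow]
      gcongr
      nlinarith [P.ε_pow_four_le, pow_pos hε 4]
    calc s ^ 2 = 1 / k * Y := by rw [hs, hY]; ring
      _ ≤ ε / 1000000 * δ ^ 2 * Y := by
          gcongr
          exact P.one_div_k_le_sq.trans hε8
  calc (17 * δ + 64 * y / k) * ((1 + ε) * δ + 2 * y / k)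
      = 17 * (1 + ε) * δ ^ 2 * 1 + (34 + 64 * (1 + ε)) * δ * s + 128 * s ^ 2 := by rw [hs]; ring
    _ ≤ 18 * δ ^ 2 * (ε / 100 * Y) + 100 * δ * (ε / 1000000 * δ * Y) +
          128 * (ε / 1000000 * δ ^ 2 * Y) := by gcongr <;> linarith
    _ ≤ ε * δ ^ 2 / 5 * Y := by nlinarith [mul_pos (mul_pos hε (pow_pos hδ 2)) hY0]
    _ = ε * δ ^ 2 / 5 * (y ^ 2 / k) := by rw [hY]

lemma earlyProb_mul_lateProb_le (P : ScalingRegime k w ε δ t) {x : ℕ} (hx : x ≤ k - 1) :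
    earlyProb k w x * lateProb k w x ≤
      2 * δ * (1 + 6 * ε) * ((1 + ε) * δ + 1 / t) +
        (2 * δ * (1 + 6 * ε) * (1 / t) + ε * δ ^ 2 / 5) * (((x : ℝ) - earlyMean k w) ^ 2 / k) := by
  have hε := P.ε_pos
  have hδ := P.δ_pos
  have ht := P.t_pos
  have hk := P.k_pos
  have hlate := P.lateProb_le hx
  rcases le_total (x : ℝ) (earlyMean k w + t / ε) with hnear | hfar
  · have hdev := P.two_mul_div_k_le |(x : ℝ) - earlyMean k w|
    rw [sq_abs] at hdev
    calc earlyProb k w x * lateProb k w x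
        ≤ 2 * δ * (1 + 6 * ε) *
            ((1 + ε) * δ + (1 / t + 1 / t * (((x : ℝ) - earlyMean k w) ^ 2 / k))) :=
          mul_le_mul (P.earlyProb_le hnear) (hlate.trans (by gcongr)) (P.lateProb_nonneg x)
            (by positivity)
      _ ≤ _ := by
          have : 0 ≤ ε * δ ^ 2 / 5 * (((x : ℝ) - earlyMean k w) ^ 2 / k) := by positivity
          linarith
  · have hy : t / ε ≤ x - earlyMean k w := by linarith
    have hy0 : 0 ≤ x - earlyMean k w := (div_pos ht hε).le.trans hy
    have hearly := P.earlyProb_le_add x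
    rw [max_eq_right hy0] at hearly
    rw [abs_of_nonneg hy0] at hlate
    refine ((mul_le_mul hearly hlate (P.lateProb_nonneg x) (by positivity)).trans
      (P.mul_le_of_spread_le hy)).trans ?_
    have hA : 0 ≤ 2 * δ * (1 + 6 * ε) * ((1 + ε) * δ + 1 / t) := by positivity
    have hB : 0 ≤ 2 * δ * (1 + 6 * ε) * (1 / t) * (((x : ℝ) - earlyMean k w) ^ 2 / k) := by
      positivity
    linarith

lemma belowProb_le (P : ScalingRegime k w ε δ t) :
    belowProb ((1 + w) ^ ·) k (k - 1) ≤ 2 * δ ^ 2 * (1 + 15 * ε) := by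
  have hε := P.ε_pos
  have hδ := P.δ_pos
  have ht := P.t_pos
  rw [P.belowProb_eq_sum_earlyCountProb]
  refine (P.sum_earlyCountProb_mul_le (by positivity)
    fun x hx => P.earlyProb_mul_lateProb_le hx).trans ?_
  have ht' : 1 / t ≤ ε / 1000000 * δ :=
    P.one_div_t_le.trans (mul_le_mul_of_nonneg_right P.ε_pow_four_le hδ.le)
  have hA : 2 * δ * (1 + 6 * ε) ≤ 3 * δ := by nlinarith [P.ε_le]
  have hmain : 2 * δ * (1 + 6 * ε) * ((1 + ε) * δ) ≤ 2 * δ ^ 2 * (1 + 8 * ε) := by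
    nlinarith [P.ε_le, mul_pos hε (mul_pos hδ hδ)]
  have hA' : 2 * δ * (1 + 6 * ε) * (1 / t) ≤ 3 * δ * (ε / 1000000 * δ) := by gcongr
  nlinarith [mul_pos hε (mul_pos hδ hδ)]

end ScalingRegime

/-! ### Asymptotics of the exploration polynomial -/

lemma abs_sinh_div_self_sub_le {b : ℝ} (h0 : 0 < b) (h1 : b ≤ 1) :
    |sinh b / b - 1 - b ^ 2 / 6| ≤ b ^ 4 / 50 := by
  have hpos := exp_bound (x := b) (by rwa [abs_of_pos h0]) (n := 5) (by norm_num)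
  have hneg := exp_bound (x := -b) (by rwa [abs_neg, abs_of_pos h0]) (n := 5) (by norm_num)
  rw [abs_neg] at hneg
  rw [abs_of_pos h0] at hpos hneg
  norm_num [Finset.sum_range_succ, Nat.factorial] at hpos hneg
  rw [abs_le] at hpos hneg
  have hdiv : sinh b / b - 1 - b ^ 2 / 6 = (sinh b - b - b ^ 3 / 6) / b := by field_simp
  rw [hdiv, abs_div, abs_of_pos h0, div_le_iff₀ h0, sinh_eq, abs_le]
  constructor <;> nlinarith [pow_pos h0 5]

lemma sub_sq_div_two_le_log_one_add {y : ℝ} (hy : 0 ≤ y) : y - y ^ 2 / 2 ≤ log (1 + y) := by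
  refine le_trans ?_ (le_log_one_add_of_nonneg hy)
  rw [le_div_iff₀ (by linarith)]
  nlinarith [pow_nonneg hy 3]

lemma log_one_add_le_self {y : ℝ} (hy : 0 ≤ y) : log (1 + y) ≤ y := by
  linarith [log_le_sub_one_of_pos (by linarith : 0 < 1 + y)]

lemma abs_log_sinh_div_self_sub_le {b : ℝ} (h0 : 0 < b) (h1 : b ≤ 1) :
    |log (sinh b / b) - b ^ 2 / 6| ≤ b ^ 4 / 20 := by
  obtain ⟨y, hy⟩ : ∃ y, y = sinh b / b - 1 := ⟨_, rfl⟩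
  have hbound := abs_le.1 (abs_sinh_div_self_sub_le h0 h1)
  rw [← hy] at hbound
  have hb4 : b ^ 4 ≤ b ^ 2 := pow_le_pow_of_le_one h0.le h1 (by norm_num)
  have hy0 : 0 ≤ y := by nlinarith
  have hy2 : y ^ 2 ≤ (b ^ 2 / 5) ^ 2 := pow_le_pow_left₀ hy0 (by nlinarith) 2
  have hlower := sub_sq_div_two_le_log_one_add hy0
  have hupper := log_one_add_le_self hy0
  rw [show sinh b / b = 1 + y by rw [hy]; ring, abs_le]
  constructor <;> nlinarith

/-- The arithmetic mean of the weights `(1 + w) ^ j`, `j < k`, divided by `(1 + w) ^ (k / 2)`. -/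
noncomputable def centeredMeanWeight (k : ℕ) (w : ℝ) : ℝ :=
  2 * sinh (k * log (1 + w) / 2) / (w * k)

lemma centeredMeanWeight_pos {k : ℕ} {w : ℝ} (hk : 0 < k) (hw : 0 < w) :
    0 < centeredMeanWeight k w := by
  have hlog := log_pos (by linarith : 1 < 1 + w)
  exact div_pos (mul_pos two_pos (sinh_pos_iff.2 (by positivity))) (by positivity)

lemma totalWeight_eq_mul_centeredMeanWeight {k : ℕ} {w : ℝ} (hk : 0 < k) (hw : 0 < w) :
    totalWeight ((1 + w) ^ ·) k =
      k * centeredMeanWeight k w * exp (k * log (1 + w) / 2) := by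
  have hexp : exp (k * log (1 + w) / 2) * exp (k * log (1 + w) / 2) = (1 + w) ^ k := by
    rw [← exp_add, add_halves, exp_nat_mul, exp_log (by linarith)]
  have hexp' : exp (-(k * log (1 + w) / 2)) * exp (k * log (1 + w) / 2) = 1 := by
    rw [← exp_add, neg_add_cancel, exp_zero]
  rw [totalWeight, geom_sum_eq (by linarith), centeredMeanWeight, sinh_eq, add_sub_cancel_left]
  field_simp
  linear_combination hexp' - hexp

lemma explorationPoly_eq_centeredMeanWeight_pow_mul {k : ℕ} {w : ℝ} (hk : 0 < k) (hw : 0 < w) :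
    explorationPoly (1 + w) k (k - 1) =
      (k * centeredMeanWeight k w) ^ (k - 1) * belowProb ((1 + w) ^ ·) k (k - 1) := by
  have hpow : (1 + w) ^ k.choose 2 = exp (k * log (1 + w) / 2) ^ (k - 1) := by
    rw [← exp_log (by linarith : 0 < 1 + w), log_exp, ← exp_nat_mul, ← exp_nat_mul,
      Nat.cast_choose_two, Nat.cast_sub hk]
    congr 1
    push_cast
    ring
  have h := explorationPoly_mul_pow_choose (by linarith : 0 < 1 + w) k
  rw [totalWeight_eq_mul_centeredMeanWeight hk hw, hpow, mul_pow, mul_right_comm] at h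
  exact mul_right_cancel₀ (pow_pos (exp_pos _) _).ne' h

lemma neg_half_le_log_log_one_add_div {w : ℝ} (hw : 0 < w) : -(w / 2) ≤ log (log (1 + w) / w) := by
  have hinv : (1 + w / 2)⁻¹ ≤ log (1 + w) / w := by
    rw [le_div_iff₀ hw]
    refine le_trans (le_of_eq ?_) (le_log_one_add_of_nonneg hw.le)
    field_simp
    ring
  have hlog := log_le_log (by positivity) hinv
  rw [log_inv] at hlog
  linarith [log_one_add_le_self (by linarith : 0 ≤ w / 2)]

lemma abs_log_centeredMeanWeight_sub_le {k : ℕ} {w : ℝ} (hk : 1 ≤ k) (hw : 0 < w)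
    (hwk : w * k ≤ 1) :
    |log (centeredMeanWeight k w) - (w * k) ^ 2 / 24| ≤ w + (w * k) ^ 4 := by
  have hk' : (1 : ℝ) ≤ k := by exact_mod_cast hk
  obtain ⟨τ, hτ⟩ : ∃ τ, τ = log (1 + w) := ⟨_, rfl⟩
  have hτ0 : 0 < τ := hτ ▸ log_pos (by linarith)
  have hτw : τ ≤ w := hτ ▸ log_one_add_le_self hw.le
  obtain ⟨b, hb⟩ : ∃ b, b = k * τ / 2 := ⟨_, rfl⟩
  have hb0 : 0 < b := hb ▸ by positivity
  have hb1 : b ≤ w * k / 2 := by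
    rw [hb]
    nlinarith
  have hfactor : log (centeredMeanWeight k w) = log (sinh b / b) + log (τ / w) := by
    rw [← log_mul (div_pos (sinh_pos_iff.2 hb0) hb0).ne' (by positivity), centeredMeanWeight,
      ← hτ, ← hb]
    congr 1
    rw [hb]
    field_simp
  have hsinh := abs_le.1 (abs_log_sinh_div_self_sub_le hb0 (by linarith))
  have hτ_log : log (τ / w) ≤ 0 := log_nonpos (by positivity) ((div_le_one hw).2 hτw)
  have hτ_log' : -(w / 2) ≤ log (τ / w) := hτ ▸ neg_half_le_log_log_one_add_div hw
  have hb2 : b ^ 2 ≤ (w * k / 2) ^ 2 := pow_le_pow_left₀ hb0.le hb1 2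
  have hb4 : b ^ 4 ≤ (w * k / 2) ^ 4 := pow_le_pow_left₀ hb0.le hb1 4
  have hb2' : (w * k) ^ 2 / 4 - w / 4 ≤ b ^ 2 := by
    have hτ2 : w ^ 2 - w ^ 3 ≤ τ ^ 2 := by
      have hle : w - w ^ 2 / 2 ≤ τ := hτ ▸ sub_sq_div_two_le_log_one_add hw.le
      nlinarith [pow_le_pow_left₀ (by nlinarith) hle 2, sq_nonneg (w ^ 2)]
    have hw3 : w * (w * k) ^ 2 ≤ w * 1 := by gcongr; exact pow_le_one₀ (by positivity) hwk
    rw [hb]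
    nlinarith [mul_le_mul_of_nonneg_left hτ2 (sq_nonneg (k : ℝ))]
  have : 0 ≤ (w * k) ^ 4 := by positivity
  rw [hfactor, abs_le]
  constructor <;> nlinarith

lemma abs_mul_log_centeredMeanWeight_sub_le {k : ℕ} {w : ℝ} (hk : 1 ≤ k) (hw : 0 < w)
    (hwk : w * k ≤ 1) :
    |((k : ℝ) - 1) * log (centeredMeanWeight k w) - w ^ 2 * k ^ 3 / 24| ≤
      2 * (w * k) + (w * k) ^ 4 * k := by
  have hk' : (0 : ℝ) ≤ k - 1 := sub_nonneg.2 (by exact_mod_cast hk)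
  have hwk0 : 0 ≤ w * k := by positivity
  calc |((k : ℝ) - 1) * log (centeredMeanWeight k w) - w ^ 2 * k ^ 3 / 24|
      = |(k - 1) * (log (centeredMeanWeight k w) - (w * k) ^ 2 / 24) + -((w * k) ^ 2 / 24)| := by
        congr 1
        ring
    _ ≤ (k - 1) * (w + (w * k) ^ 4) + (w * k) ^ 2 / 24 := by
        refine (abs_add_le _ _).trans (add_le_add ?_ ?_)
        · rw [abs_mul, abs_of_nonneg hk']
          exact mul_le_mul_of_nonneg_left (abs_log_centeredMeanWeight_sub_le hk hw hwk) hk'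
        · rw [abs_neg, abs_of_nonneg (by positivity)]
    _ ≤ 2 * (w * k) + (w * k) ^ 4 * k := by nlinarith [pow_nonneg hwk0 4]

/-- The leading term of `explorationPoly (1 + w) k (k - 1)` for `k ^ (-3/2) ≪ w ≪ k ^ (-5/4)`. -/
noncomputable def explorationMainTerm (k : ℕ) (w : ℝ) : ℝ :=
  (k : ℝ) ^ (k - 1) * exp (w ^ 2 * k ^ 3 / 24) * ((w * k) ^ 2 / 2)

section Limits

variable {ι : Type*} {F : Filter ι} {k : ι → ℕ} {w : ι → ℝ}

lemma tendsto_belowProb_div (hw : ∀ᶠ i in F, 0 < w i)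
    (hwk : Tendsto (fun i => w i * k i) F (𝓝 0))
    (hwk_sqrt : Tendsto (fun i => w i * k i * √(k i)) F atTop) :
    Tendsto (fun i => belowProb ((1 + w i) ^ ·) (k i) (k i - 1) / ((w i * k i) ^ 2 / 2))
      F (𝓝 1) := by
  rw [Metric.tendsto_nhds]
  intro η hη
  obtain ⟨ε, hε, hε1, hεη⟩ : ∃ ε : ℝ, 0 < ε ∧ ε ≤ 1 / 100 ∧ ε ≤ η / 30 :=
    ⟨min (1 / 100) (η / 30), by positivity, min_le_left _ _, min_le_right _ _⟩
  filter_upwards [hw, hwk.eventually (gt_mem_nhds (by positivity : 0 < 2 * ε ^ 2)),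
    hwk_sqrt.eventually_ge_atTop (2 / ε ^ 4)] with i hi hsmall hlarge
  rw [div_le_iff₀ (by positivity)] at hlarge
  have P : ScalingRegime (k i) (w i) ε (w i * k i / 2) (√(k i)) :=
    ⟨hi, hε, hε1, rfl, rfl, by linarith, by linarith⟩
  have hpos : 0 < (w i * k i) ^ 2 / 2 := by
    have := mul_pos hi P.k_pos
    positivity
  have hsq : 2 * (w i * k i / 2) ^ 2 = (w i * k i) ^ 2 / 2 := by ring
  have hlower := (le_div_iff₀' hpos).2 (hsq ▸ P.le_belowProb)
  have hupper := (div_le_iff₀' hpos).2 (hsq ▸ P.belowProb_le)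
  rw [dist_eq, abs_lt]
  constructor <;> linarith

lemma tendsto_exp_log_centeredMeanWeight (hk : Tendsto k F atTop) (hw : ∀ᶠ i in F, 0 < w i)
    (hwk : Tendsto (fun i => w i * k i) F (𝓝 0))
    (hwk4 : Tendsto (fun i => (w i * k i) ^ 4 * k i) F (𝓝 0)) :
    Tendsto (fun i => exp (((k i : ℝ) - 1) * log (centeredMeanWeight (k i) (w i)) -
      w i ^ 2 * k i ^ 3 / 24)) F (𝓝 1) := by
  refine (continuous_exp.tendsto' 0 1 exp_zero).comp ?_
  have hbound : Tendsto (fun i => 2 * (w i * k i) + (w i * k i) ^ 4 * k i) F (𝓝 0) := by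
    simpa using (hwk.const_mul 2).add hwk4
  refine squeeze_zero_norm' ?_ hbound
  filter_upwards [hw, hk.eventually_ge_atTop 1, hwk.eventually (gt_mem_nhds one_pos)]
    with i hi hki hsmall
  exact abs_mul_log_centeredMeanWeight_sub_le hki hi hsmall.le

lemma tendsto_explorationPoly_div (hk : Tendsto k F atTop) (hw : ∀ᶠ i in F, 0 < w i)
    (hwk : Tendsto (fun i => w i * k i) F (𝓝 0))
    (hwk_sqrt : Tendsto (fun i => w i * k i * √(k i)) F atTop)
    (hwk4 : Tendsto (fun i => (w i * k i) ^ 4 * k i) F (𝓝 0)) :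
    Tendsto (fun i => explorationPoly (1 + w i) (k i) (k i - 1) /
      explorationMainTerm (k i) (w i)) F (𝓝 1) := by
  have h := (tendsto_exp_log_centeredMeanWeight hk hw hwk hwk4).mul
    (tendsto_belowProb_div hw hwk hwk_sqrt)
  rw [one_mul] at h
  refine h.congr' ?_
  filter_upwards [hw, hk.eventually_ge_atTop 1] with i hi hki
  have : (0 : ℝ) < k i := by exact_mod_cast hki
  have hpow : exp (((k i : ℝ) - 1) * log (centeredMeanWeight (k i) (w i))) =
      centeredMeanWeight (k i) (w i) ^ (k i - 1) := by
    rw [← Nat.cast_pred hki, exp_nat_mul, exp_log (centeredMeanWeight_pos hki hi)]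
  rw [explorationPoly_eq_centeredMeanWeight_pow_mul hki hi, explorationMainTerm, exp_sub, hpow,
    mul_pow (k i : ℝ)]
  field_simp

end Limits

/-! ### Power series with nonnegative coefficients -/

section PowerSeries

lemma tsum_mul_pow_eq_add_mul {a : ℕ → ℝ} {v : ℝ} (h : Summable fun n => a n * v ^ n) :
    ∑' n, a n * v ^ n = a 0 + v * ∑' n, a (n + 1) * v ^ n := by
  rw [h.tsum_eq_zero_add, pow_zero, mul_one, ← tsum_mul_left]
  congr! 3 with n
  ring

lemma summable_succ_mul_pow {a : ℕ → ℝ} {v : ℝ} (hv : 0 < v) (h : Summable fun n => a n * v ^ n) :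
    Summable fun n => a (n + 1) * v ^ n := by
  refine (((summable_nat_add_iff 1).2 h).mul_left v⁻¹).congr fun n => ?_
  field_simp
  ring

lemma abs_tsum_mul_pow_sub_le {a : ℕ → ℝ} (ha : ∀ n, 0 ≤ a n)
    (hs : ∀ v, 0 < v → Summable fun n => a n * v ^ n) {v : ℝ} (hv : 0 < v) (hv1 : v ≤ 1) :
    |(∑' n, a n * v ^ n) - a 0| ≤ v * ∑' n, a n * 1 ^ n := by
  have htail : ∑' n, a (n + 1) * v ^ n ≤ ∑' n, a (n + 1) * 1 ^ n := by
    refine Summable.tsum_le_tsum (fun n => ?_) (summable_succ_mul_pow hv (hs v hv))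
      (summable_succ_mul_pow one_pos (hs 1 one_pos))
    exact mul_le_mul_of_nonneg_left (pow_le_pow_left₀ hv.le hv1 n) (ha _)
  have hnonneg : 0 ≤ ∑' n, a (n + 1) * v ^ n :=
    tsum_nonneg fun n => mul_nonneg (ha _) (by positivity)
  rw [tsum_mul_pow_eq_add_mul (hs v hv), tsum_mul_pow_eq_add_mul (hs 1 one_pos),
    add_sub_cancel_left, abs_of_nonneg (by positivity)]
  exact mul_le_mul_of_nonneg_left (by linarith [ha 0]) hv.le

variable {ι : Type*} {F : Filter ι} {c : ι → ℕ → ℝ} {a : ℕ → ℝ}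

lemma tendsto_coeff_zero (hc : ∀ i n, 0 ≤ c i n) (ha : ∀ n, 0 ≤ a n)
    (hcs : ∀ i v, 0 < v → Summable fun n => c i n * v ^ n)
    (has : ∀ v, 0 < v → Summable fun n => a n * v ^ n)
    (h : ∀ v, 0 < v → Tendsto (fun i => ∑' n, c i n * v ^ n) F (𝓝 (∑' n, a n * v ^ n))) :
    Tendsto (fun i => c i 0) F (𝓝 (a 0)) := by
  rw [Metric.tendsto_nhds]
  intro η hη
  obtain ⟨A, hA⟩ : ∃ A, A = ∑' n, a n * 1 ^ n := ⟨_, rfl⟩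
  have hA0 : 0 ≤ A := hA ▸ tsum_nonneg fun n => mul_nonneg (ha n) (by positivity)
  obtain ⟨v, hv0, hv1, hvη⟩ : ∃ v : ℝ, 0 < v ∧ v ≤ 1 ∧ v * (2 * A + 1) ≤ η / 2 :=
    ⟨min 1 (η / 2 / (2 * A + 1)), by positivity, min_le_left _ _,
      (le_div_iff₀ (by positivity)).1 (min_le_right _ _)⟩
  have hdist := (Metric.tendsto_nhds.1 (h v hv0)) (η / 2) (by positivity)
  have hbdd := (h 1 one_pos).eventually (gt_mem_nhds (lt_add_one _))
  filter_upwards [hdist, hbdd] with i hi hi1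
  have hci := abs_tsum_mul_pow_sub_le (hc i) (hcs i) hv0 hv1
  have hai := abs_tsum_mul_pow_sub_le ha has hv0 hv1
  rw [← hA] at hi1 hai
  have hvi := mul_le_mul_of_nonneg_left hi1.le hv0.le
  rw [dist_eq] at hi ⊢
  rw [abs_le] at hci hai
  rw [abs_lt] at hi ⊢
  constructor <;> linarith

lemma tendsto_coeff_of_tendsto_tsum (hc : ∀ i n, 0 ≤ c i n) (ha : ∀ n, 0 ≤ a n)
    (hcs : ∀ i v, 0 < v → Summable fun n => c i n * v ^ n)
    (has : ∀ v, 0 < v → Summable fun n => a n * v ^ n)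
    (h : ∀ v, 0 < v → Tendsto (fun i => ∑' n, c i n * v ^ n) F (𝓝 (∑' n, a n * v ^ n))) (n : ℕ) :
    Tendsto (fun i => c i n) F (𝓝 (a n)) := by
  induction n generalizing c a with
  | zero => exact tendsto_coeff_zero hc ha hcs has h
  | succ _ ih =>
    refine ih (c := fun i n => c i (n + 1)) (a := fun n => a (n + 1)) (fun i n => hc i _)
      (fun n => ha _) (fun i v hv => summable_succ_mul_pow hv (hcs i v hv))
      (fun v hv => summable_succ_mul_pow hv (has v hv)) fun v hv => ?_
    have htail : ∀ {b : ℕ → ℝ}, (Summable fun n => b n * v ^ n) →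
        ∑' n, b (n + 1) * v ^ n = ((∑' n, b n * v ^ n) - b 0) / v := fun hb => by
      rw [tsum_mul_pow_eq_add_mul hb, add_sub_cancel_left, mul_div_cancel_left₀ _ hv.ne']
    simp only [htail (hcs _ v hv), htail (has v hv)]
    exact ((h v hv).sub (tendsto_coeff_zero hc ha hcs has h)).div_const v

lemma tendsto_tsum_mul_pow_of_nonneg (hc : ∀ i n, 0 ≤ c i n) (ha : ∀ n, 0 ≤ a n)
    (hcs : ∀ i v, 0 < v → Summable fun n => c i n * v ^ n)
    (has : ∀ v, 0 < v → Summable fun n => a n * v ^ n)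
    (h : ∀ v, 0 < v → Tendsto (fun i => ∑' n, c i n * v ^ n) F (𝓝 (∑' n, a n * v ^ n))) (x : ℝ) :
    Tendsto (fun i => ∑' n, c i n * x ^ n) F (𝓝 (∑' n, a n * x ^ n)) := by
  obtain ⟨R, hR0, hR⟩ : ∃ R : ℝ, 0 < R ∧ |x| ≤ R * (1 / 2) :=
    ⟨2 * |x| + 1, by positivity, by linarith⟩
  refine tendsto_tsum_of_dominated_convergence
    (bound := fun n => ((∑' n, a n * R ^ n) + 1) * (1 / 2) ^ n)
    (summable_geometric_two.mul_left _)
    (fun n => (tendsto_coeff_of_tendsto_tsum hc ha hcs has h n).mul_const _) ?_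
  filter_upwards [(h R hR0).eventually (gt_mem_nhds (lt_add_one _))] with i hi n
  have hterm : c i n * R ^ n ≤ ∑' n, c i n * R ^ n :=
    (hcs i R hR0).le_tsum n fun m _ => mul_nonneg (hc i m) (by positivity)
  calc ‖c i n * x ^ n‖ = c i n * |x| ^ n := by
        rw [norm_mul, norm_pow, norm_of_nonneg (hc i n), norm_eq_abs]
    _ ≤ c i n * (R * (1 / 2)) ^ n :=
        mul_le_mul_of_nonneg_left (pow_le_pow_left₀ (abs_nonneg x) hR n) (hc i n)
    _ = c i n * R ^ n * (1 / 2) ^ n := by rw [mul_pow, mul_assoc]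
    _ ≤ ((∑' n, a n * R ^ n) + 1) * (1 / 2) ^ n := by
        gcongr
        exact hterm.trans hi.le

-- Both sums are values, at `x ^ 2` and `-x ^ 2`, of one power series with nonnegative coefficients.
lemma tendsto_sum_mul_cos_of_tendsto_sum_mul_cosh {α : Type*} {s : ι → Finset α} {p X : ι → α → ℝ}
    (hp : ∀ i j, 0 ≤ p i j)
    (h : ∀ x, Tendsto (fun i => ∑ j ∈ s i, p i j * cosh (x * X i j)) F (𝓝 (exp (x ^ 2)))) (x : ℝ) :
    Tendsto (fun i => ∑ j ∈ s i, p i j * cos (x * X i j)) F (𝓝 (exp (-x ^ 2))) := by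
  let c i n := ∑ j ∈ s i, p i j * (X i j ^ (2 * n) / (2 * n).factorial)
  have hcosh : ∀ i x, HasSum (fun n => c i n * (x ^ 2) ^ n) (∑ j ∈ s i, p i j * cosh (x * X i j)) :=
    fun i x => (hasSum_sum fun j _ => (hasSum_cosh (x * X i j)).mul_left (p i j)).congr_fun
      fun n => by
        rw [Finset.sum_mul]
        refine Finset.sum_congr rfl fun j _ => ?_
        ring
  have hcos : ∀ i, HasSum (fun n => c i n * (-x ^ 2) ^ n) (∑ j ∈ s i, p i j * cos (x * X i j)) :=
    fun i => (hasSum_sum fun j _ => (hasSum_cos (x * X i j)).mul_left (p i j)).congr_fun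
      fun n => by
        rw [Finset.sum_mul]
        refine Finset.sum_congr rfl fun j _ => ?_
        rw [neg_pow]
        ring
  have hexp : ∀ v : ℝ, HasSum (fun n : ℕ => 1 / (n.factorial : ℝ) * v ^ n) (exp v) := fun v => by
    rw [exp_eq_exp_ℝ]
    exact (NormedSpace.expSeries_div_hasSum_exp v).congr_fun fun n => by ring
  have key := tendsto_tsum_mul_pow_of_nonneg (F := F) (c := c) (a := fun n => 1 / n.factorial)
    (fun i n => ?_) (fun n => by positivity) (fun i v hv => ?_) (fun v _ => (hexp v).summable)
    (fun v hv => ?_) (-x ^ 2)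
  · simpa only [(hcos _).tsum_eq, (hexp _).tsum_eq] using key
  · exact Finset.sum_nonneg fun j _ => mul_nonneg (hp i j)
      (div_nonneg (pow_mul (X i j) 2 n ▸ by positivity) (by positivity))
  · simpa only [sq_sqrt hv.le] using (hcosh i (√v)).summable
  · have hv' := h (√v)
    simp only [← (hcosh _ _).tsum_eq, sq_sqrt hv.le] at hv'
    rwa [(hexp v).tsum_eq]

end PowerSeries

/-! ### The Boltzmann distribution of the excess -/

section ExplorationPolyBounds

lemma explorationPoly_nonneg {a : ℝ} (ha : 0 ≤ a) (n u : ℕ) : 0 ≤ explorationPoly a n u := by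
  induction n generalizing u with
  | zero =>
    rw [explorationPoly]
    split_ifs <;> norm_num
  | succ n ih =>
    rw [explorationPoly]
    split_ifs
    · exact Finset.sum_nonneg fun c _ => mul_nonneg (by positivity) (ih _)
    · exact le_rfl

lemma norm_explorationPoly_le {R : Type*} [NormedCommRing R] [NormOneClass R] {z : R} {b : ℝ}
    (hzb : ‖z‖ ≤ b) (n u : ℕ) : ‖explorationPoly z n u‖ ≤ explorationPoly b n u := by
  induction n generalizing u with
  | zero =>
    rw [explorationPoly, explorationPoly]
    split_ifs <;> simp
  | succ n ih =>
    rw [explorationPoly, explorationPoly]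
    split_ifs
    · refine (norm_sum_le _ _).trans (Finset.sum_le_sum fun c _ => ?_)
      have hchoose : ‖(u.choose c : R)‖ ≤ u.choose c := by
        simpa using Nat.norm_cast_le (α := R) (u.choose c)
      have hpow : ‖z ^ (n - u)‖ ≤ b ^ (n - u) :=
        (norm_pow_le z _).trans (pow_le_pow_left₀ (norm_nonneg z) hzb _)
      have hb : 0 ≤ b := (norm_nonneg z).trans hzb
      refine (norm_mul_le _ _).trans (mul_le_mul ?_ (ih _) (norm_nonneg _) (by positivity))
      exact (norm_mul_le _ _).trans (mul_le_mul hchoose hpow (norm_nonneg _) (by positivity))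
    · simp

end ExplorationPolyBounds

section Boltzmann

variable {k m : ℕ}

/-- The weight per edge, `√(12 m / k ^ 3)`, under which the excess of a random connected graph on
`k` vertices concentrates at `m`. -/
noncomputable def saddlePoint (k m : ℕ) : ℝ := √(12 * m) / (k * √k)

/-- A strict upper bound for `m` and for the excess of every graph on `k` vertices. -/
def excessBound (k m : ℕ) : ℕ := k.choose 2 + m + 1

/-- The probability of excess `j` when a connected graph on `k` vertices of excess `i` is drawn with
probability proportional to `saddlePoint k m ^ i`. -/
noncomputable def excessProb (k m j : ℕ) : ℝ :=
  connGraphCount k j * saddlePoint k m ^ j / explorationPoly (1 + saddlePoint k m) k (k - 1)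

/-- The excess `j`, centred at `m` and measured in units of `√m`. -/
noncomputable def normalizedExcess (m j : ℕ) : ℝ := (j - m) / √m

/-- The real part of the characteristic function of `normalizedExcess m` under `excessProb k m`. -/
noncomputable def excessCharFun (k m : ℕ) (x : ℝ) : ℝ :=
  ∑ j ∈ Finset.range (excessBound k m), excessProb k m j * cos (x * normalizedExcess m j)

lemma saddlePoint_nonneg (k m : ℕ) : 0 ≤ saddlePoint k m := by
  unfold saddlePoint
  positivity

lemma saddlePoint_pos (hk : 0 < k) (hm : 0 < m) : 0 < saddlePoint k m := by
  unfold saddlePoint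
  positivity

lemma saddlePoint_sq (k m : ℕ) : saddlePoint k m ^ 2 = 12 * m / k ^ 3 := by
  rw [saddlePoint, div_pow, mul_pow, sq_sqrt (by positivity), sq_sqrt (by positivity)]
  ring

lemma saddlePoint_mul_sqrt (hk : 0 < k) (m : ℕ) : saddlePoint k m * k * √k = √(12 * m) := by
  unfold saddlePoint
  field_simp

lemma saddlePoint_mul (hk : 0 < k) (m : ℕ) : saddlePoint k m * k = √(12 * (m / k)) := by
  rw [← mul_div_assoc, sqrt_div (by positivity), ← saddlePoint_mul_sqrt hk]
  field_simp

lemma explorationMainTerm_saddlePoint_mul (hk : 0 < k) (m : ℕ) (t : ℝ) :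
    explorationMainTerm k (saddlePoint k m * t) =
      (k : ℝ) ^ (k - 1) * exp (m * t ^ 2 / 2) * (6 * m / k * t ^ 2) := by
  simp only [explorationMainTerm, mul_pow, saddlePoint_sq]
  congr 1
  · congr 2
    field_simp
    ring
  · field_simp
    ring

lemma excessProb_nonneg (k m j : ℕ) : 0 ≤ excessProb k m j := by
  have hr := saddlePoint_nonneg k m
  exact div_nonneg (by positivity) (explorationPoly_nonneg (by positivity) _ _)

lemma explorationPoly_eq_sum_excessBound {K : Type*} [Field K] {w : K} (hw : w ≠ 0) (hk : 0 < k) :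
    explorationPoly (1 + w) k (k - 1) =
      ∑ j ∈ Finset.range (excessBound k m), (connGraphCount k j : K) * w ^ j :=
  (sum_connGraphCount_mul_pow hw hk (by unfold excessBound; omega)).symm

lemma sum_excessProb_mul_exp (hk : 0 < k) (hm : 0 < m) (u : ℝ) :
    ∑ j ∈ Finset.range (excessBound k m), excessProb k m j * exp (u * normalizedExcess m j) =
      explorationPoly (1 + saddlePoint k m * exp (u / √m)) k (k - 1) /
        explorationPoly (1 + saddlePoint k m) k (k - 1) * exp (-(u * √m)) := by
  have hr := saddlePoint_pos hk hm
  rw [explorationPoly_eq_sum_excessBound (m := m) (by positivity) hk, Finset.sum_div,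
    Finset.sum_mul]
  refine Finset.sum_congr rfl fun j _ => ?_
  have hexp : exp (u * normalizedExcess m j) = exp (u / √m) ^ j * exp (-(u * √m)) := by
    rw [← exp_nat_mul, ← exp_add, normalizedExcess]
    congr 1
    field_simp
    rw [sq_sqrt m.cast_nonneg]
    ring
  rw [hexp, excessProb, mul_pow]
  ring

lemma excessCharFun_sqrt_mul (k : ℕ) (hm : 0 < m) (φ : ℝ) :
    excessCharFun k m (√m * φ) =
      ∑ j ∈ Finset.range (excessBound k m), excessProb k m j * cos (((j - m : ℤ) : ℝ) * φ) := by
  refine Finset.sum_congr rfl fun j _ => ?_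
  congr 2
  rw [normalizedExcess]
  push_cast
  field_simp

lemma excessCharFun_sqrt_mul_eq_re (hk : 0 < k) (hm : 0 < m) (φ : ℝ) :
    excessCharFun k m (√m * φ) =
      (explorationPoly (1 + saddlePoint k m * Complex.exp (φ * Complex.I)) k (k - 1) *
        Complex.exp ((-(m * φ) : ℝ) * Complex.I)).re /
        explorationPoly (1 + saddlePoint k m) k (k - 1) := by
  have hz : (saddlePoint k m : ℂ) * Complex.exp (φ * Complex.I) ≠ 0 :=
    mul_ne_zero (by exact_mod_cast (saddlePoint_pos hk hm).ne') (Complex.exp_ne_zero _)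
  rw [explorationPoly_eq_sum_excessBound (m := m) hz hk, Finset.sum_mul, Complex.re_sum,
    Finset.sum_div, excessCharFun_sqrt_mul k hm]
  refine Finset.sum_congr rfl fun j _ => ?_
  have hterm : (connGraphCount k j : ℂ) * (saddlePoint k m * Complex.exp (φ * Complex.I)) ^ j *
      Complex.exp ((-(m * φ) : ℝ) * Complex.I) =
      ((connGraphCount k j * saddlePoint k m ^ j : ℝ) : ℂ) *
        Complex.exp ((((j - m : ℤ) : ℝ) * φ : ℝ) * Complex.I) := by
    rw [mul_pow, ← Complex.exp_nat_mul, mul_assoc, mul_assoc, ← Complex.exp_add]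
    push_cast
    rw [mul_assoc]
    congr 4
    ring
  rw [hterm, Complex.re_ofReal_mul, Complex.exp_ofReal_mul_I_re, excessProb]
  ring

lemma norm_one_add_mul_exp_le {r φ ρ : ℝ} (hr : 0 ≤ r) (hρ0 : 0 ≤ ρ) (hρ : cos φ + r / 2 ≤ ρ) :
    ‖1 + (r : ℂ) * Complex.exp (φ * Complex.I)‖ ≤ 1 + r * ρ := by
  refine (abs_le_of_sq_le_sq' ?_ (by positivity)).2
  have hsq : ‖1 + (r : ℂ) * Complex.exp (φ * Complex.I)‖ ^ 2 = 1 + 2 * r * (cos φ + r / 2) := by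
    rw [← Complex.normSq_eq_norm_sq, Complex.normSq_apply]
    simp only [Complex.add_re, Complex.add_im, Complex.one_re, Complex.one_im,
      Complex.re_ofReal_mul, Complex.im_ofReal_mul, Complex.exp_ofReal_mul_I_re,
      Complex.exp_ofReal_mul_I_im]
    linear_combination r ^ 2 * sin_sq_add_cos_sq φ
  calc ‖1 + (r : ℂ) * Complex.exp (φ * Complex.I)‖ ^ 2 = 1 + 2 * r * (cos φ + r / 2) := hsq
    _ ≤ 1 + 2 * r * ρ := by gcongr
    _ ≤ (1 + r * ρ) ^ 2 := by linarith [sq_nonneg (r * ρ)]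

lemma abs_excessCharFun_sqrt_mul_le (hk : 0 < k) (hm : 0 < m) {φ ρ : ℝ} (hρ0 : 0 ≤ ρ)
    (hρ : cos φ + saddlePoint k m / 2 ≤ ρ) :
    |excessCharFun k m (√m * φ)| ≤ explorationPoly (1 + saddlePoint k m * ρ) k (k - 1) /
      explorationPoly (1 + saddlePoint k m) k (k - 1) := by
  have hr := saddlePoint_nonneg k m
  have hP : 0 ≤ explorationPoly (1 + saddlePoint k m) k (k - 1) :=
    explorationPoly_nonneg (by positivity) _ _
  rw [excessCharFun_sqrt_mul_eq_re hk hm, abs_div, abs_of_nonneg hP]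
  gcongr
  refine (Complex.abs_re_le_norm _).trans ?_
  rw [norm_mul, Complex.norm_exp_ofReal_mul_I, mul_one]
  exact norm_explorationPoly_le (norm_one_add_mul_exp_le hr hρ0 hρ) _ _

lemma integral_cos_int_mul (n : ℤ) :
    ∫ φ in (-π)..π, cos (n * φ) = if n = 0 then 2 * π else 0 := by
  split_ifs with h
  · simp [h, two_mul]
  · rw [intervalIntegral.integral_comp_mul_left _ (by exact_mod_cast h), integral_cos]
    simp [sin_int_mul_pi]

lemma integral_excessCharFun (k : ℕ) (hm : 0 < m) :
    ∫ x in (-(√m * π))..(√m * π), excessCharFun k m x = 2 * π * √m * excessProb k m m := by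
  have hcoeff : ∫ φ in (-π)..π, excessCharFun k m (√m * φ) = 2 * π * excessProb k m m := by
    simp_rw [excessCharFun_sqrt_mul k hm]
    rw [intervalIntegral.integral_finsetSum fun j _ =>
      (Continuous.intervalIntegrable (by fun_prop) _ _)]
    simp_rw [intervalIntegral.integral_const_mul, integral_cos_int_mul]
    rw [Finset.sum_eq_single m, if_pos (sub_self _), mul_comm]
    · intro j _ hj
      rw [if_neg (by omega), mul_zero]
    · exact fun h => absurd (Finset.mem_range.2 (by unfold excessBound; omega)) h
  have hscale := intervalIntegral.mul_integral_comp_mul_left (a := -π) (b := π)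
    (f := excessCharFun k m) (√m)
  rw [mul_neg] at hscale
  rw [← hscale, hcoeff]
  ring

end Boltzmann

/-! ### The local limit theorem for the excess -/

lemma abs_exp_sub_quadratic_le {z : ℝ} (hz : |z| ≤ 1) :
    |exp z - (1 + z + z ^ 2 / 2)| ≤ |z| ^ 3 := by
  have h := exp_bound hz (n := 3) (by norm_num)
  simp only [Finset.sum_range_succ, Finset.sum_range_zero, Nat.factorial] at h
  norm_num at h
  linarith [pow_nonneg (abs_nonneg z) 3]

lemma tendsto_sq_mul_exp_sub (u : ℝ) :
    Tendsto (fun s => s ^ 2 / 2 * (exp (u / s) ^ 2 - 1) - u * s) atTop (𝓝 (u ^ 2)) := by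
  rw [tendsto_iff_dist_tendsto_zero]
  have hz : Tendsto (fun s => |2 * u / s|) atTop (𝓝 0) := by
    simpa using (tendsto_id.const_div_atTop (2 * u)).abs
  refine squeeze_zero' (Eventually.of_forall fun _ => dist_nonneg) ?_
    (tendsto_id.const_div_atTop (4 * |u| ^ 3))
  filter_upwards [hz.eventually (gt_mem_nhds one_pos), eventually_gt_atTop 0] with s hs1 hs
  have hrem : s ^ 2 / 2 * (exp (u / s) ^ 2 - 1) - u * s - u ^ 2 =
      s ^ 2 / 2 * (exp (2 * u / s) - (1 + 2 * u / s + (2 * u / s) ^ 2 / 2)) := by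
    rw [← exp_nat_mul, Nat.cast_ofNat, ← mul_div_assoc]
    field_simp
    ring
  rw [dist_eq, hrem, abs_mul, abs_of_pos (by positivity : 0 < s ^ 2 / 2)]
  calc s ^ 2 / 2 * |exp (2 * u / s) - (1 + 2 * u / s + (2 * u / s) ^ 2 / 2)|
      ≤ s ^ 2 / 2 * |2 * u / s| ^ 3 := by
        gcongr
        exact abs_exp_sub_quadratic_le hs1.le
    _ = 4 * |u| ^ 3 / s := by
        rw [abs_div, abs_mul, abs_of_pos hs, abs_two]
        field_simp
        ring

lemma cos_le_one_sub_sq_div {φ : ℝ} (hφ : |φ| ≤ π) : cos φ ≤ 1 - φ ^ 2 / 20 := by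
  have hπ : π ^ 2 ≤ 40 := by nlinarith [pi_lt_four, pi_pos]
  calc cos φ ≤ 1 - 2 / π ^ 2 * φ ^ 2 := cos_le_one_sub_mul_cos_sq hφ
    _ ≤ 1 - 2 / 40 * φ ^ 2 := by gcongr
    _ = 1 - φ ^ 2 / 20 := by ring

lemma half_mul_sq_sub_one_le {m r y : ℝ} (hm : 0 ≤ m) (hr : 0 ≤ r) (hr1 : r ≤ 1)
    (hmr : m * r ≤ 1) (hy : 0 ≤ y) (hy10 : y ≤ 10) :
    m / 2 * ((1 - y / 20 + r / 2) ^ 2 - 1) ≤ 1 + -(1 / 40) * (m * y) := by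
  have hsq : (1 - y / 20 + r / 2) ^ 2 - 1 ≤ -(1 / 20) * y + 2 * r := by nlinarith
  calc m / 2 * ((1 - y / 20 + r / 2) ^ 2 - 1) ≤ m / 2 * (-(1 / 20) * y + 2 * r) := by gcongr
    _ = m * r + -(1 / 40) * (m * y) := by ring
    _ ≤ 1 + -(1 / 40) * (m * y) := by gcongr

/-- The hypotheses on the excess `l k` of a graph on `k` vertices: it is positive, tends to infinity
and is `o(√k)`. -/
structure SmallExcess (l : ℕ → ℕ) : Prop where
  pos : ∀ k, 0 < l k
  tendsto_atTop : Tendsto l atTop atTop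
  tendsto_div_sqrt : Tendsto (fun k : ℕ => (l k : ℝ) / √k) atTop (𝓝 0)

namespace SmallExcess

variable {l : ℕ → ℕ}

lemma tendsto_sq_div (h : SmallExcess l) :
    Tendsto (fun k : ℕ => (l k : ℝ) ^ 2 / k) atTop (𝓝 0) := by
  simpa [div_pow] using h.tendsto_div_sqrt.pow 2

lemma tendsto_div (h : SmallExcess l) : Tendsto (fun k : ℕ => (l k : ℝ) / k) atTop (𝓝 0) := by
  refine squeeze_zero (fun k => by positivity) (fun k => ?_) h.tendsto_sq_div
  have hl : (1 : ℝ) ≤ l k := by exact_mod_cast h.pos k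
  gcongr
  exact le_self_pow₀ hl two_ne_zero

lemma tendsto_sqrt (h : SmallExcess l) : Tendsto (fun k => √(l k)) atTop atTop :=
  tendsto_sqrt_atTop.comp (tendsto_natCast_atTop_atTop.comp h.tendsto_atTop)

lemma tendsto_saddlePoint_mul (h : SmallExcess l) :
    Tendsto (fun k => saddlePoint k (l k) * k) atTop (𝓝 0) := by
  have hlim := (h.tendsto_div.const_mul 12).sqrt
  rw [mul_zero, sqrt_zero] at hlim
  refine hlim.congr' ?_
  filter_upwards [eventually_gt_atTop 0] with k hk
  rw [saddlePoint_mul hk]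

lemma tendsto_saddlePoint_mul_sqrt (h : SmallExcess l) :
    Tendsto (fun k => saddlePoint k (l k) * k * √k) atTop atTop := by
  have hlim : Tendsto (fun k => √12 * √(l k)) atTop atTop :=
    h.tendsto_sqrt.const_mul_atTop (by positivity)
  refine hlim.congr' ?_
  filter_upwards [eventually_gt_atTop 0] with k hk
  rw [saddlePoint_mul_sqrt hk, sqrt_mul (by norm_num)]

lemma tendsto_saddlePoint_pow_four (h : SmallExcess l) :
    Tendsto (fun k => (saddlePoint k (l k) * k) ^ 4 * k) atTop (𝓝 0) := by
  have hlim := h.tendsto_sq_div.const_mul 144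
  rw [mul_zero] at hlim
  refine hlim.congr' ?_
  filter_upwards [eventually_gt_atTop 0] with k hk
  calc 144 * ((l k : ℝ) ^ 2 / k) = (12 * l k / k ^ 3 * k ^ 2) ^ 2 * k := by
        field_simp
        ring
    _ = (saddlePoint k (l k) * k) ^ 4 * k := by
        rw [← saddlePoint_sq]
        ring

lemma tendsto_mul_saddlePoint (h : SmallExcess l) :
    Tendsto (fun k => l k * saddlePoint k (l k)) atTop (𝓝 0) := by
  have hlim := h.tendsto_div.mul h.tendsto_saddlePoint_mul
  rw [mul_zero] at hlim
  refine hlim.congr' ?_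
  filter_upwards [eventually_gt_atTop 0] with k hk
  field_simp

section Filter

variable {ι : Type*} {F : Filter ι} {k : ι → ℕ} {t : ι → ℝ}

lemma tendsto_explorationPoly_div_mainTerm (h : SmallExcess l) (hk : Tendsto k F atTop)
    (ht : ∀ᶠ i in F, 1 / 3 ≤ t i ∧ t i ≤ 3) :
    Tendsto (fun i => explorationPoly (1 + saddlePoint (k i) (l (k i)) * t i) (k i) (k i - 1) /
      explorationMainTerm (k i) (saddlePoint (k i) (l (k i)) * t i)) F (𝓝 1) := by
  have hr i := saddlePoint_nonneg (k i) (l (k i))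
  have hbdd : IsBoundedUnder (· ≤ ·) F (norm ∘ t) := ⟨3, eventually_map.2 <| ht.mono fun i hi => by
    rw [Function.comp_apply, norm_of_nonneg (by linarith [hi.1])]
    exact hi.2⟩
  have hbdd4 : IsBoundedUnder (· ≤ ·) F (norm ∘ fun i => t i ^ 4) :=
    ⟨3 ^ 4, eventually_map.2 <| ht.mono fun i hi => by
      rw [Function.comp_apply, norm_of_nonneg (by positivity)]
      exact pow_le_pow_left₀ (by linarith [hi.1]) hi.2 4⟩
  refine tendsto_explorationPoly_div hk ?_ ?_ ?_ ?_
  · filter_upwards [ht, hk.eventually_gt_atTop 0] with i hi hki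
    exact mul_pos (saddlePoint_pos hki (h.pos _)) (by linarith [hi.1])
  · refine ((h.tendsto_saddlePoint_mul.comp hk).zero_mul_isBoundedUnder_le hbdd).congr fun i => ?_
    simp only [Function.comp_apply]
    ring
  · refine tendsto_atTop_mono' F ?_
      ((h.tendsto_saddlePoint_mul_sqrt.comp hk).const_mul_atTop (by norm_num : (0 : ℝ) < 1 / 3))
    filter_upwards [ht] with i hi
    calc 1 / 3 * (saddlePoint (k i) (l (k i)) * k i * √(k i))
        ≤ t i * (saddlePoint (k i) (l (k i)) * k i * √(k i)) := by
          have := hr i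
          gcongr
          exact hi.1
      _ = saddlePoint (k i) (l (k i)) * t i * k i * √(k i) := by ring
  · refine ((h.tendsto_saddlePoint_pow_four.comp hk).zero_mul_isBoundedUnder_le hbdd4).congr
      fun i => ?_
    simp only [Function.comp_apply]
    ring

lemma tendsto_explorationPoly_div_mainTerm_one (h : SmallExcess l) (hk : Tendsto k F atTop) :
    Tendsto (fun i => explorationPoly (1 + saddlePoint (k i) (l (k i))) (k i) (k i - 1) /
      explorationMainTerm (k i) (saddlePoint (k i) (l (k i)))) F (𝓝 1) := by
  have hone := h.tendsto_explorationPoly_div_mainTerm hk (t := fun _ => 1)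
    (Eventually.of_forall fun _ => by norm_num)
  simpa only [mul_one] using hone

lemma tendsto_explorationPoly_ratio (h : SmallExcess l) (hk : Tendsto k F atTop)
    (ht : ∀ᶠ i in F, 1 / 3 ≤ t i ∧ t i ≤ 3) :
    Tendsto (fun i => explorationPoly (1 + saddlePoint (k i) (l (k i)) * t i) (k i) (k i - 1) /
      explorationPoly (1 + saddlePoint (k i) (l (k i))) (k i) (k i - 1) /
        (exp (l (k i) / 2 * (t i ^ 2 - 1)) * t i ^ 2)) F (𝓝 1) := by
  have hdiv := (h.tendsto_explorationPoly_div_mainTerm hk ht).div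
    (h.tendsto_explorationPoly_div_mainTerm_one hk) one_ne_zero
  rw [div_one] at hdiv
  refine hdiv.congr' ?_
  filter_upwards [hk.eventually_gt_atTop 0] with i hki
  have hl := h.pos (k i)
  have hmain : explorationMainTerm (k i) (saddlePoint (k i) (l (k i)) * t i) =
      explorationMainTerm (k i) (saddlePoint (k i) (l (k i))) *
        (exp (l (k i) / 2 * (t i ^ 2 - 1)) * t i ^ 2) := by
    have hone := explorationMainTerm_saddlePoint_mul hki (l (k i)) 1
    rw [mul_one] at hone
    rw [hone, explorationMainTerm_saddlePoint_mul hki,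
      show (l (k i) : ℝ) * t i ^ 2 / 2 = l (k i) * 1 ^ 2 / 2 + l (k i) / 2 * (t i ^ 2 - 1) by ring,
      exp_add]
    ring
  have hmain0 : explorationMainTerm (k i) (saddlePoint (k i) (l (k i))) ≠ 0 := by
    have := saddlePoint_pos hki hl
    unfold explorationMainTerm
    positivity
  rw [Pi.div_apply, hmain, mul_comm (explorationMainTerm _ _), ← div_div,
    div_div_div_cancel_right₀ hmain0, div_right_comm]

end Filter

lemma tendsto_sum_excessProb_mul_exp (h : SmallExcess l) (u : ℝ) :
    Tendsto (fun k => ∑ j ∈ Finset.range (excessBound k (l k)),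
      excessProb k (l k) j * exp (u * normalizedExcess (l k) j)) atTop (𝓝 (exp (u ^ 2))) := by
  have ht : Tendsto (fun k => exp (u / √(l k))) atTop (𝓝 1) := by
    simpa using (h.tendsto_sqrt.const_div_atTop u).rexp
  have hratio := h.tendsto_explorationPoly_ratio tendsto_id
    (ht.eventually (Icc_mem_nhds (by norm_num : (1 / 3 : ℝ) < 1) (by norm_num : (1 : ℝ) < 3)))
  have hprod := (hratio.mul ((tendsto_sq_mul_exp_sub u).comp h.tendsto_sqrt).rexp).mul (ht.pow 2)
  rw [one_mul, one_pow, mul_one] at hprod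
  refine hprod.congr' ?_
  filter_upwards [eventually_gt_atTop 0] with k hk
  rw [sum_excessProb_mul_exp hk (h.pos k), Function.comp_apply, sq_sqrt (Nat.cast_nonneg _),
    sub_eq_add_neg _ (u * √(l k)), exp_add, id]
  field_simp

lemma tendsto_excessCharFun (h : SmallExcess l) (x : ℝ) :
    Tendsto (fun k => excessCharFun k (l k) x) atTop (𝓝 (exp (-x ^ 2))) := by
  refine tendsto_sum_mul_cos_of_tendsto_sum_mul_cosh (fun k j => excessProb_nonneg k (l k) j)
    (fun u => ?_) x
  have hmean := ((h.tendsto_sum_excessProb_mul_exp u).add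
    (h.tendsto_sum_excessProb_mul_exp (-u))).div_const 2
  rw [neg_sq, add_self_div_two] at hmean
  refine hmean.congr fun k => ?_
  rw [← Finset.sum_add_distrib, Finset.sum_div]
  refine Finset.sum_congr rfl fun j _ => ?_
  rw [cosh_eq, neg_mul]
  ring

lemma eventually_explorationPoly_ratio_le (h : SmallExcess l) :
    ∀ᶠ k in atTop, ∀ t ∈ Set.Icc (1 / 2 : ℝ) 2,
      explorationPoly (1 + saddlePoint k (l k) * t) k (k - 1) /
        explorationPoly (1 + saddlePoint k (l k)) k (k - 1) ≤
          2 * (exp (l k / 2 * (t ^ 2 - 1)) * t ^ 2) := by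
  have hratio := h.tendsto_explorationPoly_ratio (F := atTop ×ˢ 𝓟 (Set.Icc (1 / 2 : ℝ) 2))
    (k := Prod.fst) (t := Prod.snd) tendsto_fst <| eventually_prod_principal_iff.2 <|
      Eventually.of_forall fun _ t ht => ⟨by linarith [ht.1], by linarith [ht.2]⟩
  filter_upwards [eventually_prod_principal_iff.1
    (hratio.eventually (gt_mem_nhds one_lt_two))] with k hk t ht
  have ht0 : 0 < t := by linarith [ht.1]
  exact ((div_lt_iff₀ (by positivity)).1 (hk t ht)).le

lemma eventually_abs_excessCharFun_le (h : SmallExcess l) :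
    ∀ᶠ k in atTop, ∀ x, |x| ≤ √(l k) * π →
      |excessCharFun k (l k) x| ≤ 8 * exp 1 * exp (-(1 / 40) * x ^ 2) := by
  filter_upwards [h.eventually_explorationPoly_ratio_le, eventually_gt_atTop 0,
    h.tendsto_mul_saddlePoint.eventually (gt_mem_nhds one_pos)] with k hratio hk hlr x hx
  have hr := saddlePoint_nonneg k (l k)
  have hl : (1 : ℝ) ≤ l k := by exact_mod_cast h.pos k
  have hr1 : saddlePoint k (l k) ≤ 1 := by nlinarith
  obtain ⟨φ, rfl⟩ : ∃ φ, x = √(l k) * φ := ⟨x / √(l k), by field_simp⟩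
  have hφπ : |φ| ≤ π := by
    rw [abs_mul, abs_of_nonneg (sqrt_nonneg _)] at hx
    exact le_of_mul_le_mul_left hx (by positivity)
  have hφ : φ ^ 2 ≤ 10 := by
    calc φ ^ 2 = |φ| ^ 2 := (sq_abs φ).symm
      _ ≤ 3.15 ^ 2 := pow_le_pow_left₀ (abs_nonneg φ) (hφπ.trans pi_lt_d2.le) 2
      _ ≤ 10 := by norm_num
  obtain ⟨ρ, hρ⟩ : ∃ ρ, ρ = 1 - φ ^ 2 / 20 + saddlePoint k (l k) / 2 := ⟨_, rfl⟩
  have hρmem : ρ ∈ Set.Icc (1 / 2 : ℝ) 2 := ⟨by linarith, by linarith [sq_nonneg φ]⟩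
  have hexponent : (l k : ℝ) / 2 * (ρ ^ 2 - 1) ≤ 1 + -(1 / 40) * (√(l k) * φ) ^ 2 := by
    rw [mul_pow, sq_sqrt (Nat.cast_nonneg _), hρ]
    exact half_mul_sq_sub_one_le (Nat.cast_nonneg _) hr hr1 hlr.le (sq_nonneg φ) hφ
  calc |excessCharFun k (l k) (√(l k) * φ)|
      ≤ 2 * (exp (l k / 2 * (ρ ^ 2 - 1)) * ρ ^ 2) :=
        (abs_excessCharFun_sqrt_mul_le hk (h.pos k) (by linarith [hρmem.1])
          (by linarith [cos_le_one_sub_sq_div hφπ])).trans (hratio ρ hρmem)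
    _ ≤ 2 * (exp (1 + -(1 / 40) * (√(l k) * φ) ^ 2) * 2 ^ 2) := by
        gcongr
        · linarith [hρmem.1]
        · exact hρmem.2
    _ = 8 * exp 1 * exp (-(1 / 40) * (√(l k) * φ) ^ 2) := by
        rw [exp_add]
        ring

lemma tendsto_integral_excessCharFun (h : SmallExcess l) :
    Tendsto (fun k => ∫ x in (-(√(l k) * π))..(√(l k) * π), excessCharFun k (l k) x) atTop
      (𝓝 √π) := by
  have hgauss := integral_gaussian 1
  rw [div_one] at hgauss
  have hindicator : ∀ k, ∫ x in (-(√(l k) * π))..(√(l k) * π), excessCharFun k (l k) x =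
      ∫ x, (Set.Ioc (-(√(l k) * π)) (√(l k) * π)).indicator (excessCharFun k (l k)) x := fun k => by
    rw [MeasureTheory.integral_indicator measurableSet_Ioc, intervalIntegral.integral_of_le]
    exact neg_le_self (by positivity)
  simp_rw [hindicator, ← hgauss]
  refine MeasureTheory.tendsto_integral_filter_of_dominated_convergence
    (fun x => 8 * exp 1 * exp (-(1 / 40) * x ^ 2)) ?_ ?_
    ((integrable_exp_neg_mul_sq (by norm_num)).const_mul _) ?_
  · refine Eventually.of_forall fun k => ?_
    have hcont : Continuous (excessCharFun k (l k)) := by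
      unfold excessCharFun
      fun_prop
    exact (hcont.measurable.indicator measurableSet_Ioc).aestronglyMeasurable
  · filter_upwards [h.eventually_abs_excessCharFun_le] with k hk
    refine Eventually.of_forall fun x => ?_
    by_cases hx : x ∈ Set.Ioc (-(√(l k) * π)) (√(l k) * π)
    · rw [Set.indicator_of_mem hx]
      exact hk x (abs_le.2 ⟨hx.1.le, hx.2⟩)
    · rw [Set.indicator_of_notMem hx, norm_zero]
      positivity
  · refine Eventually.of_forall fun x => ?_
    rw [neg_one_mul]
    refine (h.tendsto_excessCharFun x).congr' ?_
    filter_upwards [(h.tendsto_sqrt.atTop_mul_const pi_pos).eventually_gt_atTop |x|] with k hk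
    exact (Set.indicator_of_mem (Set.mem_Ioc.2 ⟨(abs_lt.1 hk).1, (abs_lt.1 hk).2.le⟩) _).symm

lemma tendsto_sqrt_mul_excessProb (h : SmallExcess l) :
    Tendsto (fun k => 2 * √π * √(l k) * excessProb k (l k) (l k)) atTop (𝓝 1) := by
  have hlim := h.tendsto_integral_excessCharFun.div_const √π
  rw [div_self (by positivity)] at hlim
  refine hlim.congr fun k => ?_
  rw [integral_excessCharFun k (h.pos k)]
  field_simp
  rw [sq_sqrt pi_pos.le]
  ring

end SmallExcess

lemma saddlePoint_pow {k : ℕ} (hk : 0 < k) (m : ℕ) :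
    saddlePoint k m ^ m = (12 * m : ℝ) ^ ((m : ℝ) / 2) / (k : ℝ) ^ (3 * (m : ℝ) / 2) := by
  have hr : saddlePoint k m = (12 * m : ℝ) ^ (1 / 2 : ℝ) / (k : ℝ) ^ (3 / 2 : ℝ) := by
    rw [saddlePoint, sqrt_eq_rpow, sqrt_eq_rpow, show (3 / 2 : ℝ) = 1 + 1 / 2 by norm_num,
      rpow_add (by positivity), rpow_one]
  rw [hr, ← rpow_natCast, div_rpow (by positivity) (by positivity), ← rpow_mul (by positivity),
    ← rpow_mul (by positivity)]
  congr 2 <;> ring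

lemma explorationMainTerm_saddlePoint {k m : ℕ} (hk : 0 < k) (hm : 0 < m) :
    explorationMainTerm k (saddlePoint k m) =
      6 * m * ((k : ℝ) ^ ((k : ℝ) - 2) * (k : ℝ) ^ (3 * (m : ℝ) / 2) *
        (exp 1 / (12 * m)) ^ ((m : ℝ) / 2)) * saddlePoint k m ^ m := by
  have hmain := explorationMainTerm_saddlePoint_mul hk m 1
  have hpow : (k : ℝ) ^ (k - 1) = (k : ℝ) ^ ((k : ℝ) - 2) * k := by
    rw [← rpow_natCast, ← rpow_add_one (by positivity), Nat.cast_pred hk]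
    congr 1
    ring
  rw [mul_one] at hmain
  rw [hmain, hpow, saddlePoint_pow hk, div_rpow (by positivity) (by positivity), ← exp_mul]
  field_simp

lemma connGraphCount_div_eq {k m : ℕ} (hk : 0 < k) (hm : 0 < m)
    (hP : explorationPoly (1 + saddlePoint k m) k (k - 1) ≠ 0) :
    (connGraphCount k m : ℝ) / ((k : ℝ) ^ ((k : ℝ) - 2) * (k : ℝ) ^ (3 * (m : ℝ) / 2) *
        (exp 1 / (12 * m)) ^ ((m : ℝ) / 2) * (3 / √π) * √m) =
      2 * √π * √m * excessProb k m m *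
        (explorationPoly (1 + saddlePoint k m) k (k - 1) /
          explorationMainTerm k (saddlePoint k m)) := by
  have hr := saddlePoint_pos hk hm
  rw [explorationMainTerm_saddlePoint hk hm, excessProb]
  field_simp
  rw [sq_sqrt m.cast_nonneg]
  ring

end ConnGraphAsymptotics

/-- `l` small: if `l = l(k)` is a sequence of positive integers with
`l → ∞` and `l = o(k^{1/2})`, then, as `k → ∞`,
`C(k,l) ∼ k^{k-2} k^{3l/2} (e/(12l))^{l/2} (3/√π) l^{1/2}`. -/
theorem C_asymp_small (l : ℕ → ℕ) (hpos : ∀ k, 0 < l k)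
    (hinf : Tendsto l atTop atTop)
    (hsmall : Tendsto (fun k : ℕ => (l k : ℝ) / Real.sqrt k) atTop (𝓝 0)) :
    Tendsto (fun k : ℕ =>
        (connGraphCount k (l k) : ℝ) /
          ((k : ℝ) ^ ((k : ℝ) - 2) * (k : ℝ) ^ (3 * (l k : ℝ) / 2) *
            (Real.exp 1 / (12 * (l k : ℝ))) ^ ((l k : ℝ) / 2) *
            (3 / Real.sqrt Real.pi) * Real.sqrt (l k)))
      atTop (𝓝 1) := by
  have h : ConnGraphAsymptotics.SmallExcess l := ⟨hpos, hinf, hsmall⟩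
  have hpoly := h.tendsto_explorationPoly_div_mainTerm_one tendsto_id
  have hprod := h.tendsto_sqrt_mul_excessProb.mul hpoly
  rw [one_mul] at hprod
  refine hprod.congr' ?_
  filter_upwards [eventually_gt_atTop 0, hpoly.eventually_ne one_ne_zero] with k hk hratio
  exact (ConnGraphAsymptotics.connGraphCount_div_eq hk (hpos k) fun hP =>
    hratio (div_eq_zero_iff.2 (Or.inl hP))).symm
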